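/- arXiv:2407.04429 — 14 statements merged into one kernel-verified Lean document; each statement's English description precedes it below -/
import Mathlib

section
/- Let s ≥ 1 be an integer and let P and Q be s×s real matrices that are substochastic, i.e., all entries are nonnegative and every row sum is at most 1. Then |det(P − Q)| ≤ 1. -/
theorem aux_ind_sum {α : Type} [DecidableEq α] {n : ℕ} (c : Fin n → α)
    (hc : Function.Injective c) (x : α) :
    (∑ j, if x = c j then (1 : ℝ) else 0) = open Classical in if ∃ j, x = c j then 1 else 0 := by
  classical
  split_ifs with h
  · obtain ⟨k, rfl⟩ := h
    simp [hc.eq_iff]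
  · push Not at h
    simp [h]

theorem aux_tu {α : Type} [DecidableEq α] (n : ℕ) : ∀ (c : Fin n → α)
    (_ : Function.Injective c) (a b : Fin n → α),
    |(Matrix.of fun i j => (if a i = c j then (1 : ℝ) else 0) - (if b i = c j then 1 else 0)).det|
      ≤ 1 := by
  induction n with
  | zero => intro c hc a b; simp
  | succ n ih =>
    intro c hc a b
    by_cases h : ∀ i, (∃ j, a i = c j) ∧ (∃ j, b i = c j)
    · have : (Matrix.of fun i j => (if a i = c j then (1 : ℝ) else 0) -
          (if b i = c j then 1 else 0)).det = 0 := by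
        rw [← Matrix.exists_mulVec_eq_zero_iff]
        refine ⟨fun _ => 1, fun h0 => by simpa using congrFun h0 0, ?_⟩
        funext i
        have h1 := aux_ind_sum c hc (a i)
        have h2 := aux_ind_sum c hc (b i)
        rw [if_pos (h i).1] at h1
        rw [if_pos (h i).2] at h2
        simp only [Matrix.mulVec, dotProduct, Matrix.of_apply, mul_one, Pi.zero_apply,
          Finset.sum_sub_distrib]
        rw [h1, h2, sub_self]
      rw [this]; simp
    · have hi : ∃ i, ∑ j, |(if a i = c j then (1 : ℝ) else 0) - (if b i = c j then 1 else 0)|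
          ≤ 1 := by
        have key : ∀ x : α, (∑ j, if x = c j then (1 : ℝ) else 0) ≤ 1 := by
          intro x
          rw [aux_ind_sum c hc x]; split_ifs <;> norm_num
        push Not at h
        obtain ⟨i, hi⟩ := h
        refine ⟨i, ?_⟩
        by_cases h1 : ∃ j, a i = c j
        · have h2 := hi h1
          refine le_trans (le_of_eq ?_) (key (a i))
          refine Finset.sum_congr rfl fun j _ => ?_
          rw [if_neg (h2 j)]; split_ifs <;> simp
        · push Not at h1
          refine le_trans (le_of_eq ?_) (key (b i))
          refine Finset.sum_congr rfl fun j _ => ?_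
          rw [if_neg (h1 j)]; split_ifs <;> simp
      obtain ⟨i, hi⟩ := hi
      rw [Matrix.det_succ_row _ i]
      refine (Finset.abs_sum_le_sum_abs _ _).trans (le_trans (Finset.sum_le_sum ?_) hi)
      intro j _
      rw [abs_mul, abs_mul, abs_pow, abs_neg, abs_one, one_pow, one_mul]
      exact mul_le_of_le_one_right (abs_nonneg _)
        (ih (fun k => c (j.succAbove k)) (hc.comp Fin.succAbove_right_injective)
          (fun k => a (i.succAbove k)) (fun k => b (i.succAbove k)))

/-- If `P` and `Q` are `s × s` real substochastic matrices
(nonnegative entries, each row sum at most 1), then `|det (P - Q)| ≤ 1`. -/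
theorem abs_det_sub_le_one_of_substochastic (s : ℕ) (hs : 1 ≤ s)
    (P Q : Matrix (Fin s) (Fin s) ℝ)
    (hPnonneg : ∀ i j, 0 ≤ P i j) (hProw : ∀ i, ∑ j, P i j ≤ 1)
    (hQnonneg : ∀ i j, 0 ≤ Q i j) (hQrow : ∀ i, ∑ j, Q i j ≤ 1) :
    |(P - Q).det| ≤ 1 := by
  have ext : ∀ R : Matrix (Fin s) (Fin s) ℝ, (∀ i j, 0 ≤ R i j) → (∀ i, ∑ j, R i j ≤ 1) →
      ∃ W : Fin s → Option (Fin s) → ℝ, (∀ i x, 0 ≤ W i x) ∧ (∀ i, ∑ x, W i x = 1) ∧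
        ∀ i j, W i (some j) = R i j := by
    intro R h0 h1
    refine ⟨fun i x => x.elim (1 - ∑ j, R i j) (R i), ?_, ?_, ?_⟩
    · rintro i (_ | j)
      · simpa using h1 i
      · exact h0 i j
    · intro i; simp [Fintype.sum_option]
    · intro i j; rfl
  obtain ⟨W, hW0, hW1, hW⟩ := ext P hPnonneg hProw
  obtain ⟨V, hV0, hV1, hV⟩ := ext Q hQnonneg hQrow
  have hM : P - Q = fun i => ∑ x : Option (Fin s) × Option (Fin s), (W i x.1 * V i x.2) •
      (fun j => (if x.1 = some j then (1 : ℝ) else 0) - (if x.2 = some j then 1 else 0)) := by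
    funext i j
    simp only [Finset.sum_apply, Pi.smul_apply, smul_eq_mul, mul_sub, Finset.sum_sub_distrib,
      Fintype.sum_prod_type]
    have e1 : ∑ x, ∑ y, W i x * V i y * (if x = some j then (1 : ℝ) else 0) = P i j := by
      simp_rw [← Finset.sum_mul, ← Finset.mul_sum, hV1]
      simp [hW]
    have e2 : ∑ x, ∑ y, W i x * V i y * (if y = some j then (1 : ℝ) else 0) = Q i j := by
      simp_rw [mul_assoc, ← Finset.mul_sum, ← Finset.sum_mul, hW1]
      simp [hV]
    rw [e1, e2]; rfl
  have hdet : (P - Q).det = ∑ r : Fin s → Option (Fin s) × Option (Fin s),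
      (∏ i, (W i (r i).1 * V i (r i).2)) *
      (Matrix.of fun i j => (if (r i).1 = some j then (1 : ℝ) else 0) -
        (if (r i).2 = some j then 1 else 0)).det := by
    rw [hM]
    refine ((Matrix.detRowAlternating (n := Fin s) (R := ℝ)).toMultilinearMap.map_sum _).trans ?_
    refine Finset.sum_congr rfl fun r _ => ?_
    exact (Matrix.detRowAlternating (n := Fin s) (R := ℝ)).toMultilinearMap.map_smul_univ _ _
  have hnn : ∀ r : Fin s → Option (Fin s) × Option (Fin s),
      0 ≤ ∏ i, (W i (r i).1 * V i (r i).2) := fun r =>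
    Finset.prod_nonneg fun i _ => mul_nonneg (hW0 _ _) (hV0 _ _)
  have hsum : ∑ r : Fin s → Option (Fin s) × Option (Fin s),
      (∏ i, (W i (r i).1 * V i (r i).2)) = 1 := by
    rw [← Fintype.prod_sum (fun i (x : Option (Fin s) × Option (Fin s)) => W i x.1 * V i x.2)]
    refine Finset.prod_eq_one fun i _ => ?_
    rw [Fintype.sum_prod_type]
    simp_rw [← Finset.mul_sum, hV1, mul_one, hW1]
  rw [hdet]
  refine (Finset.abs_sum_le_sum_abs _ _).trans
    ((Finset.sum_le_sum fun r _ => ?_).trans hsum.le)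
  rw [abs_mul, abs_of_nonneg (hnn r)]
  exact mul_le_of_le_one_right (hnn r)
    (aux_tu s some (Option.some_injective _) (fun i => (r i).1) (fun i => (r i).2))
end

section
/- Let n ≥ 2 and let d₁,…,d_n ≥ 1 be integers. Let ε and τ be n×n matrices with nonnegative integer entries such that for every i, the i-th row of ε has entry sum d_i and the i-th row of τ has entry sum d_i. Set H := ε − τ. Then for all i, k ∈ {1,…,n}, the minor Δ_{ik}(H) (the determinant of the (n−1)×(n−1) matrix obtained from H by deleting row i and column k) satisfies |Δ_{ik}(H)| ≤ ∏_{ℓ ∈ {1,…,n}, ℓ ≠ i} d_ℓ. -/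
theorem aux_unimod : ∀ (m : ℕ) (U W : Matrix (Fin m) (Fin m) ℕ)
    (_ : ∀ i, ∑ j, U i j ≤ 1) (_ : ∀ i, ∑ j, W i j ≤ 1),
    |(Matrix.of fun a b => (U a b : ℤ) - (W a b : ℤ)).det| ≤ 1 := by
  intro m
  induction m with
  | zero => intro U W _ _; simp
  | succ m ih =>
    intro U W hU hW
    by_cases h : ∀ i, ∑ j, U i j = ∑ j, W i j
    · have : (Matrix.of fun a b => (U a b : ℤ) - (W a b : ℤ)).det = 0 := by
        rw [← Matrix.exists_mulVec_eq_zero_iff]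
        refine ⟨fun _ => 1, fun h0 => by simpa using congrFun h0 0, ?_⟩
        ext i
        have := h i
        simp only [Matrix.mulVec, dotProduct, Matrix.of_apply, mul_one, Pi.zero_apply,
          Finset.sum_sub_distrib]
        rw [sub_eq_zero]
        exact_mod_cast this
      rw [this]; simp
    · push Not at h
      obtain ⟨i, hi⟩ := h
      have h1 : ∑ j, |(U i j : ℤ) - (W i j : ℤ)| ≤ 1 := by
        calc ∑ j, |(U i j : ℤ) - (W i j : ℤ)| ≤ ∑ j, ((U i j : ℤ) + (W i j : ℤ)) := by
              apply Finset.sum_le_sum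
              intro j _
              rw [abs_le]; constructor <;> lia
          _ = ((∑ j, U i j + ∑ j, W i j : ℕ) : ℤ) := by
              push_cast; rw [Finset.sum_add_distrib]
          _ ≤ 1 := by
              have := hU i
              have := hW i
              lia
      have key : ∀ (V : Matrix (Fin (m+1)) (Fin (m+1)) ℕ), (∀ i, ∑ j, V i j ≤ 1) →
          ∀ j a, ∑ b, V (i.succAbove a) (Fin.succAbove j b) ≤ 1 := by
        intro V hV j a
        have := hV (i.succAbove a)
        rw [Fin.sum_univ_succAbove _ j] at this
        lia
      rw [Matrix.det_succ_row _ i]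
      refine (Finset.abs_sum_le_sum_abs _ _).trans (le_trans (Finset.sum_le_sum ?_) h1)
      intro j _
      rw [abs_mul, abs_mul, abs_pow, abs_neg, abs_one, one_pow, one_mul]
      refine mul_le_of_le_one_right (abs_nonneg _) ?_
      exact ih (fun a b => U (i.succAbove a) (j.succAbove b))
        (fun a b => W (i.succAbove a) (j.succAbove b)) (key U hU j) (key W hW j)

/-- Let `n = m + 1 ≥ 2` and `d₁,…,dₙ ≥ 1`. If `ε` and `τ` are `n × n`
matrices of nonnegative integers whose `i`-th row sums are both `d i`, and
`H = ε - τ` (over `ℤ`), then every `(n-1) × (n-1)` minor `Δ_{ik}(H)` of `H`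
satisfies `|Δ_{ik}(H)| ≤ ∏_{ℓ ≠ i} d ℓ`. -/
theorem abs_minor_le_prod_degrees (m : ℕ) (hm : 1 ≤ m)
    (d : Fin (m + 1) → ℕ) (hd : ∀ i, 1 ≤ d i)
    (ε τ : Matrix (Fin (m + 1)) (Fin (m + 1)) ℕ)
    (hε : ∀ i, ∑ j, ε i j = d i) (hτ : ∀ i, ∑ j, τ i j = d i)
    (i k : Fin (m + 1)) :
    |((Matrix.of fun a b => (ε a b : ℤ) - (τ a b : ℤ)).submatrix
        i.succAbove k.succAbove).det|
      ≤ ∏ l ∈ Finset.univ.erase i, (d l : ℤ) := by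
  have hprod : ∏ l ∈ Finset.univ.erase i, (d l : ℤ) = ∏ a, (d (i.succAbove a) : ℤ) := by
    have h1 := Finset.mul_prod_erase Finset.univ (fun l => (d l : ℤ)) (Finset.mem_univ i)
    rw [Fin.prod_univ_succAbove _ i] at h1
    have := hd i
    exact mul_left_cancel₀ (by positivity) h1
  rw [hprod]
  set B := (Matrix.of fun a b => (ε a b : ℤ) - (τ a b : ℤ)).submatrix
        i.succAbove k.succAbove with hB
  have hP : 0 < ∏ a, (d (i.succAbove a) : ℤ) :=
    Finset.prod_pos fun a _ => by have := hd (i.succAbove a); positivity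
  have hε' : ∀ a, ∑ p, (ε a p : ℤ) = d a := fun a => by exact_mod_cast hε a
  have hτ' : ∀ a, ∑ p, (τ a p : ℤ) = d a := fun a => by exact_mod_cast hτ a
  let c : Fin m → Fin (m+1) × Fin (m+1) → ℤ := fun a x =>
    (ε (i.succAbove a) x.1 : ℤ) * (τ (i.succAbove a) x.2 : ℤ)
  let g : Fin (m+1) × Fin (m+1) → Fin m → ℤ := fun x b =>
    (((if x.1 = k.succAbove b then 1 else 0 : ℕ) : ℤ) -
      ((if x.2 = k.succAbove b then 1 else 0 : ℕ) : ℤ))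
  have hc : ∀ a, ∑ x, c a x = (d (i.succAbove a) : ℤ) * d (i.succAbove a) := by
    intro a
    simp only [c, Fintype.sum_prod_type]
    rw [← Finset.sum_mul_sum, hε', hτ']
  have hrow : (fun a => (d (i.succAbove a) : ℤ) • B a) = fun a => ∑ x, c a x • g x := by
    ext a b
    simp only [Pi.smul_apply, Finset.sum_apply, smul_eq_mul, c, g, hB, Matrix.submatrix_apply,
      Matrix.of_apply, mul_sub, Finset.sum_sub_distrib]
    rw [Fintype.sum_prod_type, Fintype.sum_prod_type_right]
    congr 1
    · simp [mul_assoc, ← Finset.mul_sum, ← Finset.sum_mul, hτ']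
      ring
    · simp [← Finset.sum_mul, hε']
  have hdet : (∏ a, (d (i.succAbove a) : ℤ)) * B.det =
      ∑ r : Fin m → Fin (m+1) × Fin (m+1), (∏ a, c a (r a)) *
        (Matrix.of fun a b => g (r a) b).det := by
    have h1 := (Matrix.detRowAlternating (n := Fin m) (R := ℤ)).toMultilinearMap.map_smul_univ
      (fun a => (d (i.succAbove a) : ℤ)) B
    rw [hrow, MultilinearMap.map_sum] at h1
    rw [smul_eq_mul] at h1
    refine h1.symm.trans (Finset.sum_congr rfl fun r _ => ?_)
    exact (Matrix.detRowAlternating (n := Fin m) (R := ℤ)).toMultilinearMap.map_smul_univ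
      (fun a => c a (r a)) (fun a => g (r a))
  refine le_of_mul_le_mul_left ?_ hP
  rw [← abs_of_pos hP, ← abs_mul, abs_of_pos hP, hdet]
  refine (Finset.abs_sum_le_sum_abs _ _).trans ?_
  have hcn : ∀ a x, 0 ≤ c a x := fun a x => by positivity
  have hind : ∀ x : Fin (m+1), ∑ b, (if x = k.succAbove b then 1 else 0 : ℕ) ≤ 1 := by
    intro x
    have : ∑ b, (if x = b then 1 else 0 : ℕ) = 1 := by simp
    rw [Fin.sum_univ_succAbove _ k] at this
    lia
  calc _ ≤ ∑ r : Fin m → Fin (m+1) × Fin (m+1), ∏ a, c a (r a) := by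
        refine Finset.sum_le_sum fun r _ => ?_
        rw [abs_mul, abs_of_nonneg (Finset.prod_nonneg fun a _ => hcn a _)]
        refine mul_le_of_le_one_right (Finset.prod_nonneg fun a _ => hcn a _) ?_
        exact aux_unimod m (fun a b => if (r a).1 = k.succAbove b then 1 else 0)
          (fun a b => if (r a).2 = k.succAbove b then 1 else 0)
          (fun a => hind _) (fun a => hind _)
    _ = ∏ a, ∑ x, c a x := by
        rw [Finset.prod_univ_sum, Fintype.piFinset_univ]
    _ = _ := by simp_rw [hc, Finset.prod_mul_distrib]
    _ ≤ _ := le_refl _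
end

section
/- Let R ∈ ℚ[a] be multihomogeneous of multidegree (δ₁,…,δ_m), and suppose there exists a multiindex γ₀ ∈ ℕⁿ such that R satisfies Bézout(γ₀). Then for every transversal ε (an m×n matrix with nonnegative integer entries whose i-th row ε_{i*} satisfies |ε_{i*}| = d_i), R satisfies Bézout(δᵀε), where δᵀε := Σ_{i=1}^m δ_i ε_{i*} ∈ ℕⁿ. -/
open MvPolynomial

/-- Variables of the big polynomial ring `ℚ[a, x]`: the `a`-variables are indexed by
pairs `(i, α)` with `i ∈ [m]` and `α ∈ ℕⁿ` (only those with `|α| = dᵢ` are actually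
used), and the `x`-variables by `Fin n`. -/
abbrev Var (m n : ℕ) := (Fin m × (Fin n → ℕ)) ⊕ Fin n

/-- The generic form `Fᵢ = Σ_{|α| = dᵢ} a_{i,α} x^α`. -/
noncomputable def genForm (m n : ℕ) (d : Fin m → ℕ) (i : Fin m) :
    MvPolynomial (Var m n) ℚ :=
  ∑ α ∈ Finset.Nat.antidiagonalTuple n (d i),
    X (Sum.inl (i, α)) * ∏ j, (X (Sum.inr j)) ^ α j

/-- The monomial `x^γ` in `ℚ[a, x]`. -/
noncomputable def xPow (m n : ℕ) (γ : Fin n → ℕ) : MvPolynomial (Var m n) ℚ :=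
  ∏ j, (X (Sum.inr j) : MvPolynomial (Var m n) ℚ) ^ γ j

/-- `R` (a polynomial in the `a`-variables only) satisfies Bézout(γ) if `x^γ · R`
lies in the ideal of `ℚ[a, x]` generated by the generic forms `F₁, …, F_m`. -/
def Bezout (m n : ℕ) (d : Fin m → ℕ)
    (R : MvPolynomial (Fin m × (Fin n → ℕ)) ℚ) (γ : Fin n → ℕ) : Prop :=
  xPow m n γ * rename Sum.inl R ∈ Ideal.span (Set.range (genForm m n d))

/-- `R` is multihomogeneous of multidegree `δ`: every monomial `a^A` occurring in `R`
is supported on the diagram (`A (i, α) ≠ 0 → |α| = dᵢ`) and has `i`-th row sum `δᵢ`. -/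
def MultiHom (m n : ℕ) (d : Fin m → ℕ) (δ : Fin m → ℕ)
    (R : MvPolynomial (Fin m × (Fin n → ℕ)) ℚ) : Prop :=
  ∀ A ∈ R.support,
    (∀ i α, A (i, α) ≠ 0 → ∑ j, α j = d i) ∧
    (∀ i, (∑ p ∈ A.support, if p.1 = i then A p else 0) = δ i)

theorem xPow_ne_zero' (m n : ℕ) (γ : Fin n → ℕ) : xPow m n γ ≠ 0 := by
  unfold xPow
  exact Finset.prod_ne_zero_iff.mpr fun j _ => pow_ne_zero _ (X_ne_zero _)

theorem scale_eq (m n : ℕ) (d δ : Fin m → ℕ) (R : MvPolynomial (Fin m × (Fin n → ℕ)) ℚ)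
    (hMH : MultiHom m n d δ R) (ε : Fin m → Fin n → ℕ) :
    aeval (fun p : Fin m × (Fin n → ℕ) =>
      xPow m n (ε p.1) * (X (Sum.inl p) : MvPolynomial (Var m n) ℚ)) R
      = xPow m n (fun j => ∑ i, δ i * ε i j) * rename Sum.inl R := by
  have hr : rename Sum.inl R
      = aeval (fun p => (X (Sum.inl p) : MvPolynomial (Var m n) ℚ)) R := by
    have h := aeval_rename (R := ℚ) Sum.inl (X : Var m n → MvPolynomial (Var m n) ℚ) R
    rw [aeval_X_left_apply] at h
    exact h
  rw [hr, aeval_def, aeval_def, eval₂_eq, eval₂_eq, Finset.mul_sum]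
  refine Finset.sum_congr rfl fun A hA => ?_
  have h2 := (hMH A hA).2
  have key : ∏ p ∈ A.support, xPow m n (ε p.1) ^ A p
      = xPow m n (fun j => ∑ i, δ i * ε i j) := by
    unfold xPow
    simp_rw [← Finset.prod_pow, ← pow_mul]
    rw [Finset.prod_comm]
    refine Finset.prod_congr rfl fun j _ => ?_
    rw [Finset.prod_pow_eq_pow_sum]
    congr 1
    simp_rw [← h2, Finset.sum_mul]
    rw [Finset.sum_comm]
    refine Finset.sum_congr rfl fun p _ => ?_
    simp [ite_mul, mul_comm]
  simp_rw [mul_pow]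
  rw [Finset.prod_mul_distrib, key]
  ring

/-- If `R` is multihomogeneous of multidegree `δ` and satisfies
Bézout(γ₀) for some multiindex `γ₀`, then for every transversal `ε` (an `m × n`
matrix of nonnegative integers with `i`-th row sum `dᵢ`), `R` satisfies
Bézout(δᵀε) where `(δᵀε)_j = Σᵢ δᵢ ε_{ij}`. -/
theorem bezout_of_bezout_transversal (m n : ℕ) (hm : 1 ≤ m) (hn : 1 ≤ n)
    (d : Fin m → ℕ) (hd : ∀ i, 1 ≤ d i) (δ : Fin m → ℕ)
    (R : MvPolynomial (Fin m × (Fin n → ℕ)) ℚ)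
    (hMH : MultiHom m n d δ R)
    (hB : ∃ γ₀ : Fin n → ℕ, Bezout m n d R γ₀)
    (ε : Fin m → Fin n → ℕ) (hε : ∀ i, ∑ j, ε i j = d i) :
    Bezout m n d R (fun j => ∑ i, δ i * ε i j) := by
  classical
  obtain ⟨γ₀, hB⟩ := hB
  unfold Bezout at hB ⊢
  set I := Ideal.span (Set.range (genForm m n d)) with hI
  let θ : Fin m × (Fin n → ℕ) → MvPolynomial (Var m n) ℚ :=
    fun p => xPow m n (ε p.1) * X (Sum.inl p)
  let ψ : Fin m × (Fin n → ℕ) → MvPolynomial (Var m n) ℚ :=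
    fun p => θ p - if p.2 = ε p.1 then genForm m n d p.1 else 0
  let Ψ : MvPolynomial (Var m n) ℚ →ₐ[ℚ] MvPolynomial (Var m n) ℚ :=
    aeval (Sum.elim ψ (fun j => X (Sum.inr j)))
  have hΨx : ∀ γ, Ψ (xPow m n γ) = xPow m n γ := by
    intro γ
    simp [Ψ, xPow]
  have hΨF : ∀ i, Ψ (genForm m n d i) = 0 := by
    intro i
    have h1 : Ψ (genForm m n d i) = ∑ α ∈ Finset.Nat.antidiagonalTuple n (d i),
        ψ (i, α) * xPow m n α := by
      simp [Ψ, genForm, xPow]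
    have h2 : genForm m n d i = ∑ α ∈ Finset.Nat.antidiagonalTuple n (d i),
        X (Sum.inl (i, α)) * xPow m n α := rfl
    have hmem : ε i ∈ Finset.Nat.antidiagonalTuple n (d i) :=
      Finset.Nat.mem_antidiagonalTuple.mpr (hε i)
    rw [h1]
    simp only [ψ, θ, sub_mul, ite_mul, zero_mul, Finset.sum_sub_distrib, Finset.sum_ite_eq',
      hmem, if_true]
    simp_rw [mul_assoc]
    rw [← Finset.mul_sum, ← h2]
    ring
  have hker : I ≤ RingHom.ker Ψ.toRingHom := by
    rw [hI, Ideal.span_le]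
    rintro _ ⟨i, rfl⟩
    exact hΨF i
  have h0 : aeval ψ R = 0 := by
    have h := hker hB
    have h' : Ψ (xPow m n γ₀ * rename Sum.inl R) = 0 := h
    rw [map_mul, hΨx] at h'
    have h'' := (mul_eq_zero.mp h').resolve_left (xPow_ne_zero' m n γ₀)
    simp only [Ψ, aeval_rename, Sum.elim_comp_inl] at h''
    exact h''
  have hcong : (Ideal.Quotient.mkₐ ℚ I).comp (aeval θ) = (Ideal.Quotient.mkₐ ℚ I).comp (aeval ψ) := by
    ext p
    simp only [AlgHom.comp_apply, aeval_X, Ideal.Quotient.mkₐ_eq_mk]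
    rw [Ideal.Quotient.eq]
    simp only [ψ, sub_sub_cancel]
    split_ifs
    · exact Ideal.subset_span ⟨_, rfl⟩
    · exact I.zero_mem
  rw [← scale_eq m n d δ R hMH ε, ← Ideal.Quotient.eq_zero_iff_mem]
  have := DFunLike.congr_fun hcong R
  simp only [AlgHom.comp_apply, h0, map_zero] at this
  exact this
end

section
/- Let R ∈ ℚ[a] be multihomogeneous of multidegree (δ₁,…,δ_m) with (δ₁,…,δ_m) ≠ 0, and suppose there exists a multiindex γ₀ ∈ ℕⁿ such that R satisfies Bézout(γ₀). Then, setting q := n·(Σ_{i=1}^m δ_i d_i) − n + 1, the property Bézout(γ) holds for every γ ∈ ℕⁿ with |γ| = q. In particular, R is an inertia form of degree zero. -/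
open MvPolynomial

/-- `R` is an inertia form of degree zero: there exists `q` such that Bézout(γ)
holds for every `γ` with `|γ| = q`. -/
def IsIFDZ (m n : ℕ) (d : Fin m → ℕ)
    (R : MvPolynomial (Fin m × (Fin n → ℕ)) ℚ) : Prop :=
  ∃ q : ℕ, ∀ γ : Fin n → ℕ, ∑ j, γ j = q → Bezout m n d R γ

noncomputable def psiVar (m n : ℕ) (d : Fin m → ℕ) (j : Fin n) :
    Var m n → MvPolynomial (Var m n) ℚ
  | Sum.inl p => X (Sum.inr j) ^ d p.1 * X (Sum.inl p) -
      if p.2 = Pi.single j (d p.1) then genForm m n d p.1 else 0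
  | Sum.inr k => X (Sum.inr k)

lemma psi_genForm (m n : ℕ) (d : Fin m → ℕ) (j : Fin n) (i : Fin m) :
    aeval (psiVar m n d j) (genForm m n d i) = 0 := by
  have h1 : aeval (psiVar m n d j) (genForm m n d i) =
      ∑ α ∈ Finset.Nat.antidiagonalTuple n (d i),
        (X (Sum.inr j) ^ d i * X (Sum.inl (i, α)) -
          if α = Pi.single j (d i) then genForm m n d i else 0) *
          ∏ k, (X (Sum.inr k)) ^ α k := by
    conv_lhs => rw [genForm]
    simp [psiVar]
  rw [h1]
  simp only [sub_mul, Finset.sum_sub_distrib, ite_mul, zero_mul]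
  rw [Finset.sum_ite_eq' (Finset.Nat.antidiagonalTuple n (d i)) (Pi.single j (d i))
    (fun α => genForm m n d i * ∏ k, (X (Sum.inr k)) ^ α k)]
  have hmem : Pi.single j (d i) ∈ Finset.Nat.antidiagonalTuple n (d i) := by
    rw [Finset.Nat.mem_antidiagonalTuple]
    simp
  rw [if_pos hmem]
  have hp : ∏ k, (X (Sum.inr k) : MvPolynomial (Var m n) ℚ) ^
      (Pi.single j (d i) : Fin n → ℕ) k = X (Sum.inr j) ^ d i := by
    rw [Finset.prod_eq_single j]
    · simp
    · intro b _ hb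
      simp [Pi.single_eq_of_ne hb]
    · simp
  rw [hp]
  simp only [mul_assoc]
  rw [← Finset.mul_sum]
  change _ * genForm m n d i - _ = 0
  ring

lemma psi_R (m n : ℕ) (d : Fin m → ℕ) (j : Fin n)
    (R : MvPolynomial (Fin m × (Fin n → ℕ)) ℚ) (γ : Fin n → ℕ) (h : Bezout m n d R γ) :
    aeval (fun p => psiVar m n d j (Sum.inl p)) R = 0 := by
  have h2 : Ideal.span (Set.range (genForm m n d)) ≤
      RingHom.ker (aeval (psiVar m n d j) : MvPolynomial (Var m n) ℚ →ₐ[ℚ] _) := by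
    rw [Ideal.span_le]
    rintro _ ⟨i, rfl⟩
    exact psi_genForm m n d j i
  have h3 := h2 h
  rw [RingHom.mem_ker, map_mul, aeval_rename] at h3
  rcases mul_eq_zero.1 h3 with h4 | h4
  · exfalso
    simp only [xPow, map_prod, map_pow, aeval_X, psiVar] at h4
    rw [Finset.prod_eq_zero_iff] at h4
    obtain ⟨k, _, hk⟩ := h4
    exact X_ne_zero _ (pow_eq_zero_iff (n := γ k) (fun h0 => by simp [h0] at hk) |>.1 hk)
  · exact h4

lemma scale_R (m n : ℕ) (d δ : Fin m → ℕ) (j : Fin n)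
    (R : MvPolynomial (Fin m × (Fin n → ℕ)) ℚ) (hMH : MultiHom m n d δ R) :
    aeval (fun p : Fin m × (Fin n → ℕ) =>
      (X (Sum.inr j) ^ d p.1 * X (Sum.inl p) : MvPolynomial (Var m n) ℚ)) R =
    X (Sum.inr j) ^ (∑ i, δ i * d i) * rename Sum.inl R := by
  have hr : rename Sum.inl R = aeval (fun p : Fin m × (Fin n → ℕ) =>
      (X (Sum.inl p) : MvPolynomial (Var m n) ℚ)) R := by
    conv_lhs => rw [← aeval_X_left_apply (rename Sum.inl R : MvPolynomial (Var m n) ℚ)]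
    rw [aeval_rename]
    rfl
  rw [hr, aeval_def, aeval_def, eval₂_eq, eval₂_eq, Finset.mul_sum]
  refine Finset.sum_congr rfl fun A hA => ?_
  have hs : ∑ i, δ i * d i = ∑ p ∈ A.support, d p.1 * A p := by
    simp only [← (hMH A hA).2, Finset.sum_mul]
    rw [Finset.sum_comm]
    refine Finset.sum_congr rfl fun p _ => ?_
    simp [mul_comm]
  simp only [mul_pow, Finset.prod_mul_distrib, ← pow_mul, Function.comp]
  rw [Finset.prod_pow_eq_pow_sum, hs]
  ring

lemma bezout_pow (m n : ℕ) (d δ : Fin m → ℕ) (j : Fin n)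
    (R : MvPolynomial (Fin m × (Fin n → ℕ)) ℚ) (hMH : MultiHom m n d δ R)
    (γ : Fin n → ℕ) (h : Bezout m n d R γ) :
    X (Sum.inr j) ^ (∑ i, δ i * d i) * rename Sum.inl R ∈
      Ideal.span (Set.range (genForm m n d)) := by
  rw [← scale_R m n d δ j R hMH, ← Ideal.Quotient.eq_zero_iff_mem,
    ← map_zero (Ideal.Quotient.mk _), ← psi_R m n d j R γ h]
  set I := Ideal.span (Set.range (genForm m n d)) with hI
  change (Ideal.Quotient.mkₐ ℚ I) _ = (Ideal.Quotient.mkₐ ℚ I) _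
  rw [← AlgHom.comp_apply, ← AlgHom.comp_apply]
  congr 1
  ext p
  simp only [AlgHom.comp_apply, aeval_X, psiVar, map_sub]
  have : (Ideal.Quotient.mkₐ ℚ I)
      (if p.2 = Pi.single j (d p.1) then genForm m n d p.1 else 0) = 0 := by
    split_ifs
    · exact Ideal.Quotient.eq_zero_iff_mem.2 (Ideal.subset_span ⟨p.1, rfl⟩)
    · simp
  rw [this, sub_zero]

/-- If `R` is multihomogeneous of multidegree `δ ≠ 0` and satisfies
Bézout(γ₀) for some `γ₀`, then with `q = n·(Σᵢ δᵢ dᵢ) − n + 1`, Bézout(γ) holds for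
every `γ` with `|γ| = q`; in particular `R` is an inertia form of degree zero. -/
theorem bezout_all_of_bezout (m n : ℕ) (hm : 1 ≤ m) (hn : 1 ≤ n)
    (d : Fin m → ℕ) (hd : ∀ i, 1 ≤ d i) (δ : Fin m → ℕ) (hδ : δ ≠ 0)
    (R : MvPolynomial (Fin m × (Fin n → ℕ)) ℚ)
    (hMH : MultiHom m n d δ R)
    (hB : ∃ γ₀ : Fin n → ℕ, Bezout m n d R γ₀) :
    (∀ γ : Fin n → ℕ, ∑ j, γ j = n * (∑ i, δ i * d i) - n + 1 → Bezout m n d R γ) ∧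
      IsIFDZ m n d R := by
  obtain ⟨γ₀, h₀⟩ := hB
  have key : ∀ γ : Fin n → ℕ, ∑ j, γ j = n * (∑ i, δ i * d i) - n + 1 →
      Bezout m n d R γ := by
    intro γ hγ
    obtain ⟨j, hj⟩ : ∃ j, ∑ i, δ i * d i ≤ γ j := by
      by_contra! hc
      have h1 : ∑ j, γ j ≤ ∑ _j : Fin n, ((∑ i, δ i * d i) - 1) :=
        Finset.sum_le_sum fun j _ => Nat.le_sub_one_of_lt (hc j)
      rw [Finset.sum_const, Finset.card_univ, Fintype.card_fin, smul_eq_mul,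
        Nat.mul_sub, mul_one] at h1
      omega
    have hdvd : (X (Sum.inr j) : MvPolynomial (Var m n) ℚ) ^ (∑ i, δ i * d i) ∣
        xPow m n γ :=
      (pow_dvd_pow _ hj).trans (Finset.dvd_prod_of_mem
        (fun j => (X (Sum.inr j) : MvPolynomial (Var m n) ℚ) ^ γ j) (Finset.mem_univ j))
    exact Ideal.mem_of_dvd _ (mul_dvd_mul_right hdvd _)
      (bezout_pow m n d δ j R hMH γ₀ h₀)
  exact ⟨key, _, key⟩
end

section
/- Let n ≥ 1 and d₁,…,d_n ≥ 1. Let R be an inertia form of degree zero for the format (n,n,(d₁,…,d_n)) which is multihomogeneous of multidegree (δ₁,…,δ_n). If there exists i ∈ {1,…,n} with δ_i < ∏_{j ∈ {1,…,n}, j ≠ i} d_j, then R = 0. -/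
open MvPolynomial

section Helpers
open Filter Topology

/-- Evaluation of a form of degree `D` with coefficients `c`. -/
noncomputable def evForm (n D : ℕ) (c : (Fin n → ℕ) → ℝ) (x : Fin n → ℝ) : ℝ :=
  ∑ α ∈ Finset.Nat.antidiagonalTuple n D, c α * ∏ j, x j ^ α j

lemma bezout_eval {n : ℕ} {d : Fin n → ℕ} {R : MvPolynomial (Fin n × (Fin n → ℕ)) ℚ}
    (hIF : IsIFDZ n n d R) (c : Fin n × (Fin n → ℕ) → ℝ) (x : Fin n → ℝ) (i : Fin n)
    (hx : x i = 1) (h : ∀ j, evForm n (d j) (fun α => c (j, α)) x = 0) :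
    aeval c R = 0 := by
  obtain ⟨q, hq⟩ := hIF
  have hB := hq (Pi.single i q) (by simp)
  unfold Bezout at hB
  have key : ∀ p ∈ Ideal.span (Set.range (genForm n n d)),
      (aeval (Sum.elim c x) : MvPolynomial (Var n n) ℚ →ₐ[ℚ] ℝ) p = 0 := by
    intro p hp
    have : Ideal.span (Set.range (genForm n n d)) ≤
        RingHom.ker (aeval (Sum.elim c x) : MvPolynomial (Var n n) ℚ →ₐ[ℚ] ℝ) := by
      rw [Ideal.span_le]
      rintro _ ⟨j, rfl⟩
      have := h j
      simp only [SetLike.mem_coe, RingHom.mem_ker]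
      simpa [genForm, evForm, map_sum, map_prod] using this
    exact this hp
  have h2 := key _ hB
  rw [map_mul, aeval_rename] at h2
  have h3 : (aeval (Sum.elim c x) : MvPolynomial (Var n n) ℚ →ₐ[ℚ] ℝ)
      (xPow n n (Pi.single i q)) = 1 := by
    simp only [xPow, map_prod, map_pow, aeval_X, Sum.elim_inr]
    apply Finset.prod_eq_one
    intro j _
    by_cases hj : j = i
    · subst hj; simp [hx]
    · simp [hj]
  rw [h3, one_mul] at h2
  simpa using h2

/-- the restriction of `R` to a line -/
noncomputable def linePoly {σ : Type} (R : MvPolynomial σ ℚ) (c v : σ → ℝ) : Polynomial ℝ :=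
  aeval (fun p => Polynomial.C (c p) + Polynomial.C (v p) * Polynomial.X) R

lemma linePoly_eval {σ : Type} (R : MvPolynomial σ ℚ) (c v : σ → ℝ) (s : ℝ) :
    (linePoly R c v).eval s = aeval (fun p => c p + s * v p) R := by
  unfold linePoly
  rw [← Polynomial.coe_evalRingHom]
  have := MvPolynomial.map_aeval (R := ℚ) (fun p => Polynomial.C (c p) + Polynomial.C (v p) * Polynomial.X)
    (Polynomial.evalRingHom s) R
  rw [this, aeval_def, coe_eval₂Hom]
  have e1 : (Polynomial.evalRingHom s).comp (algebraMap ℚ (Polynomial ℝ)) = algebraMap ℚ ℝ :=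
    Subsingleton.elim _ _
  have e2 : (fun p => (Polynomial.evalRingHom s)
      (Polynomial.C (c p) + Polynomial.C (v p) * Polynomial.X)) = fun p => c p + s * v p := by
    ext p
    rw [Polynomial.coe_evalRingHom, Polynomial.eval_add, Polynomial.eval_C_mul, Polynomial.eval_C, Polynomial.eval_X, mul_comm]
  rw [e1, e2]

lemma linePoly_natDegree {n : ℕ} {d δ : Fin n → ℕ} {R : MvPolynomial (Fin n × (Fin n → ℕ)) ℚ}
    (hMH : MultiHom n n d δ R) (i : Fin n) (c v : Fin n × (Fin n → ℕ) → ℝ)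
    (hv : ∀ p, p.1 ≠ i → v p = 0) : (linePoly R c v).natDegree ≤ δ i := by
  unfold linePoly
  rw [aeval_def, eval₂_eq]
  apply Polynomial.natDegree_sum_le_of_forall_le
  intro A hA
  rw [← (hMH A hA).2 i]
  have : (algebraMap ℚ (Polynomial ℝ)) (coeff A R) = Polynomial.C ((coeff A R : ℚ) : ℝ) := by
    rw [Polynomial.algebraMap_apply, eq_ratCast]
  rw [this]
  refine (Polynomial.natDegree_C_mul_le _ _).trans ?_
  refine (Polynomial.natDegree_prod_le _ _).trans ?_
  apply Finset.sum_le_sum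
  intro p _
  refine Polynomial.natDegree_pow_le.trans ?_
  split_ifs with hp
  · have : (Polynomial.C (c p) + Polynomial.C (v p) * Polynomial.X).natDegree ≤ 1 := by
      compute_degree
    nlinarith
  · rw [hv p hp, Polynomial.C_0, zero_mul, add_zero, Polynomial.natDegree_C, mul_zero]

lemma exists_coeffs {n D : ℕ} (P : MvPolynomial (Fin n) ℝ) (hP : P.IsHomogeneous D) :
    ∃ c : (Fin n → ℕ) → ℝ, ∀ x, evForm n D c x = eval x P := by
  classical
  refine ⟨fun α => coeff (Finsupp.equivFunOnFinite.symm α) P, fun x => ?_⟩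
  rw [eval_eq']
  unfold evForm
  symm
  refine Finset.sum_of_injOn (fun A => (A : Fin n → ℕ)) ?_ ?_ ?_ ?_
  · intro A _ B _ h; exact DFunLike.coe_injective h
  · intro A hA
    have := hP (mem_support_iff.1 hA)
    simp only [Finset.mem_coe, Finset.Nat.mem_antidiagonalTuple]
    rw [← this, Finsupp.weight_apply, Finsupp.sum_fintype] <;> simp
  · intro α _ hα
    have : coeff (Finsupp.equivFunOnFinite.symm α) P = 0 := by
      by_contra h
      exact hα ⟨Finsupp.equivFunOnFinite.symm α, by simpa using h, by simp⟩
    simp only [this, zero_mul]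
  · intro A _
    simp

lemma evForm_add (n D : ℕ) (c e : (Fin n → ℕ) → ℝ) (t : ℝ) (x : Fin n → ℝ) :
    evForm n D (fun α => c α + t * e α) x = evForm n D c x + t * evForm n D e x := by
  unfold evForm
  rw [Finset.mul_sum, ← Finset.sum_add_distrib]
  exact Finset.sum_congr rfl fun _ _ => by ring

lemma evForm_contDiff (n D : ℕ) (c : (Fin n → ℕ) → ℝ) : ContDiff ℝ 1 (evForm n D c) := by
  unfold evForm
  fun_prop

lemma ift_aux {n : ℕ} (f : ℝ × (Fin n → ℝ) → (Fin n → ℝ)) (hf : ContDiff ℝ 1 f) (p : Fin n → ℝ)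
    (h0 : f (0, p) = 0) (L : (Fin n → ℝ) →L[ℝ] (Fin n → ℝ))
    (hL : HasFDerivAt (fun x => f (0, x)) L p) (hinj : Function.Injective L) :
    ∃ ψ : ℝ → Fin n → ℝ, Tendsto ψ (𝓝 0) (𝓝 p) ∧ ∀ᶠ t in 𝓝 0, f (t, ψ t) = 0 := by
  have hs : HasStrictFDerivAt f (fderiv ℝ f (0, p)) (0, p) :=
    hf.contDiffAt.hasStrictFDerivAt one_ne_zero
  have hc : HasFDerivAt (fun x => f (0, x))
      ((fderiv ℝ f (0, p)) ∘L .inr ℝ ℝ (Fin n → ℝ)) p := by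
    exact hs.hasFDerivAt.comp p (hasFDerivAt_prodMk_right 0 p)
  have he := hc.unique hL
  have hinv : ((fderiv ℝ f (0, p)) ∘L .inr ℝ ℝ (Fin n → ℝ)).IsInvertible := by
    rw [he]
    refine ⟨(LinearEquiv.ofInjectiveEndo (L : (Fin n → ℝ) →ₗ[ℝ] (Fin n → ℝ)) hinj).toContinuousLinearEquiv, ?_⟩
    ext x : 1
    rfl
  refine ⟨hs.implicitFunctionOfProdDomain hinv, hs.tendsto_implicitFunctionOfProdDomain hinv, ?_⟩
  have := hs.eventually_apply_implicitFunctionOfProdDomain hinv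
  rw [h0] at this
  exact this

lemma ift_grid {n : ℕ} (d : Fin n → ℕ) (i : Fin n) (g : Fin n → (Fin n → ℕ) → ℝ)
    (p : Fin n → ℝ) (hpi : p i = 1) (k : Fin n → ℕ) (hk : ∀ j, j ≠ i → k j < d j)
    (hp : ∀ j, j ≠ i → p j = k j) :
    ∃ ψ : ℝ → Fin n → ℝ, Tendsto ψ (𝓝 0) (𝓝 p) ∧ ∀ᶠ t in 𝓝 0, ψ t i = 1 ∧
      ∀ j, j ≠ i → ∏ l ∈ Finset.range (d j), (ψ t j - l * ψ t i)
        + t * evForm n (d j) (g j) (ψ t) = 0 := by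
  classical
  let f : ℝ × (Fin n → ℝ) → (Fin n → ℝ) := fun z j => if j = i then z.2 i - 1 else
    ∏ l ∈ Finset.range (d j), (z.2 j - l * z.2 i) + z.1 * evForm n (d j) (g j) z.2
  have hf : ContDiff ℝ 1 f := by
    rw [contDiff_pi]
    intro j
    by_cases hj : j = i
    · simp only [f, hj, if_true]; fun_prop
    · simp only [f, hj, if_false]
      have := (evForm_contDiff n (d j) (g j)).comp (contDiff_snd (𝕜 := ℝ) (E := ℝ) (F := Fin n → ℝ))
      refine ContDiff.add (by fun_prop) (contDiff_fst.mul this)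
  let Q : Fin n → (Fin n → ℝ) → ℝ := fun j x =>
    ∏ l ∈ (Finset.range (d j)).erase (k j), (x j - l * x i)
  let L : (Fin n → ℝ) →L[ℝ] (Fin n → ℝ) := ContinuousLinearMap.pi fun j =>
    if j = i then ContinuousLinearMap.proj i else
      Q j p • (ContinuousLinearMap.proj j - (k j : ℝ) • ContinuousLinearMap.proj i)
  have hQ : ∀ j, j ≠ i → Q j p ≠ 0 := by
    intro j hj
    simp only [Q, Finset.prod_ne_zero_iff, hp j hj, hpi, mul_one, sub_ne_zero]
    intro l hl
    exact_mod_cast (Finset.ne_of_mem_erase hl).symm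
  have hfac : ∀ j, j ≠ i → ∀ x : Fin n → ℝ, ∏ l ∈ Finset.range (d j), (x j - l * x i) =
      (x j - k j * x i) * Q j x := by
    intro j hj x
    exact (Finset.mul_prod_erase _ (fun l : ℕ => x j - l * x i) (Finset.mem_range.2 (hk j hj))).symm
  have h0 : f (0, p) = 0 := by
    ext j
    by_cases hj : j = i
    · simp [f, hj, hpi]
    · simp only [f, hj, if_false, hfac j hj]
      simp [hp j hj, hpi]
  have hL : HasFDerivAt (fun x => f (0, x)) L p := by
    rw [hasFDerivAt_pi']
    intro j
    by_cases hj : j = i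
    · simp only [f, hj, if_true]
      have h4 : (ContinuousLinearMap.proj i).comp L =
          ContinuousLinearMap.proj (R := ℝ) (φ := fun _ : Fin n => ℝ) i := by
        ext v
        simp [L]
      rw [h4]
      exact (hasFDerivAt_apply i p).sub_const 1
    · simp only [f, hj, if_false, zero_mul, add_zero, hfac j hj]
      have h1 : HasFDerivAt (fun x : Fin n → ℝ => x j - k j * x i)
          (ContinuousLinearMap.proj (R := ℝ) (φ := fun _ : Fin n => ℝ) j - (k j : ℝ) • ContinuousLinearMap.proj i) p :=
        (hasFDerivAt_apply j p).sub ((hasFDerivAt_apply i p).const_mul _)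
      have h2 : DifferentiableAt ℝ (Q j) p := by
        have : ContDiff ℝ 1 (Q j) := by fun_prop
        exact this.differentiable one_ne_zero p
      have h3 := h1.mul h2.hasFDerivAt
      have h4 : (ContinuousLinearMap.proj j).comp L = (p j - k j * p i) • fderiv ℝ (Q j) p + Q j p •
          (ContinuousLinearMap.proj (R := ℝ) (φ := fun _ : Fin n => ℝ) j
            - (k j : ℝ) • ContinuousLinearMap.proj i) := by
        ext v
        simp [L, hj, hp j hj, hpi]
      rw [h4]
      exact h3
  have hinj : Function.Injective L := by
    rw [injective_iff_map_eq_zero]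
    intro v hv
    have hvi : v i = 0 := by
      have := congrFun hv i
      simpa [L] using this
    ext j
    by_cases hj : j = i
    · rw [hj]; exact hvi
    · have := congrFun hv j
      simpa [L, hj, hvi, hQ j hj] using this
  obtain ⟨ψ, h1, h2⟩ := ift_aux f hf p h0 L hL hinj
  refine ⟨ψ, h1, h2.mono fun t ht => ⟨?_, fun j hj => ?_⟩⟩
  · have := congrFun ht i
    simp [f] at this
    linarith
  · have := congrFun ht j
    simpa [f, hj] using this

/-- The special system. -/
noncomputable def specForm {n : ℕ} (d : Fin n → ℕ) (i : Fin n) (W : Fin n → ℝ) (j : Fin n) :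
    MvPolynomial (Fin n) ℝ :=
  if j = i then X i ^ (d i - 1) * ∑ l, C (W l) * X l
  else ∏ l ∈ Finset.range (d j), (X j - C (l : ℝ) * X i)

lemma specForm_hom {n : ℕ} (d : Fin n → ℕ) (hd : ∀ i, 1 ≤ d i) (i : Fin n) (W : Fin n → ℝ)
    (j : Fin n) : (specForm d i W j).IsHomogeneous (d j) := by
  have hlin : ∀ (a : ℝ) (l : Fin n),
      (C a * X l : MvPolynomial (Fin n) ℝ).IsHomogeneous 1 := fun a l => by
    simpa using (isHomogeneous_C (Fin n) a).mul (isHomogeneous_X ℝ l)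
  unfold specForm
  split_ifs with hj
  · subst hj
    have := ((isHomogeneous_X ℝ j).pow (d j - 1)).mul
      (IsHomogeneous.sum Finset.univ (fun l => C (W l) * X l) 1 (fun l _ => hlin (W l) l))
    have e : 1 * (d j - 1) + 1 = d j := by have := hd j; omega
    rwa [e] at this
  · have := IsHomogeneous.prod (Finset.range (d j))
      (fun l : ℕ => (X j - C (l : ℝ) * X i : MvPolynomial (Fin n) ℝ)) (fun _ => 1)
      (fun l _ => (isHomogeneous_X ℝ j).sub (hlin _ i))
    simpa using this

lemma evForm_single {n : ℕ} (D : ℕ) (i : Fin n) :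
    ∃ c : (Fin n → ℕ) → ℝ, ∀ x : Fin n → ℝ, x i = 1 → evForm n D c x = 1 := by
  obtain ⟨c, hc⟩ := exists_coeffs (X i ^ D : MvPolynomial (Fin n) ℝ)
    (by simpa using (isHomogeneous_X ℝ i).pow D)
  exact ⟨c, fun x hx => by rw [hc]; simp [hx]⟩

lemma main_real {n : ℕ} (d : Fin n → ℕ) (hd : ∀ i, 1 ≤ d i) (δ : Fin n → ℕ)
    (R : MvPolynomial (Fin n × (Fin n → ℕ)) ℚ)
    (hIF : IsIFDZ n n d R) (hMH : MultiHom n n d δ R) (i : Fin n)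
    (hlow : δ i < ∏ j ∈ Finset.univ.erase i, d j) (b : Fin n × (Fin n → ℕ) → ℝ) :
    aeval b R = 0 := by
  classical
  let d' : Fin n → ℕ := Function.update d i 1
  let W : Fin n → ℝ := fun j => ((∏ l, d' (Fin.castLE j.is_lt.le l) : ℕ) : ℝ)
  let K := ∀ j, Fin (d' j)
  have hcard : Fintype.card K = ∏ j ∈ Finset.univ.erase i, d j := by
    simp only [K, Fintype.card_pi, Fintype.card_fin]
    rw [← Finset.mul_prod_erase _ _ (Finset.mem_univ i)]
    simp only [d', Function.update_self, one_mul]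
    exact Finset.prod_congr rfl fun j hj => by simp [Finset.ne_of_mem_erase hj]
  let pt : K → Fin n → ℝ := fun k j => if j = i then 1 else ((k j : ℕ) : ℝ)
  choose c0 hc0 using fun j => exists_coeffs (specForm d i W j) (specForm_hom d hd i W j)
  obtain ⟨v0, hv0⟩ := evForm_single (d i) i
  let c : Fin n × (Fin n → ℕ) → ℝ := fun q => c0 q.1 q.2
  let g : Fin n × (Fin n → ℕ) → ℝ := fun q => b q - c q
  let v : Fin n × (Fin n → ℕ) → ℝ := fun q => if q.1 = i then v0 q.2 else 0
  have hψ : ∀ k : K, _ := fun k => ift_grid d i (fun j α => g (j, α)) (pt k) (by simp [pt])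
    (fun j => k j) (fun j hj => by
      have := (k j).2
      simpa [d', hj] using this) (fun j hj => by simp [pt, hj])
  choose ψ hψ1 hψ2 using hψ
  -- values of the i-th form
  let val : K → ℝ → ℝ := fun k t =>
    evForm n (d i) (c0 i) (ψ k t) + t * evForm n (d i) (fun α => g (i, α)) (ψ k t)
  have hval : ∀ k, Tendsto (val k) (𝓝 0) (𝓝 (evForm n (d i) (c0 i) (pt k))) := by
    intro k
    have h1 := ((evForm_contDiff n (d i) (c0 i)).continuous.tendsto (pt k)).comp (hψ1 k)
    have h2 := ((evForm_contDiff n (d i) (fun α => g (i, α))).continuous.tendsto (pt k)).comp (hψ1 k)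
    have h3 := h1.add ((tendsto_id (x := 𝓝 (0:ℝ))).mul h2)
    rw [zero_mul, add_zero] at h3
    exact h3
  have hpt : ∀ k : K, evForm n (d i) (c0 i) (pt k) = (finPiFinEquiv k : ℕ) + W i := by
    intro k
    rw [hc0, finPiFinEquiv_apply]
    have hki : (k i : ℕ) = 0 := by
      have := (k i).2
      simp only [d', Function.update_self] at this
      omega
    simp only [specForm, if_true, map_mul, map_pow, map_sum, eval_X, eval_C]
    push_cast
    rw [← Finset.add_sum_erase _ _ (Finset.mem_univ i),
      ← Finset.add_sum_erase (Finset.univ : Finset (Fin n)) (fun x => ((k x : ℕ) : ℝ) * _) (Finset.mem_univ i), hki]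
    have : ∑ l ∈ Finset.univ.erase i, W l * pt k l = ∑ l ∈ Finset.univ.erase i,
        ((k l : ℕ) : ℝ) * ∏ j, (d' (Fin.castLE l.is_lt.le j) : ℝ) := by
      refine Finset.sum_congr rfl fun j hj => ?_
      simp [pt, W, Finset.ne_of_mem_erase hj, mul_comm]
    rw [this]
    simp [pt]
    ring
  have hdist : ∀ᶠ t in 𝓝 (0:ℝ), ∀ k k' : K, k ≠ k' → val k t ≠ val k' t := by
    rw [eventually_all]
    intro k
    rw [eventually_all]
    intro k'
    by_cases hk : k = k'
    · simp [hk]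
    · have hne : evForm n (d i) (c0 i) (pt k) ≠ evForm n (d i) (c0 i) (pt k') := by
        rw [hpt, hpt]
        intro h
        have h' : ((finPiFinEquiv k : ℕ) : ℝ) = (finPiFinEquiv k' : ℕ) := add_right_cancel h
        exact hk (finPiFinEquiv.injective (Fin.ext (by exact_mod_cast h')))
      have h5 := ((hval k).sub (hval k')).eventually_ne (sub_ne_zero.2 hne)
      exact h5.mono fun t ht _ => sub_ne_zero.1 ht
  have hzero : ∀ᶠ t in 𝓝 (0:ℝ), aeval (fun q => c q + t * g q) R = 0 := by
    filter_upwards [hdist, eventually_all.2 hψ2] with t ht hs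
    have hroot : ∀ k : K, (linePoly R (fun q => c q + t * g q) v).eval (- val k t) = 0 := by
      intro k
      rw [linePoly_eval]
      apply bezout_eval hIF _ (ψ k t) i (hs k).1
      intro j
      have e : evForm n (d j) (fun α => c (j, α) + t * g (j, α) + -val k t * v (j, α)) (ψ k t) =
          evForm n (d j) (c0 j) (ψ k t) + t * evForm n (d j) (fun α => g (j, α)) (ψ k t)
            + - val k t * evForm n (d j) (fun α => v (j, α)) (ψ k t) := by
        rw [evForm_add n (d j) (fun α => c (j, α) + t * g (j, α)), evForm_add]
      rw [e]
      by_cases hj : j = i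
      · subst hj
        have : evForm n (d j) (fun α => v (j, α)) (ψ k t) = 1 := by
          simp only [v, if_true]
          exact hv0 _ (hs k).1
        rw [this]
        simp only [val]
        ring
      · have h1 := (hs k).2 j hj
        have : evForm n (d j) (fun α => v (j, α)) (ψ k t) = 0 := by
          simp [v, hj, evForm]
        rw [this, hc0]
        simp only [specForm, hj, if_false, map_prod, map_sub, map_mul, eval_X, eval_C]
        rw [h1]; ring
    have hinj : Function.Injective (fun k : K => - val k t) := by
      intro k k' h
      by_contra hk
      exact ht k k' hk (neg_injective h)
    have hz : linePoly R (fun q => c q + t * g q) v = 0 := by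
      refine Polynomial.eq_zero_of_natDegree_lt_card_of_eval_eq_zero _ hinj hroot ?_
      rw [hcard]
      refine (linePoly_natDegree hMH i _ _ ?_).trans_lt hlow
      intro q hq
      simp [v, hq]
    have := linePoly_eval R (fun q => c q + t * g q) v 0
    rw [hz] at this
    simpa using this.symm
  have hz : linePoly R c g = 0 := by
    apply Polynomial.eq_zero_of_infinite_isRoot
    refine (infinite_of_mem_nhds (0:ℝ) hzero).mono ?_
    intro t ht
    change (linePoly R c g).eval t = 0
    rw [linePoly_eval]
    exact ht
  have := linePoly_eval R c g 1
  rw [hz] at this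
  simpa [g] using this.symm

end Helpers

/-- If `R` is an inertia form of degree zero for the format
`(n, n, (d₁,…,d_n))`, multihomogeneous of multidegree `(δ₁,…,δ_n)`, and some
`δᵢ < ∏_{j ≠ i} d_j`, then `R = 0`. -/
theorem ifdz_eq_zero_of_low_multidegree (n : ℕ) (hn : 1 ≤ n)
    (d : Fin n → ℕ) (hd : ∀ i, 1 ≤ d i) (δ : Fin n → ℕ)
    (R : MvPolynomial (Fin n × (Fin n → ℕ)) ℚ)
    (hIF : IsIFDZ n n d R) (hMH : MultiHom n n d δ R)
    (hlow : ∃ i, δ i < ∏ j ∈ Finset.univ.erase i, d j) :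
    R = 0 := by
  obtain ⟨i, hi⟩ := hlow
  have h := main_real d hd δ R hIF hMH i hi
  apply MvPolynomial.funext
  intro x
  have h1 := h (fun q => ((x q : ℚ) : ℝ))
  have h2 : aeval (fun q => ((x q : ℚ) : ℝ)) R = ((eval x R : ℚ) : ℝ) := by
    have := MvPolynomial.aeval_algebraMap_apply (A := ℚ) ℝ x R
    exact this
  rw [h2] at h1
  rw [map_zero]
  exact_mod_cast h1
end

section
/- Let m < n be positive integers and d₁,…,d_m ≥ 1. If R is an inertia form of degree zero for the format (m,n,(d₁,…,d_m)) which is multihomogeneous of multidegree (δ₁,…,δ_m) for some (δ₁,…,δ_m) ∈ ℕ^m, then R = 0. -/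
open MvPolynomial

/-- Krull: `m` polynomials whose only common zero is the origin force `n ≤ m`. -/
theorem le_of_only_zero {K : Type*} [Field K] [IsAlgClosed K] (m n : ℕ)
    (f : Fin m → MvPolynomial (Fin n) K)
    (h0 : ∀ x : Fin n → K, (∀ i, aeval x (f i) = 0) ↔ x = 0) : n ≤ m := by
  set I : Ideal (MvPolynomial (Fin n) K) := Ideal.span (Set.range f) with hI
  set P : Ideal (MvPolynomial (Fin n) K) := vanishingIdeal K {(0 : Fin n → K)} with hP
  have hPmax : P.IsMaximal := isMaximal_iff_eq_vanishingIdeal_singleton.2 ⟨0, rfl⟩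
  have hz : zeroLocus K I = {(0 : Fin n → K)} := by
    rw [hI, zeroLocus_span]
    ext x
    simp only [Set.mem_setOf_eq, Set.mem_singleton_iff, ← h0 x, Set.forall_mem_range]
  have hrad : P = I.radical := by
    rw [← vanishingIdeal_zeroLocus_eq_radical (K := K), hz]
  have hmin : P ∈ I.minimalPrimes := by
    refine ⟨⟨hPmax.isPrime, hrad ▸ Ideal.le_radical⟩, fun q hq _ => ?_⟩
    rw [hrad]
    exact hq.1.radical_le_iff.2 hq.2
  have hPh : P.height ≤ (m : ℕ∞) := by
    refine (Ideal.height_le_card_of_mem_minimalPrimes_span (Set.finite_range f) hmin).trans ?_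
    rw [← Set.image_univ]
    have := Set.ncard_image_le (f := f) (Set.finite_univ)
    rw [Set.ncard_univ, Nat.card_eq_fintype_card, Fintype.card_fin] at this
    exact_mod_cast this
  have hdim : ringKrullDim (MvPolynomial (Fin n) K) ≤ ((m : ℕ∞) : WithBot ℕ∞) := by
    refine (ringKrullDim_le_iff_isMaximal_height_le _).2 fun M hM => ?_
    obtain ⟨p, rfl⟩ := isMaximal_iff_eq_vanishingIdeal_singleton.1 hM
    let e : MvPolynomial (Fin n) K ≃ₐ[K] MvPolynomial (Fin n) K :=
      AlgEquiv.ofAlgHom (aeval fun i => X i + C (p i)) (aeval fun i => X i - C (p i))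
        (by ext i; simp [algebraMap_eq]) (by ext i; simp [algebraMap_eq])
    have : vanishingIdeal K {p} = P.comap (e.toRingEquiv) := by
      ext g
      rw [Ideal.mem_comap, hP, mem_vanishingIdeal_singleton_iff, mem_vanishingIdeal_singleton_iff]
      have : (aeval (0 : Fin n → K)).comp (e : MvPolynomial (Fin n) K →ₐ[K] _) = aeval p := by
        ext i; simp [e]
      rw [← this]; rfl
    rw [this, RingEquiv.height_comap]
    exact_mod_cast hPh
  rw [MvPolynomial.ringKrullDim_of_isNoetherianRing, ringKrullDim_eq_zero_of_field] at hdim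
  simp only [Nat.card_eq_fintype_card, Fintype.card_fin, zero_add] at hdim
  exact_mod_cast hdim

/-- If `m < n` and `R` is an inertia form of degree zero for the format
`(m, n, (d₁,…,d_m))` which is multihomogeneous of some multidegree `(δ₁,…,δ_m)`,
then `R = 0`. -/
theorem ifdz_eq_zero_of_lt (m n : ℕ) (hm : 1 ≤ m) (hmn : m < n)
    (d : Fin m → ℕ) (hd : ∀ i, 1 ≤ d i) (δ : Fin m → ℕ)
    (R : MvPolynomial (Fin m × (Fin n → ℕ)) ℚ)
    (hIF : IsIFDZ m n d R) (hMH : MultiHom m n d δ R) :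
    R = 0 := by
  obtain ⟨q, hq⟩ := hIF
  let K := AlgebraicClosure ℚ
  have key : ∀ a : Fin m × (Fin n → ℕ) → K, aeval a R = 0 := by
    intro a
    let f : Fin m → MvPolynomial (Fin n) K := fun i =>
      ∑ α ∈ Finset.Nat.antidiagonalTuple n (d i), C (a (i, α)) * ∏ j, (X j) ^ α j
    have hf : ∀ i (x : Fin n → K), aeval x (f i) = aeval (Sum.elim a x) (genForm m n d i) := by
      intro i x
      simp [f, genForm]
    have hf0 : ∀ i, aeval (0 : Fin n → K) (f i) = 0 := by
      intro i
      simp only [f, map_sum, map_mul, map_prod, map_pow, aeval_X, Pi.zero_apply]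
      refine Finset.sum_eq_zero fun α hα => ?_
      rw [Finset.Nat.mem_antidiagonalTuple] at hα
      obtain ⟨j, hj⟩ : ∃ j, α j ≠ 0 := by
        by_contra! h
        have := hd i
        simp [h] at hα
        omega
      rw [Finset.prod_eq_zero (Finset.mem_univ j) (zero_pow hj), mul_zero]
    obtain ⟨x, hx, hx0⟩ : ∃ x : Fin n → K, (∀ i, aeval x (f i) = 0) ∧ x ≠ 0 := by
      by_contra! h
      have := le_of_only_zero m n f fun x => ⟨h x, fun hx => hx ▸ hf0⟩
      omega
    obtain ⟨j, hj⟩ := Function.ne_iff.1 hx0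
    have hB := hq (Pi.single j q) (by simp)
    unfold Bezout at hB
    have hle : Ideal.span (Set.range (genForm m n d)) ≤
        RingHom.ker (aeval (Sum.elim a x) : MvPolynomial (Var m n) ℚ →ₐ[ℚ] K) := by
      rw [Ideal.span_le]
      rintro _ ⟨i, rfl⟩
      exact (hf i x).symm.trans (hx i)
    have hB' := hle hB
    rw [RingHom.mem_ker, map_mul, aeval_rename] at hB'
    rcases mul_eq_zero.1 hB' with h | h
    · exfalso
      simp only [xPow, map_prod, map_pow, aeval_X, Sum.elim_inr] at h
      obtain ⟨k, -, hk⟩ := Finset.prod_eq_zero_iff.1 h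
      by_cases hkj : k = j
      · subst hkj
        exact hj (eq_zero_of_pow_eq_zero hk)
      · simp [Pi.single_eq_of_ne hkj] at hk
    · simpa using h
  apply map_injective (algebraMap ℚ K) (algebraMap ℚ K).injective
  rw [map_zero]
  apply MvPolynomial.funext
  intro a
  rw [eval_map, map_zero]
  exact key a
end

section
/- Let n ≥ 1 and d₁,…,d_n ≥ 1, and define the canonical multidegree by δ_i := ∏_{j ∈ {1,…,n}, j ≠ i} d_j. Let R be an inertia form of degree zero for the format (n,n,(d₁,…,d_n)) which is multihomogeneous of multidegree (δ₁,…,δ_n). If A : D → ℕ is an effective filling with Row_i(A) = δ_i for all i whose weight vector wt(A) := Σ_{(i,α)∈D} A_{i,α}·α is not equal to d₁⋯d_n·(1,1,…,1), then the coefficient of the monomial ∏_{(i,α)∈D} a_{i,α}^{A_{i,α}} in R is zero. -/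
open MvPolynomial

noncomputable section

/-- evaluation of a row at a point -/
def evRow {n : ℕ} (m : ℕ) (x : Fin n → ℝ) : ((Fin n → ℕ) → ℝ) →ₗ[ℝ] ℝ :=
  ∑ α ∈ Finset.Nat.antidiagonalTuple n m, (∏ j, x j ^ α j) • LinearMap.proj α

lemma evRow_apply {n : ℕ} (m : ℕ) (x : Fin n → ℝ) (c : (Fin n → ℕ) → ℝ) :
    evRow m x c = ∑ α ∈ Finset.Nat.antidiagonalTuple n m, c α * ∏ j, x j ^ α j := by
  simp [evRow, mul_comm]

/-- evaluation of `P` at a system -/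
def pe {n : ℕ} (P : MvPolynomial (Fin n × (Fin n → ℕ)) ℝ) (a : Fin n → (Fin n → ℕ) → ℝ) : ℝ :=
  eval (fun p => a p.1 p.2) P

def Van {n : ℕ} (d : Fin n → ℕ) (P : MvPolynomial (Fin n × (Fin n → ℕ)) ℝ) : Prop :=
  ∀ (a : Fin n → (Fin n → ℕ) → ℝ) (x : Fin n → ℝ), x ≠ 0 →
    (∀ i, evRow (d i) x (a i) = 0) → pe P a = 0

def DegB {n : ℕ} (δ : Fin n → ℕ) (P : MvPolynomial (Fin n × (Fin n → ℕ)) ℝ) : Prop :=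
  ∀ A ∈ P.support, ∀ i, (∑ p ∈ A.support, if p.1 = i then A p else 0) = δ i

lemma van_of_ifdz {n : ℕ} (d : Fin n → ℕ) (R : MvPolynomial (Fin n × (Fin n → ℕ)) ℚ)
    (h : IsIFDZ n n d R) : Van d (map (algebraMap ℚ ℝ) R) := by
  intro a x hx ha
  obtain ⟨q, hq⟩ := h
  obtain ⟨j, hj⟩ := Function.ne_iff.mp hx
  have hb := hq (Pi.single j q) (by simp)
  unfold Bezout at hb
  let φ : MvPolynomial (Var n n) ℚ →ₐ[ℚ] ℝ :=
    aeval (Sum.elim (fun p : Fin n × (Fin n → ℕ) => a p.1 p.2) x)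
  have hle : Ideal.span (Set.range (genForm n n d)) ≤ RingHom.ker φ := by
    rw [Ideal.span_le]
    rintro _ ⟨i, rfl⟩
    have := ha i
    rw [evRow_apply] at this
    simp only [SetLike.mem_coe, RingHom.mem_ker, genForm, map_sum, map_mul, map_prod, map_pow, φ,
      aeval_X, Sum.elim_inl, Sum.elim_inr]
    exact this
  have h2 : φ (xPow n n (Pi.single j q) * rename Sum.inl R) = 0 := hle hb
  rw [map_mul] at h2
  have h3 : φ (xPow n n (Pi.single j q)) ≠ 0 := by
    simp only [xPow, map_prod, map_pow, φ, aeval_X, Sum.elim_inr]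
    refine Finset.prod_ne_zero_iff.mpr fun l _ => ?_
    by_cases hl : l = j
    · subst hl; exact pow_ne_zero _ hj
    · simp [Pi.single_eq_of_ne hl]
  have h4 := (mul_eq_zero.mp h2).resolve_left h3
  simp only [φ, aeval_rename] at h4
  rw [pe, eval_map, ← h4, aeval_def]
  rfl

lemma line_poly {n : ℕ} (P : MvPolynomial (Fin n × (Fin n → ℕ)) ℝ)
    (a b : Fin n → (Fin n → ℕ) → ℝ) :
    ∃ q : Polynomial ℝ, ∀ t, q.eval t = pe P (a + t • b) := by
  refine ⟨aeval (fun p => Polynomial.C (a p.1 p.2) + Polynomial.X * Polynomial.C (b p.1 p.2)) P,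
    fun t => ?_⟩
  rw [pe, ← Polynomial.coe_evalRingHom, aeval_def, Polynomial.algebraMap_eq, hom_eval₂]
  rw [eval]
  congr 1
  · ext <;> simp
  · ext; simp; ring

lemma line_poly_row {n : ℕ} (δ : Fin n → ℕ) (P : MvPolynomial (Fin n × (Fin n → ℕ)) ℝ)
    (hD : DegB δ P) (k : Fin n)
    (a : Fin n → (Fin n → ℕ) → ℝ) (f g : (Fin n → ℕ) → ℝ) :
    ∃ q : Polynomial ℝ, q.natDegree ≤ δ k ∧
      ∀ t, q.eval t = pe P (Function.update a k (f + t • g)) := by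
  refine ⟨aeval (fun p => Polynomial.C (Function.update a k f p.1 p.2) +
    Polynomial.C (Function.update (0 : Fin n → (Fin n → ℕ) → ℝ) k g p.1 p.2) * Polynomial.X) P,
    ?_, fun t => ?_⟩
  · rw [aeval_def, eval₂_eq]
    refine Polynomial.natDegree_sum_le_of_forall_le _ _ fun A hA => ?_
    rw [Polynomial.algebraMap_eq]
    refine (Polynomial.natDegree_C_mul_le _ _).trans ((Polynomial.natDegree_prod_le _ _).trans ?_)
    rw [← hD A hA k]
    refine Finset.sum_le_sum fun p _ => Polynomial.natDegree_pow_le.trans ?_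
    by_cases hp : p.1 = k
    · rw [if_pos hp]
      have : ∀ u v : ℝ, (Polynomial.C u + Polynomial.C v * Polynomial.X).natDegree ≤ 1 := by
        intro u v; compute_degree
      nlinarith [this (Function.update a k f p.1 p.2)
        (Function.update (0 : Fin n → (Fin n → ℕ) → ℝ) k g p.1 p.2)]
    · simp [hp, Function.update_of_ne hp]
  · rw [pe, ← Polynomial.coe_evalRingHom, aeval_def, Polynomial.algebraMap_eq, hom_eval₂]
    rw [eval]
    congr 1
    · ext <;> simp
    · ext p
      by_cases hp : p.1 = k
      · simp only [hp]; simp [mul_comm t]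
      · simp [Function.update_of_ne hp]

lemma step {n : ℕ} (d δ : Fin n → ℕ) (P : MvPolynomial (Fin n × (Fin n → ℕ)) ℝ)
    (hD : DegB δ P) (k : Fin n) (a : Fin n → (Fin n → ℕ) → ℝ)
    {S : Type} [Fintype S] [DecidableEq S] (hS : Fintype.card S = δ k) (pts : S → Fin n → ℝ)
    (h1 : ∀ c s, evRow (d k) (pts s) c = 0 → pe P (Function.update a k c) = 0)
    (f g : (Fin n → ℕ) → ℝ)
    (hf : ∀ s, evRow (d k) (pts s) f ≠ 0) (hg : ∀ s, evRow (d k) (pts s) g ≠ 0)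
    (hfg : ∀ s s', s ≠ s' → evRow (d k) (pts s) g * evRow (d k) (pts s') f
      - evRow (d k) (pts s') g * evRow (d k) (pts s) f ≠ 0)
    (h0 : pe P (Function.update a k f) = 0) (c : (Fin n → ℕ) → ℝ) :
    pe P (Function.update a k c) = 0 := by
  set F : S → ℝ := fun s => evRow (d k) (pts s) f with hF
  set G : S → ℝ := fun s => evRow (d k) (pts s) g with hG
  set C' : S → ℝ := fun s => evRow (d k) (pts s) (c - f) with hC
  obtain ⟨q, -, hq⟩ := line_poly_row δ P hD k a c g
  have linne : ∀ u v : ℝ, v ≠ 0 → (Polynomial.C u + Polynomial.C v * Polynomial.X) ≠ 0 := by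
    intro u v hv h
    have := congrArg (fun r => Polynomial.coeff r 1) h
    simp at this
    exact hv this
  let B : Polynomial ℝ := (∏ s, (Polynomial.C (C' s) + Polynomial.C (G s) * Polynomial.X)) *
    ∏ z : S × S, if z.1 = z.2 then 1 else
      (Polynomial.C (C' z.1 * F z.2 - C' z.2 * F z.1) +
        Polynomial.C (G z.1 * F z.2 - G z.2 * F z.1) * Polynomial.X)
  have hB : B ≠ 0 := by
    refine mul_ne_zero (Finset.prod_ne_zero_iff.mpr fun s _ => linne _ _ (hg s))
      (Finset.prod_ne_zero_iff.mpr fun z _ => ?_)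
    split_ifs with h
    · exact one_ne_zero
    · exact linne _ _ (hfg _ _ h)
  have hqB : q * B = 0 := by
    refine Polynomial.funext fun μ => ?_
    rw [Polynomial.eval_mul, Polynomial.eval_zero]
    by_cases hμ : B.eval μ = 0
    · rw [hμ, mul_zero]
    simp only [B, Polynomial.eval_mul, Polynomial.eval_prod, mul_eq_zero, not_or,
      Finset.prod_eq_zero_iff, not_exists, not_and, Finset.mem_univ, true_implies, true_and] at hμ
    obtain ⟨hμ1, hμ2⟩ := hμ
    rw [hq, mul_eq_zero]; left
    set H : S → ℝ := fun s => evRow (d k) (pts s) (c - f + μ • g) with hH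
    have hHe : ∀ s, H s = C' s + G s * μ := by
      intro s; simp only [hH, map_add, map_smul, smul_eq_mul, hC, hG]; ring
    have hH0 : ∀ s, H s ≠ 0 := by
      intro s; rw [hHe]; simpa using hμ1 s
    obtain ⟨r, hr1, hr⟩ := line_poly_row δ P hD k a f (c - f + μ • g)
    have hr0 : r = 0 := by
      refine Polynomial.eq_zero_of_natDegree_lt_card_of_eval_eq_zero r
        (f := fun o : Option S => o.elim 0 (fun s => - F s / H s)) ?_ ?_ ?_
      · intro o o' h
        rcases o with _ | s <;> rcases o' with _ | s'
        · rfl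
        · simp only [Option.elim] at h
          exact absurd h.symm (div_ne_zero (neg_ne_zero.mpr (hf s')) (hH0 s'))
        · simp only [Option.elim] at h
          exact absurd h (div_ne_zero (neg_ne_zero.mpr (hf s)) (hH0 s))
        · simp only [Option.elim] at h
          by_contra hne
          have hne' : s ≠ s' := fun h => hne (by rw [h])
          rw [div_eq_div_iff (hH0 s) (hH0 s'), hHe, hHe] at h
          apply hμ2 (s, s')
          simp [hne']
          linarith
      · intro o
        rw [hr]
        rcases o with _ | s
        · simpa using h0
        · apply h1 _ s
          simp only [Option.elim, map_add (evRow (d k) (pts s)) f, map_smul]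
          change F s + (- F s / H s) • H s = 0
          rw [smul_eq_mul, div_mul_cancel₀ _ (hH0 s)]; ring
      · rw [Fintype.card_option, hS]; omega
    have := hr 1
    rw [hr0, Polynomial.eval_zero] at this
    rw [this]
    congr 2
    rw [one_smul]; abel
  have hq0 : q = 0 := (mul_eq_zero.mp hqB).resolve_right hB
  have := hq 0
  rw [hq0] at this
  simpa using this.symm

def Lf {n : ℕ} (τ : ℝ) (x : Fin n → ℝ) : ℝ := ∑ j : Fin n, τ ^ (j : ℕ) * x j

lemma exists_row (n m : ℕ) (T : Fin m → ℝ) :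
    ∃ c : (Fin n → ℕ) → ℝ, ∀ x, evRow m x c = ∏ s, Lf (T s) x := by
  let f : MvPolynomial (Fin n) ℝ := ∏ s, ∑ j : Fin n, C (T s ^ (j : ℕ)) * X j
  have hf : f.IsHomogeneous m := by
    have := IsHomogeneous.prod (Finset.univ : Finset (Fin m))
      (fun s => ∑ j : Fin n, (C (T s ^ (j : ℕ)) * X j : MvPolynomial (Fin n) ℝ)) (fun _ => 1)
      (fun s _ => IsHomogeneous.sum _ _ _ fun j _ => by
        simpa using (isHomogeneous_C (Fin n) (T s ^ (j : ℕ))).mul (isHomogeneous_X ℝ j))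
    simpa [f] using this
  refine ⟨fun α => coeff (Finsupp.equivFunOnFinite.symm α) f, fun x => ?_⟩
  have : ∏ s, Lf (T s) x = eval x f := by
    simp [f, Lf, eval_prod]
  rw [this, eval_eq', evRow_apply]
  symm
  refine Finset.sum_bij_ne_zero (fun A _ _ => (A : Fin n → ℕ)) ?_ ?_ ?_ ?_
  · intro A hA _
    rw [Finset.Nat.mem_antidiagonalTuple]
    have := hf (mem_support_iff.mp hA)
    rw [← this, Finsupp.weight_apply, Finsupp.sum_fintype] <;> simp
  · intro A _ _ A' _ _ h
    exact DFunLike.coe_injective h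
  · intro α hα h
    refine ⟨Finsupp.equivFunOnFinite.symm α, ?_, ?_, ?_⟩
    · rw [mem_support_iff]; exact left_ne_zero_of_mul h
    · simpa using h
    · simp
  · intro A _ _
    have : Finsupp.equivFunOnFinite.symm (A : Fin n → ℕ) = A := by ext; rfl
    rw [this]

lemma Lf_line {n : ℕ} (τ t : ℝ) (p v : Fin n → ℝ) : Lf τ (p + t • v) = Lf τ p + t * Lf τ v := by
  simp only [Lf, Pi.add_apply, Pi.smul_apply, smul_eq_mul, mul_add, Finset.sum_add_distrib,
    Finset.mul_sum]
  congr 1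
  exact Finset.sum_congr rfl fun _ _ => by ring

lemma Lf_mulVec {n : ℕ} (T : Fin n → ℝ) (v : Fin n → ℝ) :
    (Matrix.vandermonde T).mulVec v = fun j => Lf (T j) v := by
  ext j
  simp [Matrix.mulVec, dotProduct, Lf, Matrix.vandermonde]

lemma Lf_inj {n : ℕ} (T : Fin n → ℝ) (hT : Function.Injective T) (v : Fin n → ℝ)
    (h : ∀ j, Lf (T j) v = 0) : v = 0 := by
  refine Matrix.eq_zero_of_mulVec_eq_zero (Matrix.det_vandermonde_ne_zero_iff.mpr hT) ?_
  rw [Lf_mulVec]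
  ext j; exact h j

lemma Lf_surj {n : ℕ} (T : Fin n → ℝ) (hT : Function.Injective T) (w : Fin n → ℝ) :
    ∃ v : Fin n → ℝ, ∀ j, Lf (T j) v = w j := by
  refine ⟨(Matrix.vandermonde T)⁻¹.mulVec w, fun j => ?_⟩
  have := Lf_mulVec T ((Matrix.vandermonde T)⁻¹.mulVec w)
  rw [Matrix.mulVec_mulVec, Matrix.mul_nonsing_inv, Matrix.one_mulVec] at this
  · exact (congrFun this j).symm
  · exact (Matrix.det_vandermonde_ne_zero_iff.mpr hT).isUnit

open Topology in
lemma persist {n : ℕ} (d : Fin n → ℕ) (τ : ∀ i, Fin (d i) → ℝ) (a0 : Fin n → (Fin n → ℕ) → ℝ)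
    (ha0 : ∀ i x, evRow (d i) x (a0 i) = ∏ s, Lf (τ i s) x) (k : Fin n) (e : ∀ j, Fin (d j))
    (hinj : Function.Injective fun j => τ j (e j)) (p : Fin n → ℝ)
    (hp : ∀ j, j ≠ k → Lf (τ j (e j)) p = 0)
    (hp' : ∀ j, j ≠ k → ∀ s, s ≠ e j → Lf (τ j s) p ≠ 0)
    (b : Fin n → (Fin n → ℕ) → ℝ) (U : Set (Fin n → ℝ)) (hU : U ∈ 𝓝 p) :
    ∀ᶠ ε in 𝓝 (0 : ℝ), ∃ x ∈ U, ∀ j, j ≠ k → evRow (d j) x (a0 j + ε • b j) = 0 := by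
  let Ψ : ℝ × (Fin n → ℝ) → ℝ × (Fin n → ℝ) := fun z => (z.1, fun j =>
    if j = k then Lf (τ k (e k)) z.2 else ∏ s, Lf (τ j s) z.2 + z.1 * evRow (d j) z.2 (b j))
  have hL : ∀ t, ContDiff ℝ 1 (fun z : ℝ × (Fin n → ℝ) => Lf t z.2) := by
    intro t; unfold Lf; fun_prop
  have hΨ : ContDiff ℝ 1 Ψ := by
    refine contDiff_fst.prodMk (contDiff_pi.mpr fun j => ?_)
    by_cases hj : j = k
    · simp only [hj, if_true]; exact hL _
    · simp only [hj, if_false, evRow_apply]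
      refine ContDiff.add (contDiff_prod fun s _ => hL _) ?_
      fun_prop
  have hstr := (hΨ.contDiffAt (x := (0, p))).hasStrictFDerivAt one_ne_zero
  set D := fderiv ℝ Ψ (0, p) with hDdef
  have hD : HasFDerivAt Ψ D (0, p) := hstr.hasFDerivAt
  have hDinj : Function.Injective D := by
    rw [injective_iff_map_eq_zero]
    rintro ⟨t, v⟩ htv
    have h1 : t = 0 := by
      have ha : HasFDerivAt (fun z : ℝ × (Fin n → ℝ) => z.1)
        ((ContinuousLinearMap.fst ℝ ℝ (Fin n → ℝ)).comp D) (0, p) := hD.fst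
      have hb := ha.unique hasFDerivAt_fst
      have hc := congrArg (fun l => l (t, v)) hb
      simpa [htv] using hc.symm
    subst h1
    have hline : HasDerivAt (fun t : ℝ => Ψ ((0, p) + t • ((0 : ℝ), v))) 0 0 := by
      have hl : HasDerivAt (fun t : ℝ => ((0 : ℝ), p) + t • ((0 : ℝ), v)) ((0 : ℝ), v) 0 := by
        simpa using ((hasDerivAt_id (0 : ℝ)).smul_const ((0 : ℝ), v)).const_add ((0 : ℝ), p)
      have hD' : HasFDerivAt Ψ D (((0 : ℝ), p) + (0 : ℝ) • ((0 : ℝ), v)) := by simpa using hD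
      have := hD'.comp_hasDerivAt (0 : ℝ) hl
      rw [htv] at this
      exact this
    have hcomp : ∀ j, HasDerivAt (fun t : ℝ => (Ψ ((0, p) + t • ((0 : ℝ), v))).2 j) 0 0 := by
      intro j
      exact (hasDerivAt_pi.mp hline.snd) j
    have hv : v = 0 := by
      refine Lf_inj _ hinj v fun j => ?_
      have hj := hcomp j
      by_cases hjk : j = k
      · subst hjk
        simp only [Ψ, Prod.snd_add, Prod.smul_snd, if_true, Lf_line] at hj
        have h2 : HasDerivAt (fun t : ℝ => Lf (τ j (e j)) p + t * Lf (τ j (e j)) v)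
            (Lf (τ j (e j)) v) 0 := by
          simpa using ((hasDerivAt_id (0 : ℝ)).mul_const (Lf (τ j (e j)) v)).const_add
            (Lf (τ j (e j)) p)
        exact h2.unique hj
      · simp only [Ψ, Prod.snd_add, Prod.smul_snd, if_neg hjk, Lf_line, Prod.fst_add,
          Prod.smul_fst, smul_zero, add_zero, zero_mul] at hj
        set Q : ℝ → ℝ := fun t => ∏ s ∈ Finset.univ.erase (e j),
          (Lf (τ j s) p + t * Lf (τ j s) v) with hQ
        have hQd : DifferentiableAt ℝ Q 0 := by
          simp only [hQ]; fun_prop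
        have hfac : (fun t : ℝ => ∏ s, (Lf (τ j s) p + t * Lf (τ j s) v)) =
            fun t => (t * Lf (τ j (e j)) v) * Q t := by
          ext t
          rw [← Finset.mul_prod_erase _ _ (Finset.mem_univ (e j)), hp j hjk, zero_add]
        rw [hfac] at hj
        have h2 : HasDerivAt (fun t : ℝ => t * Lf (τ j (e j)) v) (Lf (τ j (e j)) v) 0 := by
          simpa using (hasDerivAt_id (0 : ℝ)).mul_const (Lf (τ j (e j)) v)
        have h3 := (h2.mul hQd.hasDerivAt).unique hj
        rw [zero_mul, zero_mul, add_zero] at h3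
        refine (mul_eq_zero.mp h3).resolve_right ?_
        simp only [hQ, zero_mul, add_zero]
        exact Finset.prod_ne_zero_iff.mpr fun s hs => hp' j hjk s (Finset.ne_of_mem_erase hs)
    rw [hv]; rfl
  have hDsurj : Function.Surjective D := by
    have := LinearMap.injective_iff_surjective (f := (D : ℝ × (Fin n → ℝ) →ₗ[ℝ] ℝ × (Fin n → ℝ)))
    exact this.mp hDinj
  have hmap := hstr.map_nhds_eq_of_surj (LinearMap.range_eq_top.mpr hDsurj)
  have hUU : (Prod.snd ⁻¹' U : Set (ℝ × (Fin n → ℝ))) ∈ 𝓝 ((0 : ℝ), p) :=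
    continuous_snd.continuousAt.preimage_mem_nhds hU
  have him : Ψ '' (Prod.snd ⁻¹' U) ∈ 𝓝 (Ψ (0, p)) := by
    rw [← hmap]; exact Filter.image_mem_map hUU
  have hΨ0 : Ψ (0, p) = (0, (Ψ (0, p)).2) := rfl
  have hcont : Filter.Tendsto (fun ε : ℝ => (ε, (Ψ (0, p)).2)) (𝓝 0) (𝓝 (Ψ (0, p))) := by
    have : Continuous (fun ε : ℝ => (ε, (Ψ (0, p)).2)) := by fun_prop
    rw [hΨ0]
    exact this.tendsto 0
  filter_upwards [hcont him] with ε hε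
  obtain ⟨⟨ε', x⟩, hx, hxe⟩ := hε
  have e1 : ε' = ε := congrArg Prod.fst hxe
  subst e1
  refine ⟨x, hx, fun j hj => ?_⟩
  have e2 := congrFun (congrArg Prod.snd hxe) j
  simp only [Ψ, if_neg hj, zero_mul, add_zero] at e2
  rw [map_add, map_smul, ha0, smul_eq_mul, e2]
  exact Finset.prod_eq_zero (Finset.mem_univ (e j)) (hp j hj)

lemma evRow_cont {n : ℕ} (m : ℕ) (c : (Fin n → ℕ) → ℝ) :
    Continuous (fun x : Fin n → ℝ => evRow m x c) := by
  simp only [evRow_apply]; fun_prop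

open Topology in
lemma uniq {n : ℕ} (d : Fin n → ℕ) (hd : ∀ i, 1 ≤ d i) :
    ∃ a0 : Fin n → (Fin n → ℕ) → ℝ, ∀ P : MvPolynomial (Fin n × (Fin n → ℕ)) ℝ,
      Van d P → DegB (fun i => ∏ j ∈ Finset.univ.erase i, d j) P → pe P a0 = 0 → P = 0 := by
  classical
  let e0 := Fintype.equivFin (Σ i, Fin (d i))
  let τ : ∀ i, Fin (d i) → ℝ := fun i s => ((e0 ⟨i, s⟩ : ℕ) : ℝ)
  have hτ : ∀ i s j s', τ i s = τ j s' → (⟨i, s⟩ : Σ i, Fin (d i)) = ⟨j, s'⟩ := by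
    intro i s j s' h
    simp only [τ, Nat.cast_inj] at h
    exact e0.injective (Fin.ext h)
  have hτ1 : ∀ i s j s', i ≠ j → τ i s ≠ τ j s' := by
    intro i s j s' h h'
    exact h (congrArg Sigma.fst (hτ _ _ _ _ h'))
  have hτ2 : ∀ i s s', s ≠ s' → τ i s ≠ τ i s' := by
    intro i s s' h h'
    have := hτ _ _ _ _ h'
    simp at this
    exact h this
  choose a0 ha0 using fun i => exists_row n (d i) (τ i)
  refine ⟨a0, fun P hV hD h0 => ?_⟩
  -- main induction over the set of freed rows
  have main : ∀ T : Finset (Fin n), ∀ b : Fin n → (Fin n → ℕ) → ℝ,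
      (∀ i, i ∉ T → b i = a0 i) → pe P b = 0 := by
    intro T
    induction T using Finset.induction with
    | empty =>
      intro b hb
      have : b = a0 := funext fun i => hb i (by simp)
      rw [this, h0]
    | insert k T hk ih =>
      intro b hb
      let S := ∀ j : {j : Fin n // j ≠ k}, Fin (d j)
      have hS : Fintype.card S = ∏ j ∈ Finset.univ.erase k, d j := by
        simp only [S, Fintype.card_pi, Fintype.card_fin]
        symm
        exact Finset.prod_subtype _ (by simp) _
      let e : S → ∀ j, Fin (d j) := fun s j => if h : j = k then ⟨0, hd j⟩ else s ⟨j, h⟩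
      have he : ∀ s j (h : j ≠ k), e s j = s ⟨j, h⟩ := fun s j h => by simp [e, h]
      have hinj : ∀ s, Function.Injective fun j => τ j (e s j) := by
        intro s i j h
        by_contra hij
        exact hτ1 _ _ _ _ hij h
      choose p hp using fun s => Lf_surj _ (hinj s) (Pi.single k 1)
      have hp0 : ∀ s j, j ≠ k → Lf (τ j (e s j)) (p s) = 0 := by
        intro s j hj; rw [hp, Pi.single_eq_of_ne hj]
      have hpk : ∀ s, Lf (τ k (e s k)) (p s) = 1 := by
        intro s; rw [hp, Pi.single_eq_same]
      have hpne : ∀ s, p s ≠ 0 := by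
        intro s h
        have := hpk s
        rw [h] at this
        simp [Lf] at this
      have hnv : ∀ s θ, (∀ j, j ≠ k → θ ≠ τ j (e s j)) → Lf θ (p s) ≠ 0 := by
        intro s θ hθ h
        apply hpne s
        refine Lf_inj (Function.update (fun j => τ j (e s j)) k θ) ?_ _ ?_
        · intro i j hij
          by_cases hi : i = k <;> by_cases hj : j = k
          · rw [hi, hj]
          · subst hi
            rw [Function.update_self, Function.update_of_ne hj] at hij
            exact absurd hij (hθ j hj)
          · subst hj
            rw [Function.update_self, Function.update_of_ne hi] at hij
            exact absurd hij.symm (hθ i hi)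
          · rw [Function.update_of_ne hi, Function.update_of_ne hj] at hij
            exact hinj s hij
        · intro j
          by_cases hj : j = k
          · subst hj; rw [Function.update_self]; exact h
          · rw [Function.update_of_ne hj]; exact hp0 s j hj
      have hF : ∀ s, evRow (d k) (p s) (a0 k) ≠ 0 := by
        intro s
        rw [ha0]
        exact Finset.prod_ne_zero_iff.mpr fun σ _ => hnv s _ fun j hj => hτ1 _ _ _ _ hj.symm
      -- the auxiliary row
      obtain ⟨g, hg, hfg⟩ : ∃ g : (Fin n → ℕ) → ℝ, (∀ s, evRow (d k) (p s) g ≠ 0) ∧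
          ∀ s s', s ≠ s' → evRow (d k) (p s) g * evRow (d k) (p s') (a0 k)
            - evRow (d k) (p s') g * evRow (d k) (p s) (a0 k) ≠ 0 := by
        let pl : S → Polynomial ℝ := fun s =>
          ∑ j : Fin n, Polynomial.X ^ (j : ℕ) * Polynomial.C (p s j)
        have hpl : ∀ s θ, (pl s).eval θ = Lf θ (p s) := by
          intro s θ; simp only [pl, Lf, Polynomial.eval_finsetSum, Polynomial.eval_mul, Polynomial.eval_pow, Polynomial.eval_X, Polynomial.eval_C]
        let B : Polynomial ℝ := (∏ s, pl s) * ∏ z : S × S, if z.1 = z.2 then 1 else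
          (pl z.1 ^ d k * Polynomial.C (evRow (d k) (p z.2) (a0 k))
            - pl z.2 ^ d k * Polynomial.C (evRow (d k) (p z.1) (a0 k)))
        have hB : B ≠ 0 := by
          refine mul_ne_zero (Finset.prod_ne_zero_iff.mpr fun s _ h => ?_)
            (Finset.prod_ne_zero_iff.mpr fun z _ => ?_)
          · have := hpl s (τ k (e s k))
            rw [h, hpk] at this
            simp at this
          · split_ifs with hz
            · exact one_ne_zero
            · intro h
              obtain ⟨⟨j, hj⟩, hjz⟩ := Function.ne_iff.mp hz
              have h2 := congrArg (Polynomial.eval (τ j (e z.1 j))) h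
              simp only [Polynomial.eval_sub, Polynomial.eval_mul, Polynomial.eval_pow, hpl,
                Polynomial.eval_C, Polynomial.eval_zero] at h2
              rw [hp0 _ j hj, zero_pow (by have := hd k; omega), zero_mul, zero_sub,
                neg_eq_zero] at h2
              refine mul_ne_zero (pow_ne_zero _ (hnv _ _ ?_)) (hF _) h2
              intro i hi
              by_cases hij : j = i
              · subst hij
                refine hτ2 _ _ _ ?_
                rw [he _ _ hj, he _ _ hj]; exact hjz
              · exact hτ1 _ _ _ _ hij
        obtain ⟨θ, hθ⟩ : ∃ θ, ¬ (B.eval θ = 0) := by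
          by_contra! h
          exact hB (Polynomial.funext fun t => by rw [h t, Polynomial.eval_zero])
        obtain ⟨g, hg⟩ := exists_row n (d k) (fun _ => θ)
        have hg' : ∀ x, evRow (d k) x g = Lf θ x ^ d k := by
          intro x; rw [hg]; simp
        simp only [B, Polynomial.eval_mul, Polynomial.eval_prod, mul_eq_zero, not_or,
          Finset.prod_eq_zero_iff, not_exists, Finset.mem_univ, true_and] at hθ
        refine ⟨g, fun s => ?_, fun s s' hss => ?_⟩
        · rw [hg']; exact pow_ne_zero _ (by rw [← hpl]; exact hθ.1 s)
        · have := hθ.2 (s, s')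
          simp only [if_neg hss, Polynomial.eval_sub, Polynomial.eval_mul, Polynomial.eval_pow, hpl,
                Polynomial.eval_C] at this
          rw [hg', hg']; exact this
      -- open condition
      have hopen : ∀ᶠ y : S → Fin n → ℝ in 𝓝 p, (∀ s, y s ≠ 0) ∧
          (∀ s, evRow (d k) (y s) (a0 k) ≠ 0) ∧ (∀ s, evRow (d k) (y s) g ≠ 0) ∧
          ∀ s s', s ≠ s' → evRow (d k) (y s) g * evRow (d k) (y s') (a0 k)
            - evRow (d k) (y s') g * evRow (d k) (y s) (a0 k) ≠ 0 := by
        have c1 : ∀ (c : (Fin n → ℕ) → ℝ) (s : S),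
            Continuous fun y : S → Fin n → ℝ => evRow (d k) (y s) c :=
          fun c s => (evRow_cont (d k) c).comp (continuous_apply s)
        refine Filter.Eventually.and ?_ (Filter.Eventually.and ?_ (Filter.Eventually.and ?_ ?_))
        · exact Filter.eventually_all.mpr fun s =>
            (continuous_apply s).continuousAt.eventually_ne (hpne s)
        · exact Filter.eventually_all.mpr fun s => (c1 _ s).continuousAt.eventually_ne (hF s)
        · exact Filter.eventually_all.mpr fun s => (c1 _ s).continuousAt.eventually_ne (hg s)
        · refine Filter.eventually_all.mpr fun s => Filter.eventually_all.mpr fun s' => ?_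
          by_cases hss : s = s'
          · exact Filter.Eventually.of_forall fun _ h => absurd hss h
          · have cc := ((c1 g s).mul (c1 (a0 k) s')).sub ((c1 g s').mul (c1 (a0 k) s))
            exact (cc.continuousAt.eventually_ne (hfg s s' hss)).mono fun _ h _ => h
      obtain ⟨r, hr, hball⟩ := Metric.eventually_nhds_iff.mp hopen
      let b' := Function.update b k (a0 k)
      have hb' : ∀ i, i ∉ T → b' i = a0 i := by
        intro i hi
        by_cases hik : i = k
        · subst hik; simp [b']
        · simp only [b', Function.update_of_ne hik]
          exact hb i (by simp [hik, hi])
      have hev : ∀ᶠ ε in 𝓝 (0 : ℝ), ∀ s, ∃ x ∈ Metric.ball (p s) r,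
          ∀ j, j ≠ k → evRow (d j) x (a0 j + ε • (b' - a0) j) = 0 := by
        refine Filter.eventually_all.mpr fun s => ?_
        refine persist d τ a0 ha0 k (e s) (hinj s) (p s) (hp0 s) ?_ _ _ (Metric.ball_mem_nhds _ hr)
        intro j hj σ hσ
        refine hnv s _ fun i hi => ?_
        by_cases hij : j = i
        · subst hij; exact hτ2 _ _ _ hσ
        · exact hτ1 _ _ _ _ hij
      obtain ⟨q, hq⟩ := line_poly P (Function.update a0 k (b k)) (Function.update (b' - a0) k 0)
      have hupd : ∀ ε : ℝ, Function.update a0 k (b k) + ε • Function.update (b' - a0) k 0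
          = Function.update (a0 + ε • (b' - a0)) k (b k) := by
        intro ε
        ext i α
        by_cases hi : i = k
        · subst hi; simp
        · simp [Function.update_of_ne hi]
      have hzero : ∀ᶠ ε in 𝓝 (0 : ℝ), q.eval ε = 0 := by
        filter_upwards [hev] with ε hε
        rw [hq, hupd]
        choose x hx hxz using hε
        obtain ⟨k0, k1, k2, k3⟩ := hball (y := x) ((dist_pi_lt_iff hr).mpr fun s => hx s)
        refine step d _ P hD k _ hS x ?_ (a0 k) g k1 k2 k3 ?_ (b k)
        · intro c s hc
          refine hV _ (x s) (k0 s) fun i => ?_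
          by_cases hi : i = k
          · subst hi; rw [Function.update_self]; exact hc
          · rw [Function.update_of_ne hi]; exact hxz s i hi
        · apply ih
          intro i hi
          by_cases hik : i = k
          · subst hik; simp
          · rw [Function.update_of_ne hik]
            simp [hb' i hi]
      have hq0 : q = 0 := by
        obtain ⟨r', hr', hz⟩ := Metric.eventually_nhds_iff.mp hzero
        refine Polynomial.eq_zero_of_infinite_isRoot q ?_
        refine (Set.Ioo_infinite hr').mono fun t ht => ?_
        exact hz (by rw [Real.dist_eq, sub_zero, abs_of_pos ht.1]; exact ht.2)
      have h1 := hq 1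
      rw [hq0, hupd, Polynomial.eval_zero] at h1
      rw [h1]
      congr 1
      ext i α
      by_cases hi : i = k
      · subst hi; simp
      · simp [Function.update_of_ne hi, b']
  refine MvPolynomial.funext fun x => ?_
  rw [map_zero]
  exact main Finset.univ (fun i α => x (i, α)) (by simp)

lemma proportional {n : ℕ} (d : Fin n → ℕ) (hd : ∀ i, 1 ≤ d i)
    (P Q : MvPolynomial (Fin n × (Fin n → ℕ)) ℝ) (hP : Van d P)
    (hP' : DegB (fun i => ∏ j ∈ Finset.univ.erase i, d j) P) (hQ : Van d Q)
    (hQ' : DegB (fun i => ∏ j ∈ Finset.univ.erase i, d j) Q) (hP0 : P ≠ 0) :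
    ∃ c : ℝ, ∀ A, coeff A Q = c * coeff A P := by
  obtain ⟨a0, ha0⟩ := uniq d hd
  have h1 : pe P a0 ≠ 0 := fun h => hP0 (ha0 P hP hP' h)
  have h2 : C (pe P a0) * Q - C (pe Q a0) * P = 0 := by
    apply ha0
    · intro a x hx h
      have e1 := hP a x hx h
      have e2 := hQ a x hx h
      simp only [pe] at e1 e2 ⊢
      simp [e1, e2]
    · intro A hA
      rw [mem_support_iff, coeff_sub, coeff_C_mul, coeff_C_mul] at hA
      by_cases hPA : coeff A P = 0
      · refine hQ' A (mem_support_iff.mpr fun h => hA ?_)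
        rw [h, hPA]; ring
      · exact hP' A (mem_support_iff.mpr hPA)
    · simp only [pe, map_sub, map_mul, eval_C]; ring
  refine ⟨pe Q a0 / pe P a0, fun A => ?_⟩
  have h3 := congrArg (coeff A) h2
  rw [coeff_sub, coeff_C_mul, coeff_C_mul, coeff_zero] at h3
  field_simp
  linarith

def wtj {n : ℕ} (j : Fin n) (A : (Fin n × (Fin n → ℕ)) →₀ ℕ) : ℕ := ∑ p ∈ A.support, A p * p.2 j

def scaleP {n : ℕ} (j : Fin n) (P : MvPolynomial (Fin n × (Fin n → ℕ)) ℝ) :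
    MvPolynomial (Fin n × (Fin n → ℕ)) ℝ :=
  ∑ A ∈ P.support, monomial A (coeff A P * 2 ^ wtj j A)

lemma coeff_scaleP {n : ℕ} (j : Fin n) (P : MvPolynomial (Fin n × (Fin n → ℕ)) ℝ) (A) :
    coeff A (scaleP j P) = coeff A P * 2 ^ wtj j A := by
  classical
  simp only [scaleP, coeff_sum, coeff_monomial, Finset.sum_ite_eq']
  split_ifs with h
  · rfl
  · rw [notMem_support_iff.mp h, zero_mul]

lemma pe_scaleP {n : ℕ} (j : Fin n) (P : MvPolynomial (Fin n × (Fin n → ℕ)) ℝ) (a) :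
    pe (scaleP j P) a = pe P (fun i α => a i α * 2 ^ α j) := by
  rw [pe, pe, eval_eq (f := P), scaleP, map_sum]
  refine Finset.sum_congr rfl fun A _ => ?_
  rw [eval_monomial, Finsupp.prod, mul_assoc]
  congr 1
  rw [wtj, ← Finset.prod_pow_eq_pow_sum, ← Finset.prod_mul_distrib]
  refine Finset.prod_congr rfl fun p _ => ?_
  rw [mul_pow, ← pow_mul, mul_comm, mul_comm (A p)]

lemma van_scaleP {n : ℕ} (d : Fin n → ℕ) (j : Fin n) (P : MvPolynomial (Fin n × (Fin n → ℕ)) ℝ)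
    (h : Van d P) : Van d (scaleP j P) := by
  intro a x hx ha
  rw [pe_scaleP]
  refine h _ (fun l => if l = j then x l / 2 else x l) ?_ fun i => ?_
  · obtain ⟨l, hl⟩ := Function.ne_iff.mp hx
    refine Function.ne_iff.mpr ⟨l, ?_⟩
    have : x l ≠ 0 := hl
    split_ifs <;> simp [this]
  · rw [← ha i, evRow_apply, evRow_apply]
    refine Finset.sum_congr rfl fun α _ => ?_
    rw [mul_assoc]
    congr 1
    rw [← Finset.mul_prod_erase _ _ (Finset.mem_univ j),
      ← Finset.mul_prod_erase _ (fun l => x l ^ α l) (Finset.mem_univ j), ← mul_assoc]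
    congr 1
    · simp only [if_true]; rw [← mul_pow]; congr 1; ring
    · refine Finset.prod_congr rfl fun l hl => ?_
      rw [if_neg (Finset.ne_of_mem_erase hl)]

lemma deg_scaleP {n : ℕ} (δ : Fin n → ℕ) (j : Fin n) (P : MvPolynomial (Fin n × (Fin n → ℕ)) ℝ)
    (h : DegB δ P) : DegB δ (scaleP j P) := by
  intro A hA
  rw [mem_support_iff, coeff_scaleP] at hA
  exact h A (mem_support_iff.mpr (left_ne_zero_of_mul hA))

def swp {n : ℕ} (j l : Fin n) : (Fin n × (Fin n → ℕ)) → (Fin n × (Fin n → ℕ)) :=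
  fun p => (p.1, fun i => p.2 (Equiv.swap j l i))

lemma swp_swp {n : ℕ} (j l : Fin n) (p) : swp j l (swp j l p) = p := by
  simp [swp]

lemma swp_inj {n : ℕ} (j l : Fin n) : Function.Injective (swp j l) :=
  Function.LeftInverse.injective (swp_swp j l)

lemma van_swp {n : ℕ} (d : Fin n → ℕ) (j l : Fin n) (P : MvPolynomial (Fin n × (Fin n → ℕ)) ℝ)
    (h : Van d P) : Van d (rename (swp j l) P) := by
  intro a x hx ha
  rw [pe, eval_rename]
  refine h (fun i α => a i (fun m => α (Equiv.swap j l m))) (fun i => x (Equiv.swap j l i)) ?_ ?_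
  · intro h0
    apply hx
    ext i
    simpa using congrFun h0 (Equiv.swap j l i)
  · intro i
    rw [← ha i, evRow_apply, evRow_apply]
    refine Finset.sum_bij' (fun α _ m => α (Equiv.swap j l m)) (fun α _ m => α (Equiv.swap j l m))
      ?_ ?_ ?_ ?_ ?_
    · intro α hα
      rw [Finset.Nat.mem_antidiagonalTuple] at hα ⊢
      rw [← hα]; exact Equiv.sum_comp (Equiv.swap j l) α
    · intro α hα
      rw [Finset.Nat.mem_antidiagonalTuple] at hα ⊢
      rw [← hα]; exact Equiv.sum_comp (Equiv.swap j l) α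
    · intro α _; simp
    · intro α _; simp
    · intro α _
      congr 1
      rw [← Equiv.prod_comp (Equiv.swap j l)]
      simp

lemma deg_swp {n : ℕ} (δ : Fin n → ℕ) (j l : Fin n) (P : MvPolynomial (Fin n × (Fin n → ℕ)) ℝ)
    (h : DegB δ P) : DegB δ (rename (swp j l) P) := by
  classical
  intro A hA i
  rw [support_rename_of_injective (swp_inj j l), Finset.mem_image] at hA
  obtain ⟨B, hB, rfl⟩ := hA
  rw [← h B hB i]
  exact Finsupp.sum_mapDomain_index_inj (s := B) (h := fun p m => if p.1 = i then m else 0)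
    (swp_inj j l)

lemma wtj_swp {n : ℕ} (j l : Fin n) (A : (Fin n × (Fin n → ℕ)) →₀ ℕ) :
    wtj j (A.mapDomain (swp j l)) = wtj l A := by
  have := Finsupp.sum_mapDomain_index_inj (s := A) (h := fun p m => m * p.2 j) (swp_inj j l)
  simpa [Finsupp.sum, wtj, swp] using this

lemma wtj_eq {n : ℕ} (d : Fin n → ℕ) (hd : ∀ i, 1 ≤ d i)
    (P : MvPolynomial (Fin n × (Fin n → ℕ)) ℝ) (hP : Van d P)
    (hP' : DegB (fun i => ∏ j ∈ Finset.univ.erase i, d j) P) (A) (hA : coeff A P ≠ 0)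
    (j l : Fin n) : wtj j A = wtj l A := by
  have hP0 : P ≠ 0 := by rintro rfl; simp at hA
  obtain ⟨c, hc⟩ := proportional d hd P _ hP hP' (van_scaleP d j P hP) (deg_scaleP _ j P hP') hP0
  have key : ∀ B, coeff B P ≠ 0 → (2 : ℝ) ^ wtj j B = c := by
    intro B hB
    have := hc B
    rw [coeff_scaleP, mul_comm] at this
    exact mul_right_cancel₀ hB this
  obtain ⟨c', hc'⟩ := proportional d hd P _ hP hP' (van_swp d j l P hP) (deg_swp _ j l P hP') hP0
  have h1 := hc' (A.mapDomain (swp j l))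
  rw [coeff_rename_mapDomain _ (swp_inj j l)] at h1
  have h2 : coeff (A.mapDomain (swp j l)) P ≠ 0 := by
    intro h; rw [h, mul_zero] at h1; exact hA h1
  have h3 := (key A hA).trans (key _ h2).symm
  rw [wtj_swp] at h3
  exact Nat.pow_right_injective (le_refl 2) (by exact_mod_cast h3)

end

/-- Let `δᵢ = ∏_{j ≠ i} d_j` be the canonical multidegree and let `R`
be an inertia form of degree zero for the format `(n, n, (d₁,…,d_n))` which is
multihomogeneous of multidegree `δ`. If `A` is an effective filling of the diagram
(`A (i,α) ≠ 0 → |α| = dᵢ`) with row sums `Rowᵢ(A) = δᵢ` whose weight vector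
`wt(A) = Σ_{(i,α)} A_{i,α}·α` is not `d₁⋯d_n·(1,…,1)`, then the coefficient of the
monomial `a^A` in `R` is zero. -/
theorem coeff_eq_zero_of_unbalanced_weight (n : ℕ) (hn : 1 ≤ n)
    (d : Fin n → ℕ) (hd : ∀ i, 1 ≤ d i)
    (R : MvPolynomial (Fin n × (Fin n → ℕ)) ℚ)
    (hIF : IsIFDZ n n d R)
    (hMH : MultiHom n n d (fun i => ∏ j ∈ Finset.univ.erase i, d j) R)
    (A : (Fin n × (Fin n → ℕ)) →₀ ℕ)
    (hAsupp : ∀ i α, A (i, α) ≠ 0 → ∑ j, α j = d i)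
    (hARow : ∀ i, (∑ p ∈ A.support, if p.1 = i then A p else 0)
      = ∏ j ∈ Finset.univ.erase i, d j)
    (hAwt : (fun j : Fin n => ∑ p ∈ A.support, A p * p.2 j) ≠ (fun _ => ∏ i, d i)) :
    MvPolynomial.coeff A R = 0 := by
  by_contra hne
  set P : MvPolynomial (Fin n × (Fin n → ℕ)) ℝ := map (algebraMap ℚ ℝ) R with hPdef
  have hV : Van d P := van_of_ifdz d R hIF
  have hD : DegB (fun i => ∏ j ∈ Finset.univ.erase i, d j) P := by
    intro B hB
    exact (hMH B (support_map_subset _ _ hB)).2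
  have hA : coeff A P ≠ 0 := by
    rw [hPdef, coeff_map]
    simpa using hne
  have heq := wtj_eq d hd P hV hD A hA
  have hsum : ∑ j, wtj j A = n * ∏ i, d i := by
    simp only [wtj]
    rw [Finset.sum_comm]
    have h1 : ∀ p ∈ A.support, ∑ j, A p * p.2 j = ∑ i, d i * (if p.1 = i then A p else 0) := by
      intro p hp
      rw [← Finset.mul_sum, hAsupp p.1 p.2 (Finsupp.mem_support_iff.mp hp)]
      simp [mul_comm]
    rw [Finset.sum_congr rfl h1, Finset.sum_comm]
    have h2 : ∀ i ∈ (Finset.univ : Finset (Fin n)),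
        ∑ p ∈ A.support, d i * (if p.1 = i then A p else 0) = ∏ i, d i := by
      intro i _
      rw [← Finset.mul_sum, hARow i, Finset.mul_prod_erase _ _ (Finset.mem_univ i)]
    rw [Finset.sum_congr rfl h2]
    simp
  apply hAwt
  ext j
  have h3 : ∑ l, wtj l A = n * wtj j A := by
    rw [Finset.sum_congr rfl (fun l _ => heq l j)]; simp
  rw [h3] at hsum
  exact Nat.eq_of_mul_eq_mul_left (by omega) hsum
end

section
/- Let n ≥ 2, d₁,…,d_n ≥ 1, and let δ ∈ ℕⁿ satisfy δ₁ < d₂⋯d_n. Let A ∈ EF(δ), set M := P_T(1_E A) and C := 1_{D∖E}A + M. Suppose M̃ : D → ℕ satisfies M̃ ≤ C pointwise and the weight condition wt(P_E(M̃)) − wt(M̃) = wt(P_E(M)) − wt(M) (an equality in ℤⁿ), and set Ã := C − M̃ + P_E(M̃). If Ã ≠ A, then Z(Ã) < Z(A). -/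
namespace ResultantKeyLemma

/-- The row `εᵢ* = dᵢ eᵢ` of the transversal matrix `ε` (monomial `xᵢ^{dᵢ}`). -/
def epsRow (n : ℕ) (d : Fin n → ℕ) (i : Fin n) : Fin n → ℕ :=
  fun j => if j = i then d i else 0

/-- The row `τᵢ* = (dᵢ − 1)e₁ + e_{i+1}` for `i < n`, and `τₙ* = dₙ e₁`, of the
transversal matrix `τ`. -/
def tauRow (n : ℕ) (d : Fin n → ℕ) (i : Fin n) : Fin n → ℕ :=
  fun j =>
    if i.val + 1 < n then
      (if j.val = 0 then d i - 1 else 0) + (if j.val = i.val + 1 then 1 else 0)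
    else
      (if j.val = 0 then d i else 0)

/-- The `i`-th row sum of a filling `A` of the diagram `D` (fillings are encoded as
functions on all pairs `(i, α)`; only the diagram cells, i.e. `α` with `|α| = dᵢ`,
matter). -/
def Row (n : ℕ) (d : Fin n → ℕ) (A : Fin n → (Fin n → ℕ) → ℕ) (i : Fin n) : ℕ :=
  ∑ α ∈ Finset.Nat.antidiagonalTuple n (d i), A i α

/-- The filling `1_E A`: restriction of `A` to the transversal `E`. -/
def oneE (n : ℕ) (d : Fin n → ℕ) (A : Fin n → (Fin n → ℕ) → ℕ) :
    Fin n → (Fin n → ℕ) → ℕ :=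
  fun i α => if α = epsRow n d i then A i α else 0

/-- The filling `1_{D∖E} A`: restriction of `A` to the complement of `E`. -/
def oneDE (n : ℕ) (d : Fin n → ℕ) (A : Fin n → (Fin n → ℕ) → ℕ) :
    Fin n → (Fin n → ℕ) → ℕ :=
  fun i α => if α = epsRow n d i then 0 else A i α

/-- The push `P_E(A)` of a filling to the transversal `E`. -/
def pushE (n : ℕ) (d : Fin n → ℕ) (A : Fin n → (Fin n → ℕ) → ℕ) :
    Fin n → (Fin n → ℕ) → ℕ :=
  fun i α => if α = epsRow n d i then Row n d A i else 0

/-- The push `P_T(A)` of a filling to the transversal `T`. -/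
def pushT (n : ℕ) (d : Fin n → ℕ) (A : Fin n → (Fin n → ℕ) → ℕ) :
    Fin n → (Fin n → ℕ) → ℕ :=
  fun i α => if α = tauRow n d i then Row n d A i else 0

/-- The weight vector `wt(A) = Σ_{(i,α) ∈ D} A_{i,α}·α`, valued in `ℤⁿ`. -/
def wtZ (n : ℕ) (d : Fin n → ℕ) (A : Fin n → (Fin n → ℕ) → ℕ) (j : Fin n) : ℤ :=
  ∑ i, ∑ α ∈ Finset.Nat.antidiagonalTuple n (d i), (A i α : ℤ) * (α j : ℤ)

/-- The counter `Z(A) = Σ_{(i,α) ∈ D∖(E∪T)} A_{i,α}`. -/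
def Zc (n : ℕ) (d : Fin n → ℕ) (A : Fin n → (Fin n → ℕ) → ℕ) : ℕ :=
  ∑ i, ∑ α ∈ Finset.Nat.antidiagonalTuple n (d i),
    if α = epsRow n d i ∨ α = tauRow n d i then 0 else A i α

theorem eps_mem (n : ℕ) (d : Fin n → ℕ) (i : Fin n) :
    epsRow n d i ∈ Finset.Nat.antidiagonalTuple n (d i) := by
  rw [Finset.Nat.mem_antidiagonalTuple]
  simp [epsRow]

theorem tau_mem (n : ℕ) (d : Fin n → ℕ) (hd : ∀ i, 1 ≤ d i) (i : Fin n) :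
    tauRow n d i ∈ Finset.Nat.antidiagonalTuple n (d i) := by
  rw [Finset.Nat.mem_antidiagonalTuple]
  have h0 : 0 < n := i.pos
  have e0 : ∀ c : ℕ, ∑ j : Fin n, (if j.val = 0 then c else 0) = c := by
    intro c
    rw [Finset.sum_eq_single (⟨0, h0⟩ : Fin n)]
    · simp
    · intro b _ hb
      rw [if_neg]
      intro h
      exact hb (Fin.ext h)
    · simp
  unfold tauRow
  by_cases h : i.val + 1 < n
  · simp only [h, if_true]
    rw [Finset.sum_add_distrib, e0]
    rw [Finset.sum_eq_single (⟨i.val + 1, h⟩ : Fin n)]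
    · have := hd i
      simp
      omega
    · intro b _ hb
      rw [if_neg]
      intro h
      exact hb (Fin.ext h)
    · simp
  · simp only [h, if_false]
    exact e0 _

theorem eps_ne_tau (n : ℕ) (hn : 2 ≤ n) (d : Fin n → ℕ) (hd : ∀ i, 1 ≤ d i) (i : Fin n) :
    tauRow n d i ≠ epsRow n d i := by
  intro h
  by_cases hi : i.val + 1 < n
  · have := congrFun h ⟨i.val + 1, hi⟩
    simp [tauRow, epsRow, hi, Fin.ext_iff] at this
  · have := congrFun h i
    have h1 := hd i
    have h2 : i.val ≠ 0 := by omega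
    simp [tauRow, epsRow, hi, h2] at this
    omega

theorem row_pushT (n : ℕ) (d : Fin n → ℕ) (hd : ∀ i, 1 ≤ d i)
    (B : Fin n → (Fin n → ℕ) → ℕ) (i : Fin n) :
    Row n d (pushT n d B) i = Row n d B i := by
  conv_lhs => unfold Row
  simp [pushT, tau_mem n d hd i]

theorem row_oneE (n : ℕ) (d : Fin n → ℕ)
    (B : Fin n → (Fin n → ℕ) → ℕ) (i : Fin n) :
    Row n d (oneE n d B) i = B i (epsRow n d i) := by
  simp [Row, oneE, eps_mem n d i]

theorem wt_pushE (n : ℕ) (d : Fin n → ℕ)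
    (B : Fin n → (Fin n → ℕ) → ℕ) (j : Fin n) :
    wtZ n d (pushE n d B) j = Row n d B j * d j := by
  unfold wtZ pushE
  have : ∀ i, ∑ α ∈ Finset.Nat.antidiagonalTuple n (d i),
      (((if α = epsRow n d i then Row n d B i else 0 : ℕ) : ℤ) * (α j : ℤ))
      = if j = i then (Row n d B j * d j : ℤ) else 0 := by
    intro i
    rw [Finset.sum_eq_single (epsRow n d i)]
    · by_cases h : j = i
      · subst h; simp [epsRow]
      · simp [epsRow, h]
    · intro b _ hb
      simp [hb]
    · intro h; exact absurd (eps_mem n d i) h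
  simp_rw [this]
  simp

theorem wt_pushT (n : ℕ) (d : Fin n → ℕ) (hd : ∀ i, 1 ≤ d i)
    (B : Fin n → (Fin n → ℕ) → ℕ) (k : ℕ) (hk : k + 1 < n) :
    wtZ n d (pushT n d B) ⟨k + 1, hk⟩ = Row n d B ⟨k, by omega⟩ := by
  unfold wtZ pushT
  have : ∀ i, ∑ α ∈ Finset.Nat.antidiagonalTuple n (d i),
      (((if α = tauRow n d i then Row n d B i else 0 : ℕ) : ℤ) * (α ⟨k + 1, hk⟩ : ℤ))
      = if (⟨k, by omega⟩ : Fin n) = i then (Row n d B ⟨k, by omega⟩ : ℤ) else 0 := by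
    intro i
    rw [Finset.sum_eq_single (tauRow n d i)]
    · by_cases h : (⟨k, by omega⟩ : Fin n) = i
      · subst h; simp [tauRow, hk]
      · have h' : ¬ k = i.val := fun h' => h (Fin.ext h')
        simp [tauRow, h, h']
    · intro b _ hb
      simp [hb]
    · intro h; exact absurd (tau_mem n d hd i) h
  simp_rw [this]
  simp

theorem chain_zero (n : ℕ) (hn : 0 < n) (d : Fin n → ℕ) (hd : ∀ i, 1 ≤ d i)
    (x : Fin n → ℤ)
    (hx : ∀ k (hk : k + 1 < n), x ⟨k, by omega⟩ = d ⟨k + 1, hk⟩ * x ⟨k + 1, hk⟩)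
    (hb : |x ⟨0, hn⟩| < ((∏ j ∈ Finset.univ.erase ⟨0, hn⟩, d j : ℕ) : ℤ)) :
    ∀ i, x i = 0 := by
  have key : ∀ k (hk : k < n), x ⟨0, hn⟩ =
      ((∏ j ∈ Finset.univ.filter (fun j : Fin n => 0 < j.val ∧ j.val ≤ k), d j : ℕ) : ℤ)
        * x ⟨k, hk⟩ := by
    intro k
    induction k with
    | zero =>
      intro hk
      rw [Finset.filter_false_of_mem]
      · simp
      · intro j _; omega
    | succ k ih =>
      intro hk
      rw [ih (by omega), hx k hk]
      have : Finset.univ.filter (fun j : Fin n => 0 < j.val ∧ j.val ≤ k + 1)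
          = insert ⟨k + 1, hk⟩
            (Finset.univ.filter (fun j : Fin n => 0 < j.val ∧ j.val ≤ k)) := by
        ext j
        simp [Fin.ext_iff]
        omega
      rw [this, Finset.prod_insert (by simp)]
      push_cast
      ring
  have hl := key (n - 1) (by omega)
  have he : Finset.univ.filter (fun j : Fin n => 0 < j.val ∧ j.val ≤ n - 1)
      = Finset.univ.erase ⟨0, hn⟩ := by
    ext j
    simp [Fin.ext_iff]
    omega
  rw [he] at hl
  have h0 : x ⟨0, hn⟩ = 0 := Int.eq_zero_of_abs_lt_dvd ⟨_, hl⟩ hb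
  intro i
  have hi := key i.val i.isLt
  rw [h0] at hi
  rcases mul_eq_zero.mp hi.symm with h | h
  · exfalso
    have : 0 < ∏ j ∈ Finset.univ.filter (fun j : Fin n => 0 < j.val ∧ j.val ≤ i.val), d j :=
      Finset.prod_pos (fun j _ => hd j)
    omega
  · exact h

/-- key lemma. Let `δ ∈ ℕⁿ` with `δ₁ < d₂⋯d_n`, let `A ∈ EF(δ)`,
set `M := P_T(1_E A)` and `C := 1_{D∖E}A + M`. If `M̃ ≤ C` pointwise satisfies the
weight condition `wt(P_E(M̃)) − wt(M̃) = wt(P_E(M)) − wt(M)` in `ℤⁿ`, and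
`Ã := C − M̃ + P_E(M̃)` is different from `A`, then `Z(Ã) < Z(A)`. -/
theorem counter_drops (n : ℕ) (hn : 2 ≤ n) (d : Fin n → ℕ) (hd : ∀ i, 1 ≤ d i)
    (δ : Fin n → ℕ)
    (hδ : δ ⟨0, by omega⟩ < ∏ j ∈ Finset.univ.erase ⟨0, by omega⟩, d j)
    (A : Fin n → (Fin n → ℕ) → ℕ)
    (hAsupp : ∀ i α, A i α ≠ 0 → α ∈ Finset.Nat.antidiagonalTuple n (d i))
    (hARow : ∀ i, Row n d A i = δ i)
    (M' : Fin n → (Fin n → ℕ) → ℕ)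
    (hM'le : ∀ i α, M' i α ≤ oneDE n d A i α + pushT n d (oneE n d A) i α)
    (hwc : ∀ j, wtZ n d (pushE n d M') j - wtZ n d M' j
      = wtZ n d (pushE n d (pushT n d (oneE n d A))) j
        - wtZ n d (pushT n d (oneE n d A)) j)
    (hne : (fun i α =>
        oneDE n d A i α + pushT n d (oneE n d A) i α - M' i α + pushE n d M' i α) ≠ A) :
    Zc n d (fun i α =>
        oneDE n d A i α + pushT n d (oneE n d A) i α - M' i α + pushE n d M' i α)
      < Zc n d A := by
  have hdisj := eps_ne_tau n hn d hd
  have hsum : Zc n d (fun i α =>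
        oneDE n d A i α + pushT n d (oneE n d A) i α - M' i α + pushE n d M' i α)
      + Zc n d M' = Zc n d A := by
    unfold Zc
    rw [← Finset.sum_add_distrib]
    refine Finset.sum_congr rfl fun i _ => ?_
    rw [← Finset.sum_add_distrib]
    refine Finset.sum_congr rfl fun α _ => ?_
    have h := hM'le i α
    by_cases h1 : α = epsRow n d i
    · simp [h1]
    · by_cases h2 : α = tauRow n d i
      · simp [h2]
      · simp only [oneDE, pushT, pushE, h1, h2, if_false, or_self] at h ⊢
        omega
  by_contra hcon
  have hZ : Zc n d M' = 0 := by omega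
  apply hne
  have hMsupp : ∀ i α, α ≠ tauRow n d i → M' i α = 0 := by
    intro i α hα
    by_cases h1 : α = epsRow n d i
    · have h := hM'le i α
      simp only [oneDE, pushT, hα, if_false] at h
      rw [if_pos h1] at h
      omega
    by_cases hm : α ∈ Finset.Nat.antidiagonalTuple n (d i)
    · unfold Zc at hZ
      rw [Finset.sum_eq_zero_iff] at hZ
      have h := Finset.sum_eq_zero_iff.mp (hZ i (Finset.mem_univ i)) α hm
      simpa [h1, hα] using h
    · have h := hM'le i α
      have hA : A i α = 0 := by
        by_contra hA
        exact hm (hAsupp i α hA)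
      simp only [oneDE, pushT, h1, hα, if_false, hA] at h
      omega
  have hRow : ∀ i, Row n d M' i = M' i (tauRow n d i) := by
    intro i
    unfold Row
    rw [Finset.sum_eq_single (tauRow n d i)]
    · intro b _ hb
      exact hMsupp i b hb
    · intro h; exact absurd (tau_mem n d hd i) h
  have hM'T : pushT n d M' = M' := by
    funext i α
    by_cases h : α = tauRow n d i
    · subst h; simp [pushT, hRow]
    · simp [pushT, h, hMsupp i α h]
  have hx := chain_zero n (by omega) d hd
    (fun i => (Row n d M' i : ℤ) - A i (epsRow n d i)) ?_ ?_
  · have hx' : ∀ i, M' i (tauRow n d i) = A i (epsRow n d i) := by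
      intro i
      have := hx i
      rw [hRow] at this
      omega
    funext i α
    by_cases h1 : α = epsRow n d i
    · subst h1
      have hne' := (hdisj i).symm
      simp [oneDE, pushT, pushE, hRow, hx', hne', hMsupp i _ hne']
    · by_cases h2 : α = tauRow n d i
      · subst h2
        simp [oneDE, pushT, pushE, h1, hx', row_oneE]
      · simp [oneDE, pushT, pushE, h1, h2, hMsupp i α h2]
  · intro k hk
    have h := hwc ⟨k + 1, hk⟩
    have e := wt_pushT n d hd M' k hk
    rw [hM'T] at e
    rw [wt_pushE, wt_pushE, e, wt_pushT n d hd _ k hk, row_pushT n d hd, row_oneE, row_oneE] at h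
    linarith
  · have h1 := hM'le ⟨0, by omega⟩ (tauRow n d ⟨0, by omega⟩)
    rw [← hRow] at h1
    simp only [oneDE, pushT, hdisj, if_false, if_true, row_oneE] at h1
    have h2 : A ⟨0, by omega⟩ (tauRow n d ⟨0, by omega⟩)
        + A ⟨0, by omega⟩ (epsRow n d ⟨0, by omega⟩) ≤ δ ⟨0, by omega⟩ := by
      rw [← hARow, Row, ← Finset.sum_pair (hdisj _)]
      apply Finset.sum_le_sum_of_subset
      intro a ha
      simp only [Finset.mem_insert, Finset.mem_singleton] at ha
      rcases ha with rfl | rfl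
      · exact tau_mem n d hd _
      · exact eps_mem n d _
    rw [abs_lt]
    constructor  <;> omega

end ResultantKeyLemma
end

section
/- Let n ≥ 2, d₁,…,d_n ≥ 1, with canonical multidegree δ_i := ∏_{j≠i} d_j. Let R ∈ ℚ[a] be an inertia form of degree zero for the format (n,n,(d₁,…,d_n)), multihomogeneous of multidegree (δ₁,…,δ_n), and for each filling A write r_A for the coefficient of ∏_{(i,α)∈D} a_{i,α}^{A_{i,α}} in R. Then for every A ∈ REF ∖ FRR: r_A = Σ_{Ã ∈ REF, Ã ≺ A} 𝒯(A,Ã)·r_Ã. -/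
open MvPolynomial

namespace ResultantMarkov

/-- Variables of the big polynomial ring `ℚ[a, x]`. -/
abbrev Var (n : ℕ) := (Fin n × (Fin n → ℕ)) ⊕ Fin n

/-- The generic form `Fᵢ = Σ_{|α| = dᵢ} a_{i,α} x^α`. -/
noncomputable def genForm (n : ℕ) (d : Fin n → ℕ) (i : Fin n) :
    MvPolynomial (Var n) ℚ :=
  ∑ α ∈ Finset.Nat.antidiagonalTuple n (d i),
    X (Sum.inl (i, α)) * ∏ j, (X (Sum.inr j)) ^ α j

/-- `R` satisfies Bézout(γ): `x^γ · R` is in the ideal generated by `F₁, …, F_n`. -/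
def Bezout (n : ℕ) (d : Fin n → ℕ)
    (R : MvPolynomial (Fin n × (Fin n → ℕ)) ℚ) (γ : Fin n → ℕ) : Prop :=
  (∏ j, (X (Sum.inr j) : MvPolynomial (Var n) ℚ) ^ γ j) * rename Sum.inl R
    ∈ Ideal.span (Set.range (genForm n d))

/-- `R` is an inertia form of degree zero. -/
def IsIFDZ (n : ℕ) (d : Fin n → ℕ)
    (R : MvPolynomial (Fin n × (Fin n → ℕ)) ℚ) : Prop :=
  ∃ q : ℕ, ∀ γ : Fin n → ℕ, ∑ j, γ j = q → Bezout n d R γ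

/-- `R` is multihomogeneous of multidegree `δ`. -/
def MultiHom (n : ℕ) (d : Fin n → ℕ) (δ : Fin n → ℕ)
    (R : MvPolynomial (Fin n × (Fin n → ℕ)) ℚ) : Prop :=
  ∀ A ∈ R.support,
    (∀ i α, A (i, α) ≠ 0 → ∑ j, α j = d i) ∧
    (∀ i, (∑ p ∈ A.support, if p.1 = i then A p else 0) = δ i)

/-- The diagram `D`: cells `(i, α)` with `|α| = dᵢ`, as a finite type. -/
abbrev DiagT (n : ℕ) (d : Fin n → ℕ) :=
  Σ i : Fin n, {α : Fin n → ℕ // α ∈ Finset.Nat.antidiagonalTuple n (d i)}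

/-- The canonical multidegree `δᵢ = ∏_{j ≠ i} d_j`. -/
def canonδ (n : ℕ) (d : Fin n → ℕ) (i : Fin n) : ℕ :=
  ∏ j ∈ Finset.univ.erase i, d j

/-- The row `εᵢ* = dᵢ eᵢ` of the transversal `E`. -/
def epsRow (n : ℕ) (d : Fin n → ℕ) (i : Fin n) : Fin n → ℕ :=
  fun j => if j = i then d i else 0

/-- The row `τᵢ* = (dᵢ − 1)e₁ + e_{i+1}` for `i < n`, and `τₙ* = dₙ e₁`, of the
transversal `T`. -/
def tauRow (n : ℕ) (d : Fin n → ℕ) (i : Fin n) : Fin n → ℕ :=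
  fun j =>
    if i.val + 1 < n then
      (if j.val = 0 then d i - 1 else 0) + (if j.val = i.val + 1 then 1 else 0)
    else
      (if j.val = 0 then d i else 0)

/-- The cell `(i, dᵢ eᵢ)` of the transversal `E`, as an element of the diagram. -/
def Ecell (n : ℕ) (d : Fin n → ℕ) (i : Fin n) : DiagT n d :=
  ⟨i, ⟨epsRow n d i, by
    rw [Finset.Nat.mem_antidiagonalTuple]
    simp [epsRow]⟩⟩

/-- The `i`-th row sum of a filling. -/
def Row (n : ℕ) (d : Fin n → ℕ) (A : DiagT n d → ℕ) (i : Fin n) : ℕ :=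
  ∑ c : DiagT n d, if c.1 = i then A c else 0

/-- The weight vector `wt(A) = Σ_{(i,α) ∈ D} A_{i,α}·α`. -/
def wt (n : ℕ) (d : Fin n → ℕ) (A : DiagT n d → ℕ) (j : Fin n) : ℕ :=
  ∑ c : DiagT n d, A c * (c.2 : Fin n → ℕ) j

/-- `REF`: fillings with row sums `δᵢ = ∏_{j≠i} d_j` and balanced weight
`d₁⋯d_n·(1,…,1)` (the fillings relevant to the resultant), as a `Finset`. -/
def REF (n : ℕ) (d : Fin n → ℕ) : Finset (DiagT n d → ℕ) :=
  (Fintype.piFinset (fun c : DiagT n d => Finset.range (canonδ n d c.1 + 1))).filter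
    (fun A => (∀ i, Row n d A i = canonδ n d i) ∧ (∀ j, wt n d A j = ∏ i, d i))

/-- `A` is first-row-reduced: `A_{1, d₁e₁} = δ₁`. -/
def isFRR (n : ℕ) (d : Fin n → ℕ) (hn : 0 < n) (A : DiagT n d → ℕ) : Prop :=
  A (Ecell n d ⟨0, hn⟩) = canonδ n d ⟨0, hn⟩

instance (n : ℕ) (d : Fin n → ℕ) (hn : 0 < n) :
    DecidablePred (isFRR n d hn) := fun A => by unfold isFRR; infer_instance

/-- The counter `Z(A) = Σ_{(i,α) ∈ D∖(E∪T)} A_{i,α}`. -/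
def Zc (n : ℕ) (d : Fin n → ℕ) (A : DiagT n d → ℕ) : ℕ :=
  ∑ c : DiagT n d,
    if (c.2 : Fin n → ℕ) = epsRow n d c.1 ∨ (c.2 : Fin n → ℕ) = tauRow n d c.1
    then 0 else A c

/-- The strict partial order `Ã ≺ A` on `REF`. -/
def prec (n : ℕ) (d : Fin n → ℕ) (hn : 0 < n) (A' A : DiagT n d → ℕ) : Prop :=
  (isFRR n d hn A' ∧ ¬ isFRR n d hn A) ∨
  (¬ isFRR n d hn A' ∧ ¬ isFRR n d hn A ∧ Zc n d A' < Zc n d A)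

instance (n : ℕ) (d : Fin n → ℕ) (hn : 0 < n) (A : DiagT n d → ℕ) :
    DecidablePred (fun A' => prec n d hn A' A) := fun A' => by
  unfold prec; infer_instance

/-- `1_{D∖E} A`: restriction of a filling to the complement of `E`. -/
def oneDE (n : ℕ) (d : Fin n → ℕ) (A : DiagT n d → ℕ) : DiagT n d → ℕ :=
  fun c => if (c.2 : Fin n → ℕ) = epsRow n d c.1 then 0 else A c

/-- `1_E A`: restriction of a filling to `E`. -/
def oneE (n : ℕ) (d : Fin n → ℕ) (A : DiagT n d → ℕ) : DiagT n d → ℕ :=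
  fun c => if (c.2 : Fin n → ℕ) = epsRow n d c.1 then A c else 0

/-- `P_T(A)`: push of a filling to the transversal `T`. -/
def pushT (n : ℕ) (d : Fin n → ℕ) (A : DiagT n d → ℕ) : DiagT n d → ℕ :=
  fun c => if (c.2 : Fin n → ℕ) = tauRow n d c.1 then Row n d A c.1 else 0

/-- The filling `B = 1_{D∖E}A − 1_{D∖E}Ã + P_T(1_E A)` (for `Ã` admissible this is
nonnegative, supported on `D∖E`, with `i`-th row sum `Ã_{i, dᵢeᵢ}`). -/
def Bfill (n : ℕ) (d : Fin n → ℕ) (A A' : DiagT n d → ℕ) : DiagT n d → ℕ :=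
  fun c => oneDE n d A c + pushT n d (oneE n d A) c - oneDE n d A' c

/-- The transition matrix element `𝒯(A, Ã)`: zero unless
`1_{D∖E}Ã ≤ 1_{D∖E}A + P_T(1_E A)` pointwise, in which case it is
`(−1)^{1 + Σᵢ A_{i,dᵢeᵢ} + Σᵢ Ã_{i,dᵢeᵢ}} · ∏ᵢ (Ã_{i,dᵢeᵢ})! / ∏_{(i,α) ∈ D∖E} B_{i,α}!`,
a signed product of multinomial coefficients. -/
def transT (n : ℕ) (d : Fin n → ℕ) (A A' : DiagT n d → ℕ) : ℚ :=
  if ∀ c : DiagT n d, oneDE n d A' c ≤ oneDE n d A c + pushT n d (oneE n d A) c then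
    (-1 : ℚ) ^ (1 + (∑ i, A (Ecell n d i)) + (∑ i, A' (Ecell n d i))) *
      ∏ i : Fin n,
        ((A' (Ecell n d i)).factorial : ℚ) /
          (∏ c ∈ Finset.univ.filter
              (fun c : DiagT n d =>
                c.1 = i ∧ (c.2 : Fin n → ℕ) ≠ epsRow n d c.1),
            ((Bfill n d A A' c).factorial : ℚ))
  else 0

/-- The exponent Finsupp `a ↦ A` of the monomial `a^A` attached to a filling `A`. -/
noncomputable def expOf (n : ℕ) (d : Fin n → ℕ) (A : DiagT n d → ℕ) :
    (Fin n × (Fin n → ℕ)) →₀ ℕ :=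
  ∑ c : DiagT n d, Finsupp.single (c.1, (c.2 : Fin n → ℕ)) (A c)

section Helpers

variable {n : ℕ} {d : Fin n → ℕ}

/-- Cells of row `i` off `E`. -/
def Sx (n : ℕ) (d : Fin n → ℕ) (i : Fin n) : Finset (DiagT n d) :=
  Finset.univ.filter (fun c : DiagT n d => c.1 = i ∧ (c.2 : Fin n → ℕ) ≠ epsRow n d c.1)

theorem mem_Sx (i : Fin n) (c : DiagT n d) :
    c ∈ Sx n d i ↔ c.1 = i ∧ (c.2 : Fin n → ℕ) ≠ epsRow n d c.1 := by
  simp [Sx]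

theorem Ecell_notMem (i j : Fin n) : Ecell n d i ∉ Sx n d j := by
  rw [mem_Sx]; simp [Ecell]

theorem eq_Ecell (c : DiagT n d) (h : (c.2 : Fin n → ℕ) = epsRow n d c.1) :
    c = Ecell n d c.1 := by
  obtain ⟨i, α, hα⟩ := c
  simp only at h
  subst h
  rfl

theorem row_filter (i : Fin n) :
    (Finset.univ.filter (fun c : DiagT n d => c.1 = i)) = insert (Ecell n d i) (Sx n d i) := by
  ext c
  simp only [Finset.mem_filter, Finset.mem_univ, true_and, Finset.mem_insert, mem_Sx]
  constructor
  · intro h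
    by_cases hc : (c.2 : Fin n → ℕ) = epsRow n d c.1
    · left; rw [← h]; exact eq_Ecell c hc
    · right; exact ⟨h, hc⟩
  · rintro (h | h)
    · rw [h]; rfl
    · exact h.1

theorem row_prod {M : Type*} [CommMonoid M] (f : DiagT n d → M) (i : Fin n) :
    ∏ c ∈ Finset.univ.filter (fun c : DiagT n d => c.1 = i), f c
      = f (Ecell n d i) * ∏ c ∈ Sx n d i, f c := by
  rw [row_filter, Finset.prod_insert (Ecell_notMem i i)]

theorem row_sum {M : Type*} [AddCommMonoid M] (f : DiagT n d → M) (i : Fin n) :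
    ∑ c ∈ Finset.univ.filter (fun c : DiagT n d => c.1 = i), f c
      = f (Ecell n d i) + ∑ c ∈ Sx n d i, f c := by
  rw [row_filter, Finset.sum_insert (Ecell_notMem i i)]

theorem all_prod {M : Type*} [CommMonoid M] (f : DiagT n d → M) :
    ∏ c, f c = ∏ i, (f (Ecell n d i) * ∏ c ∈ Sx n d i, f c) := by
  rw [← Finset.prod_fiberwise Finset.univ (fun c : DiagT n d => c.1) f]
  exact Finset.prod_congr rfl (fun i _ => row_prod f i)

theorem all_sum {M : Type*} [AddCommMonoid M] (f : DiagT n d → M) :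
    ∑ c, f c = ∑ i, (f (Ecell n d i) + ∑ c ∈ Sx n d i, f c) := by
  rw [← Finset.sum_fiberwise Finset.univ (fun c : DiagT n d => c.1) f]
  exact Finset.sum_congr rfl (fun i _ => row_sum f i)

theorem Row_eq (A : DiagT n d → ℕ) (i : Fin n) :
    Row n d A i = A (Ecell n d i) + ∑ c ∈ Sx n d i, A c := by
  rw [← row_sum, Finset.sum_filter]; rfl

/-- Monomials of the target ring. -/
noncomputable def mon (B : DiagT n d → ℕ) (w : Fin n → ℕ) :
    MvPolynomial (DiagT n d ⊕ Fin n) ℚ :=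
  monomial (Finsupp.equivFunOnFinite.symm (Sum.elim B w)) 1

theorem mon_mul (B B' : DiagT n d → ℕ) (w w' : Fin n → ℕ) :
    mon B w * mon B' w' = mon (B + B') (w + w') := by
  unfold mon
  rw [monomial_mul, one_mul]
  refine congrArg (fun m => monomial m (1 : ℚ)) ?_
  ext x
  rcases x with x | x <;> simp

theorem mon_zero : mon (0 : DiagT n d → ℕ) (0 : Fin n → ℕ) = 1 := by
  unfold mon
  rw [show Finsupp.equivFunOnFinite.symm (Sum.elim (0 : DiagT n d → ℕ) (0 : Fin n → ℕ)) = 0 by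
    ext x; rcases x with x | x <;> simp]
  rfl

theorem mon_pow (B : DiagT n d → ℕ) (w : Fin n → ℕ) (k : ℕ) :
    mon B w ^ k = mon (k • B) (k • w) := by
  induction k with
  | zero => simp [mon_zero]
  | succ k ih => rw [pow_succ, ih, mon_mul, succ_nsmul, succ_nsmul]

theorem mon_prod {ι : Type*} (s : Finset ι) (B : ι → DiagT n d → ℕ) (w : ι → Fin n → ℕ) :
    ∏ i ∈ s, mon (B i) (w i) = mon (∑ i ∈ s, B i) (∑ i ∈ s, w i) := by
  classical
  induction s using Finset.induction_on with
  | empty => simp [mon_zero]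
  | insert a s ha ih => rw [Finset.prod_insert ha, ih, mon_mul, Finset.sum_insert ha,
      Finset.sum_insert ha]

theorem coeff_mon (B C : DiagT n d → ℕ) (w v : Fin n → ℕ) :
    coeff (Finsupp.equivFunOnFinite.symm (Sum.elim C v)) (mon B w)
      = if B = C ∧ w = v then 1 else 0 := by
  unfold mon
  rw [coeff_monomial]
  congr 1
  rw [Equiv.apply_eq_iff_eq, eq_iff_iff]
  constructor
  · intro h
    exact ⟨funext fun c => congrFun h (Sum.inl c), funext fun c => congrFun h (Sum.inr c)⟩
  · rintro ⟨rfl, rfl⟩; rfl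

/-- The term `a_c x^α`. -/
noncomputable def yv (c : DiagT n d) : MvPolynomial (DiagT n d ⊕ Fin n) ℚ :=
  mon (Pi.single c 1) c.2

/-- The image of the variable `a_c`. -/
noncomputable def psi (c : DiagT n d) : MvPolynomial (DiagT n d ⊕ Fin n) ℚ :=
  if (c.2 : Fin n → ℕ) = epsRow n d c.1 then - ∑ c' ∈ Sx n d c.1, yv c'
  else mon (Pi.single c 1) (epsRow n d c.1)

open Classical in
/-- The substitution. -/
noncomputable def phi (n : ℕ) (d : Fin n → ℕ) :
    MvPolynomial (Var n) ℚ →ₐ[ℚ] MvPolynomial (DiagT n d ⊕ Fin n) ℚ :=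
  aeval (Sum.elim
    (fun p => if h : p.2 ∈ Finset.Nat.antidiagonalTuple n (d p.1) then psi ⟨p.1, p.2, h⟩ else 0)
    (fun j => mon 0 (Pi.single j 1)))

theorem phi_inl (c : DiagT n d) : phi n d (X (Sum.inl (c.1, (c.2 : Fin n → ℕ)))) = psi c := by
  unfold phi
  rw [aeval_X, Sum.elim_inl, dif_pos c.2.2]

theorem phi_xmon (w : Fin n → ℕ) :
    phi n d (∏ j, X (Sum.inr j) ^ w j) = mon 0 w := by
  unfold phi
  simp only [map_prod, map_pow, aeval_X, Sum.elim_inr, mon_pow, mon_prod]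
  congr 1
  · simp
  · ext j; simp [Finset.sum_apply, Pi.single_apply]

theorem phi_genForm (i : Fin n) : phi n d (genForm n d i) = 0 := by
  unfold genForm
  rw [map_sum]
  have h1 : ∑ α ∈ Finset.Nat.antidiagonalTuple n (d i),
      phi n d (X (Sum.inl (i, α)) * ∏ j, X (Sum.inr j) ^ α j)
      = ∑ c ∈ Finset.univ.filter (fun c : DiagT n d => c.1 = i), psi c * mon 0 c.2 := by
    refine Finset.sum_bij' (fun α hα => (⟨i, α, hα⟩ : DiagT n d)) (fun c _ => c.2) ?_ ?_ ?_ ?_ ?_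
    · intro α hα; simp
    · intro c hc
      simp only [Finset.mem_filter, Finset.mem_univ, true_and] at hc
      rw [← hc]; exact c.2.2
    · intro α hα; rfl
    · intro c hc
      simp only [Finset.mem_filter, Finset.mem_univ, true_and] at hc
      subst hc; rfl
    · intro α hα
      rw [map_mul, phi_xmon, ← phi_inl]
  rw [h1, row_sum]
  have h2 : ∀ c ∈ Sx n d i, psi c * mon 0 c.2 = yv c * mon 0 (epsRow n d i) := by
    intro c hc
    rw [mem_Sx] at hc
    unfold psi yv
    rw [if_neg hc.2, mon_mul, mon_mul, ← congrArg (epsRow n d) hc.1, add_comm (epsRow n d c.1)]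
  rw [Finset.sum_congr rfl h2, ← Finset.sum_mul]
  have h3 : psi (Ecell n d i) = - ∑ c' ∈ Sx n d i, yv c' := by
    unfold psi; exact if_pos rfl
  rw [h3]
  change _ * mon 0 (epsRow n d i) + _ = 0
  ring

theorem phi_R (hn : 0 < n) (R : MvPolynomial (Fin n × (Fin n → ℕ)) ℚ)
    (hIF : IsIFDZ n d R) : phi n d (rename Sum.inl R) = 0 := by
  obtain ⟨q, hq⟩ := hIF
  have h := hq (Pi.single ⟨0, hn⟩ q) (by simp)
  unfold Bezout at h
  have h2 : Ideal.span (Set.range (genForm n d)) ≤ RingHom.ker (phi n d) := by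
    rw [Ideal.span_le]
    rintro _ ⟨i, rfl⟩
    exact phi_genForm i
  have h3 := h2 h
  rw [RingHom.mem_ker, map_mul, phi_xmon] at h3
  rcases mul_eq_zero.mp h3 with h4 | h4
  · exfalso
    unfold mon at h4
    rw [monomial_eq_zero] at h4
    exact one_ne_zero h4
  · exact h4

theorem phi_monomial (A : DiagT n d → ℕ) (r : ℚ) :
    phi n d (rename Sum.inl (monomial (expOf n d A) r)) = C r * ∏ c, psi c ^ A c := by
  rw [← mul_one r, ← C_mul_monomial, mul_one, map_mul, map_mul]
  congr 1
  · rw [rename_C]; exact (phi n d).commutes r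
  · unfold expOf
    rw [monomial_sum_one, map_prod, map_prod]
    refine Finset.prod_congr rfl fun c _ => ?_
    rw [← X_pow_eq_monomial, map_pow, map_pow, rename_X, phi_inl]

theorem expOf_apply (A : DiagT n d → ℕ) (c : DiagT n d) :
    expOf n d A (c.1, (c.2 : Fin n → ℕ)) = A c := by
  unfold expOf
  rw [Finsupp.finsetSum_apply, Finset.sum_eq_single c]
  · simp
  · intro b _ hb
    rw [Finsupp.single_apply, if_neg]
    intro h
    apply hb
    obtain ⟨i, α, hα⟩ := c
    obtain ⟨j, β, hβ⟩ := b
    simp only [Prod.mk.injEq] at h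
    obtain ⟨rfl, rfl⟩ := h
    rfl
  · simp

theorem expOf_apply_not (A : DiagT n d → ℕ) (i : Fin n) (α : Fin n → ℕ)
    (h : α ∉ Finset.Nat.antidiagonalTuple n (d i)) : expOf n d A (i, α) = 0 := by
  unfold expOf
  rw [Finsupp.finsetSum_apply]
  refine Finset.sum_eq_zero fun c _ => ?_
  rw [Finsupp.single_apply, if_neg]
  intro h'
  simp only [Prod.mk.injEq] at h'
  obtain ⟨rfl, rfl⟩ := h'
  exact h c.2.2

theorem expOf_inj : Function.Injective (expOf n d) := by
  intro A B h
  funext c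
  rw [← expOf_apply A c, h, expOf_apply]

/-- Fillings with the canonical row sums. -/
def GF (n : ℕ) (d : Fin n → ℕ) : Finset (DiagT n d → ℕ) :=
  (Fintype.piFinset (fun c : DiagT n d => Finset.range (canonδ n d c.1 + 1))).filter
    (fun A => ∀ i, Row n d A i = canonδ n d i)

theorem le_Row (A : DiagT n d → ℕ) (c : DiagT n d) : A c ≤ Row n d A c.1 := by
  unfold Row
  refine le_trans ?_ (Finset.single_le_sum (f := fun b : DiagT n d => if b.1 = c.1 then A b else 0)
    (fun _ _ => Nat.zero_le _) (Finset.mem_univ c))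
  simp

theorem mem_GF (A : DiagT n d → ℕ) : A ∈ GF n d ↔ ∀ i, Row n d A i = canonδ n d i := by
  unfold GF
  rw [Finset.mem_filter, and_iff_right_iff_imp]
  intro h
  rw [Fintype.mem_piFinset]
  intro c
  rw [Finset.mem_range, ← h]
  exact Nat.lt_succ_of_le (le_Row A c)

theorem mem_REF (A : DiagT n d → ℕ) : A ∈ REF n d ↔
    (∀ i, Row n d A i = canonδ n d i) ∧ (∀ j, wt n d A j = ∏ i, d i) := by
  rw [← mem_GF]
  unfold REF GF
  simp only [Finset.mem_filter, and_assoc]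

theorem support_sub (R : MvPolynomial (Fin n × (Fin n → ℕ)) ℚ)
    (hMH : MultiHom n d (canonδ n d) R) (m) (hm : m ∈ R.support) :
    ∃ A ∈ GF n d, expOf n d A = m := by
  obtain ⟨h1, h2⟩ := hMH m hm
  have key : expOf n d (fun c => m (c.1, (c.2 : Fin n → ℕ))) = m := by
    ext ⟨i, α⟩
    by_cases h : α ∈ Finset.Nat.antidiagonalTuple n (d i)
    · exact expOf_apply _ (⟨i, α, h⟩ : DiagT n d)
    · rw [expOf_apply_not _ _ _ h]
      by_contra h3
      apply h
      rw [Finset.Nat.mem_antidiagonalTuple]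
      exact h1 i α (Ne.symm h3)
  refine ⟨_, ?_, key⟩
  rw [mem_GF]
  intro i
  rw [← h2 i]
  unfold Row
  symm
  refine Finset.sum_bij_ne_zero
    (fun p hp hne => (⟨p.1, p.2, by
      rw [Finset.Nat.mem_antidiagonalTuple]
      exact h1 _ _ (Finsupp.mem_support_iff.mp hp)⟩ : DiagT n d)) ?_ ?_ ?_ ?_
  · intros; simp
  · rintro ⟨i1, a1⟩ _ _ ⟨i2, a2⟩ _ _ h
    simp only [Sigma.mk.injEq] at h
    obtain ⟨rfl, h⟩ := h
    simpa using h
  · intro c _ hc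
    refine ⟨(c.1, c.2), ?_, hc, rfl⟩
    rw [Finsupp.mem_support_iff]
    intro h0
    simp only [h0, ite_self, ne_eq, not_true_eq_false] at hc
  · intros; rfl

theorem R_eq (R : MvPolynomial (Fin n × (Fin n → ℕ)) ℚ)
    (hMH : MultiHom n d (canonδ n d) R) :
    R = ∑ A ∈ GF n d, monomial (expOf n d A) (coeff (expOf n d A) R) := by
  classical
  conv_lhs => rw [R.as_sum]
  rw [← Finset.sum_image (s := GF n d) (g := expOf n d)
    (f := fun m => monomial m (coeff m R)) (expOf_inj.injOn)]
  apply Finset.sum_subset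
  · intro m hm
    obtain ⟨A, hA, rfl⟩ := support_sub R hMH m hm
    exact Finset.mem_image_of_mem _ hA
  · intro m _ hm
    rw [notMem_support_iff.mp hm, monomial_zero]

theorem prod_psi (A : DiagT n d → ℕ) :
    ∏ c, psi c ^ A c = C ((-1) ^ (∑ i, A (Ecell n d i))) *
      ∑ p ∈ Fintype.piFinset (fun i => (Sx n d i).piAntidiag (A (Ecell n d i))),
        C (∏ i, (Nat.multinomial (Sx n d i) (p i) : ℚ)) *
        mon (∑ i, ∑ c ∈ Sx n d i, (p i c + A c) • Pi.single c 1)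
          (∑ i, ∑ c ∈ Sx n d i, (p i c • (c.2 : Fin n → ℕ) + A c • epsRow n d i)) := by
  rw [all_prod]
  have h1 : ∀ i, psi (Ecell n d i) ^ A (Ecell n d i) * ∏ c ∈ Sx n d i, psi c ^ A c
      = C ((-1) ^ A (Ecell n d i)) *
        ∑ k ∈ (Sx n d i).piAntidiag (A (Ecell n d i)), C (Nat.multinomial (Sx n d i) k : ℚ) *
          mon (∑ c ∈ Sx n d i, (k c + A c) • Pi.single c 1)
          (∑ c ∈ Sx n d i, (k c • (c.2 : Fin n → ℕ) + A c • epsRow n d i)) := by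
    intro i
    have h3 : psi (Ecell n d i) = - ∑ c' ∈ Sx n d i, yv c' := by
      unfold psi; exact if_pos rfl
    have h4 : ∏ c ∈ Sx n d i, psi c ^ A c =
        ∏ c ∈ Sx n d i, mon (A c • Pi.single c 1) (A c • epsRow n d i) := by
      refine Finset.prod_congr rfl fun c hc => ?_
      rw [mem_Sx] at hc
      unfold psi
      rw [if_neg hc.2, hc.1, mon_pow]
    rw [h3, h4, neg_pow, Finset.sum_pow_eq_sum_piAntidiag, map_pow, map_neg, map_one, mul_assoc,
      Finset.sum_mul]
    congr 1
    refine Finset.sum_congr rfl fun k _ => ?_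
    rw [mul_assoc, map_natCast]
    congr 1
    rw [← Finset.prod_mul_distrib, ← mon_prod]
    refine Finset.prod_congr rfl fun c _ => ?_
    unfold yv
    rw [mon_pow, mon_mul, add_smul]
  simp_rw [h1]
  rw [Finset.prod_mul_distrib, Finset.prod_univ_sum, ← map_prod, Finset.prod_pow_eq_pow_sum]
  congr 1
  refine Finset.sum_congr rfl fun p _ => ?_
  rw [Finset.prod_mul_distrib, ← map_prod, mon_prod]

theorem sum_single_apply (f : Fin n → DiagT n d → ℕ) (c : DiagT n d) :
    (∑ i, ∑ b ∈ Sx n d i, f i b • (Pi.single b 1 : DiagT n d → ℕ)) c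
      = if (c.2 : Fin n → ℕ) = epsRow n d c.1 then 0 else f c.1 c := by
  simp only [Finset.sum_apply, Pi.smul_apply, Pi.single_apply, smul_eq_mul, mul_ite, mul_one,
    mul_zero, Finset.sum_ite_eq, mem_Sx]
  by_cases h : (c.2 : Fin n → ℕ) = epsRow n d c.1 <;> simp [h]

theorem tau_ne_eps (hn : 2 ≤ n) (hd : ∀ i, 1 ≤ d i) (i : Fin n) :
    tauRow n d i ≠ epsRow n d i := by
  intro h
  have h1 := congrFun h i
  have h0 := congrFun h ⟨0, by omega⟩
  have := hd i
  simp only [tauRow, epsRow, if_true, Fin.ext_iff] at h1 h0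
  split_ifs at h1 h0 <;> omega

theorem sum_tau (hd : ∀ i, 1 ≤ d i) (i : Fin n) : ∑ j, tauRow n d i j = d i := by
  have hn : 0 < n := Nat.lt_of_le_of_lt (Nat.zero_le _) i.2
  have := hd i
  unfold tauRow
  have e0 : ∀ j : Fin n, (j.val = 0) = (j = ⟨0, hn⟩) := by intro j; simp [Fin.ext_iff]
  by_cases h : i.val + 1 < n
  · have e1 : ∀ j : Fin n, (j.val = i.val + 1) = (j = ⟨i.val + 1, h⟩) := by
      intro j; simp [Fin.ext_iff]
    simp only [h, if_true, e0, e1, Finset.sum_add_distrib, Finset.sum_ite_eq', Finset.mem_univ]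
    omega
  · simp [h, e0]

/-- The cell of `T`. -/
def Tcell (n : ℕ) (d : Fin n → ℕ) (hd : ∀ i, 1 ≤ d i) (i : Fin n) : DiagT n d :=
  ⟨i, ⟨tauRow n d i, by rw [Finset.Nat.mem_antidiagonalTuple]; exact sum_tau hd i⟩⟩

theorem eq_Tcell (hd : ∀ i, 1 ≤ d i) (c : DiagT n d) (h : (c.2 : Fin n → ℕ) = tauRow n d c.1) :
    c = Tcell n d hd c.1 := by
  obtain ⟨i, α, hα⟩ := c
  simp only at h
  subst h
  rfl

theorem Tcell_mem (hn : 2 ≤ n) (hd : ∀ i, 1 ≤ d i) (i : Fin n) :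
    Tcell n d hd i ∈ Sx n d i := by
  rw [mem_Sx]; exact ⟨rfl, tau_ne_eps hn hd i⟩

theorem Row_oneE (A : DiagT n d → ℕ) (i : Fin n) :
    Row n d (oneE n d A) i = A (Ecell n d i) := by
  rw [Row_eq, Finset.sum_eq_zero, add_zero]
  · simp [oneE, Ecell]
  · intro c hc
    rw [mem_Sx] at hc
    simp [oneE, hc.2]

theorem sum_push (hn : 2 ≤ n) (hd : ∀ i, 1 ≤ d i) (A : DiagT n d → ℕ) (i : Fin n) :
    ∑ c ∈ Sx n d i, pushT n d (oneE n d A) c = A (Ecell n d i) := by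
  rw [Finset.sum_eq_single (Tcell n d hd i)]
  · simp [pushT, Tcell, Row_oneE]
  · intro c hc hne
    rw [mem_Sx] at hc
    unfold pushT
    rw [if_neg]
    intro h
    apply hne
    rw [← hc.1]
    exact eq_Tcell hd c h
  · intro h; exact absurd (Tcell_mem hn hd i) h

/-- The target `a`-exponent. -/
def Cf (A : DiagT n d → ℕ) : DiagT n d → ℕ :=
  fun c => oneDE n d A c + pushT n d (oneE n d A) c

/-- The target `x`-exponent. -/
def Vf (A A' : DiagT n d → ℕ) : Fin n → ℕ :=
  ∑ i, ∑ c ∈ Sx n d i, (Bfill n d A A' c • (c.2 : Fin n → ℕ) + A' c • epsRow n d i)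

theorem oneDE_Sx (A : DiagT n d → ℕ) {i} {c} (hc : c ∈ Sx n d i) : oneDE n d A c = A c := by
  rw [mem_Sx] at hc
  simp [oneDE, hc.2]

theorem Vf_add (A A' : DiagT n d → ℕ) (hA' : ∀ i, Row n d A' i = canonδ n d i)
    (hle : ∀ c, oneDE n d A' c ≤ Cf A c) :
    Vf A A' + wt n d A' = ∑ i, ((∑ c ∈ Sx n d i, Cf A c • (c.2 : Fin n → ℕ))
      + canonδ n d i • epsRow n d i) := by
  have hw : wt n d A' = ∑ c, A' c • (c.2 : Fin n → ℕ) := by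
    ext j; simp [wt, Finset.sum_apply]
  rw [hw, all_sum, Vf, ← Finset.sum_add_distrib]
  refine Finset.sum_congr rfl fun i _ => ?_
  have h1 : ∑ c ∈ Sx n d i, Cf A c • (c.2 : Fin n → ℕ) =
      ∑ c ∈ Sx n d i, Bfill n d A A' c • (c.2 : Fin n → ℕ) +
      ∑ c ∈ Sx n d i, A' c • (c.2 : Fin n → ℕ) := by
    rw [← Finset.sum_add_distrib]
    refine Finset.sum_congr rfl fun c hc => ?_
    rw [← add_smul]
    congr 1
    have := hle c
    rw [oneDE_Sx A' hc] at this
    unfold Bfill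
    rw [oneDE_Sx A' hc]
    exact (Nat.sub_add_cancel this).symm
  rw [h1, ← hA' i, Row_eq, Finset.sum_add_distrib, add_smul, ← Finset.sum_smul]
  change _ + (A' (Ecell n d i) • epsRow n d i + _) = _
  abel

theorem self_le (A : DiagT n d → ℕ) (c : DiagT n d) : oneDE n d A c ≤ Cf A c :=
  Nat.le_add_right _ _

theorem Vf_iff (A A' : DiagT n d → ℕ) (hA : ∀ i, Row n d A i = canonδ n d i)
    (hA' : ∀ i, Row n d A' i = canonδ n d i) (hle : ∀ c, oneDE n d A' c ≤ Cf A c) :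
    Vf A A' = Vf A A ↔ wt n d A' = wt n d A := by
  have h1 := Vf_add A A' hA' hle
  have h2 := Vf_add A A hA (self_le A)
  rw [← h2] at h1
  constructor
  · intro h; rw [h] at h1; exact add_left_cancel h1
  · intro h; rw [h] at h1; exact add_right_cancel h1

theorem sum_B (hn : 2 ≤ n) (hd : ∀ i, 1 ≤ d i) (A A' : DiagT n d → ℕ)
    (hA : ∀ i, Row n d A i = canonδ n d i)
    (hA' : ∀ i, Row n d A' i = canonδ n d i) (hle : ∀ c, oneDE n d A' c ≤ Cf A c) (i : Fin n) :
    ∑ c ∈ Sx n d i, Bfill n d A A' c = A' (Ecell n d i) := by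
  have h1 : ∑ c ∈ Sx n d i, Bfill n d A A' c + ∑ c ∈ Sx n d i, A' c
      = ∑ c ∈ Sx n d i, A c + ∑ c ∈ Sx n d i, pushT n d (oneE n d A) c := by
    rw [← Finset.sum_add_distrib, ← Finset.sum_add_distrib]
    refine Finset.sum_congr rfl fun c hc => ?_
    have := hle c
    unfold Cf at this
    unfold Bfill
    rw [oneDE_Sx A hc, oneDE_Sx A' hc] at *
    omega
  rw [sum_push hn hd] at h1
  have h2 := hA i
  have h3 := hA' i
  rw [Row_eq] at h2 h3
  omega

theorem Cf_E (hn : 2 ≤ n) (hd : ∀ i, 1 ≤ d i) (A : DiagT n d → ℕ) (c : DiagT n d)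
    (h : (c.2 : Fin n → ℕ) = epsRow n d c.1) : Cf A c = 0 := by
  unfold Cf oneDE pushT
  rw [if_pos h, if_neg]
  rw [h]
  exact (tau_ne_eps hn hd c.1).symm

theorem transT_eq (hn : 2 ≤ n) (hd : ∀ i, 1 ≤ d i) (A A' : DiagT n d → ℕ)
    (hA : ∀ i, Row n d A i = canonδ n d i)
    (hA' : ∀ i, Row n d A' i = canonδ n d i) (hle : ∀ c, oneDE n d A' c ≤ Cf A c) :
    transT n d A A' = (-1 : ℚ) ^ (1 + (∑ i, A (Ecell n d i)) + (∑ i, A' (Ecell n d i))) *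
      ∏ i : Fin n, (Nat.multinomial (Sx n d i) (Bfill n d A A') : ℚ) := by
  unfold transT
  refine (if_pos hle).trans ?_
  congr 1
  refine Finset.prod_congr rfl fun i _ => ?_
  change _ / (∏ c ∈ Sx n d i, _) = _
  rw [div_eq_iff (Finset.prod_ne_zero_iff.mpr fun c _ => by positivity), mul_comm]
  have := Nat.multinomial_spec (Sx n d i) (Bfill n d A A')
  rw [sum_B hn hd A A' hA hA' hle] at this
  rw [← this]
  push_cast
  rfl

theorem coeff_key (hn : 2 ≤ n) (hd : ∀ i, 1 ≤ d i) (A A' : DiagT n d → ℕ)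
    (hA : ∀ i, Row n d A i = canonδ n d i)
    (hA' : ∀ i, Row n d A' i = canonδ n d i) :
    coeff (Finsupp.equivFunOnFinite.symm (Sum.elim (Cf A) (Vf A A))) (∏ c, psi c ^ A' c)
      = if wt n d A' = wt n d A then
        (-1 : ℚ) ^ (1 + (∑ i, A (Ecell n d i))) * transT n d A A' else 0 := by
  rw [prod_psi, coeff_C_mul, coeff_sum]
  simp_rw [coeff_C_mul, coeff_mon]
  have hE : ∀ p : Fin n → DiagT n d → ℕ,
      (∑ i, ∑ c ∈ Sx n d i, (p i c + A' c) • Pi.single c 1) = Cf A →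
      ∀ i, ∀ c ∈ Sx n d i, p i c + A' c = Cf A c := by
    intro p hp i c hc
    rw [← hp, sum_single_apply (fun i c => p i c + A' c)]
    rw [mem_Sx] at hc
    rw [if_neg hc.2, hc.1]
  by_cases hle : ∀ c, oneDE n d A' c ≤ Cf A c
  · rw [transT_eq hn hd A A' hA hA' hle]
    have hE2 : ∀ p : Fin n → DiagT n d → ℕ,
      (∑ i, ∑ c ∈ Sx n d i, (p i c + A' c) • Pi.single c 1) = Cf A →
      ∀ i, ∀ c ∈ Sx n d i, p i c = Bfill n d A A' c := by
      intro p hp i c hc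
      have := hE p hp i c hc
      unfold Bfill
      rw [oneDE_Sx A' hc]
      unfold Cf at this
      omega
    rw [Finset.sum_eq_single
      (fun i c => if c ∈ Sx n d i then Bfill n d A A' c else 0)]
    · have hb : ∀ i, ∀ c ∈ Sx n d i,
          (if c ∈ Sx n d i then Bfill n d A A' c else 0) = Bfill n d A A' c :=
        fun i c hc => if_pos hc
      have e1 : (∑ i, ∑ c ∈ Sx n d i, ((if c ∈ Sx n d i then Bfill n d A A' c else 0) + A' c)
          • (Pi.single c 1 : DiagT n d → ℕ)) = Cf A := by
        funext c
        rw [sum_single_apply (fun i c => (if c ∈ Sx n d i then Bfill n d A A' c else 0) + A' c)]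
        split_ifs with h1 h2
        · exact (Cf_E hn hd A c h1).symm
        · have := hle c
          have h3 : oneDE n d A' c = A' c := oneDE_Sx A' h2
          unfold Bfill
          unfold Cf at *
          omega
        · exact absurd ((mem_Sx _ _).mpr ⟨rfl, h1⟩) h2
      have e2 : (∑ i, ∑ c ∈ Sx n d i, ((if c ∈ Sx n d i then Bfill n d A A' c else 0)
          • (c.2 : Fin n → ℕ) + A' c • epsRow n d i)) = Vf A A' := by
        unfold Vf
        refine Finset.sum_congr rfl fun i _ => Finset.sum_congr rfl fun c hc => ?_
        rw [if_pos hc]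
      have e3 : ∀ i, Nat.multinomial (Sx n d i)
          (fun c => if c ∈ Sx n d i then Bfill n d A A' c else 0)
          = Nat.multinomial (Sx n d i) (Bfill n d A A') := fun i =>
        Nat.multinomial_congr (hb i)
      simp only [e1, e2, e3, true_and, Vf_iff A A' hA hA' hle]
      split_ifs with hw
      · rw [mul_one, ← mul_assoc, ← pow_add]
        congr 1
        rw [← add_assoc, pow_add, ← two_mul, pow_mul]
        simp
      · simp
    · intro p hp hne
      rw [if_neg, mul_zero]
      rintro ⟨h1, -⟩
      apply hne
      rw [Fintype.mem_piFinset] at hp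
      funext i c
      split_ifs with hc
      · exact hE2 p h1 i c hc
      · have := (Finset.mem_piAntidiag.mp (hp i)).2 c
        by_contra h; exact hc (this h)
    · intro h
      exfalso
      apply h
      rw [Fintype.mem_piFinset]
      intro i
      rw [Finset.mem_piAntidiag]
      constructor
      · rw [Finset.sum_congr rfl (fun c hc => if_pos hc), sum_B hn hd A A' hA hA' hle]
      · intro c hc
        by_contra h
        exact hc (if_neg h)
  · have ht : transT n d A A' = 0 := by
      unfold transT; exact if_neg hle
    rw [ht, mul_zero, ite_self]
    refine mul_eq_zero_of_right _ (Finset.sum_eq_zero ?_)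
    intro p _
    rw [if_neg, mul_zero]
    rintro ⟨h1, -⟩
    apply hle
    intro c
    by_cases hc : (c.2 : Fin n → ℕ) = epsRow n d c.1
    · simp [oneDE, hc]
    · have hc' : c ∈ Sx n d c.1 := (mem_Sx _ _).mpr ⟨rfl, hc⟩
      rw [oneDE_Sx A' hc', ← hE p h1 c.1 c hc']
      omega

theorem transT_self (hn : 2 ≤ n) (hd : ∀ i, 1 ≤ d i) (A : DiagT n d → ℕ)
    (hA : ∀ i, Row n d A i = canonδ n d i) : transT n d A A = -1 := by
  rw [transT_eq hn hd A A hA hA (self_le A)]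
  have hB : ∀ i, Nat.multinomial (Sx n d i) (Bfill n d A A) = 1 := by
    intro i
    have h := Nat.multinomial_spec (Sx n d i) (Bfill n d A A)
    rw [sum_B hn hd A A hA hA (self_le A)] at h
    rw [Finset.prod_eq_single (Tcell n d hd i)] at h
    · have : Bfill n d A A (Tcell n d hd i) = A (Ecell n d i) := by
        unfold Bfill pushT
        simp [Tcell, Row_oneE]
      rw [this] at h
      exact Nat.eq_of_mul_eq_mul_left (Nat.factorial_pos _) (by rw [h, mul_one])
    · intro c hc hne
      rw [mem_Sx] at hc
      unfold Bfill pushT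
      rw [if_neg]
      · simp
      · intro h; apply hne; rw [← hc.1]; exact eq_Tcell hd c h
    · intro h; exact absurd (Tcell_mem hn hd i) h
  simp only [hB, Nat.cast_one, Finset.prod_const_one, mul_one]
  rw [add_assoc, pow_add, ← two_mul, pow_mul]
  simp

theorem chain_prod (N : ℕ) : ∀ (u e : Fin (N + 1) → ℤ),
    (∀ k : Fin N, u k.castSucc = e k.succ * u k.succ) →
    u 0 = (∏ j : Fin N, e j.succ) * u (Fin.last N) := by
  induction N with
  | zero => intro u e _; simp
  | succ N ih =>
    intro u e h
    have h1 := ih (fun i => u i.castSucc) (fun i => e i.castSucc) (fun k => by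
      have := h k.castSucc
      simpa using this)
    have h2 := h (Fin.last N)
    simp only [Fin.castSucc_zero] at h1
    rw [h1, h2, Fin.prod_univ_castSucc, mul_assoc]
    simp

theorem chain_zero (N : ℕ) (u e : Fin (N + 1) → ℤ) (he : ∀ i, e i ≠ 0)
    (h : ∀ k : Fin N, u k.castSucc = e k.succ * u k.succ) (h0 : u 0 = 0) (i) : u i = 0 := by
  induction i using Fin.induction with
  | zero => exact h0
  | succ k ih =>
    have := h k
    rw [ih] at this
    rcases mul_eq_zero.mp this.symm with h1 | h1
    · exact absurd h1 (he _)
    · exact h1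

theorem prec_of (hn : 2 ≤ n) (hn0 : 0 < n) (hd : ∀ i, 1 ≤ d i) (A A' : DiagT n d → ℕ)
    (hA : ∀ i, Row n d A i = canonδ n d i)
    (hA' : ∀ i, Row n d A' i = canonδ n d i) (hw : wt n d A' = wt n d A)
    (hle : ∀ c, oneDE n d A' c ≤ Cf A c) (hf : ¬ isFRR n d hn0 A) (hne : A' ≠ A) :
    prec n d hn0 A' A := by
  by_cases hf' : isFRR n d hn0 A'
  · exact Or.inl ⟨hf', hf⟩
  refine Or.inr ⟨hf', hf, ?_⟩
  have hter : ∀ c ∈ (Finset.univ : Finset (DiagT n d)),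
      (if (c.2 : Fin n → ℕ) = epsRow n d c.1 ∨ (c.2 : Fin n → ℕ) = tauRow n d c.1
        then 0 else A' c) ≤
      (if (c.2 : Fin n → ℕ) = epsRow n d c.1 ∨ (c.2 : Fin n → ℕ) = tauRow n d c.1
        then 0 else A c) := by
    intro c _
    split_ifs with h
    · exact le_rfl
    · push Not at h
      have := hle c
      simpa [Cf, oneDE, pushT, h.1, h.2] using this
  refine lt_of_le_of_ne (Finset.sum_le_sum hter) ?_
  intro hZ
  have hZ2 := (Finset.sum_eq_sum_iff_of_le hter).mp hZ
  have hag : ∀ c : DiagT n d, (c.2 : Fin n → ℕ) ≠ epsRow n d c.1 →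
      (c.2 : Fin n → ℕ) ≠ tauRow n d c.1 → A' c = A c := by
    intro c h1 h2
    simpa [h1, h2] using hZ2 c (Finset.mem_univ c)
  set u : Fin n → ℤ := fun i => (A' (Tcell n d hd i) : ℤ) - A (Tcell n d hd i) with hu
  have hS : ∀ (i : Fin n) (f : DiagT n d → ℤ),
      ∑ c ∈ Sx n d i, ((A' c : ℤ) - A c) * f c = u i * f (Tcell n d hd i) := by
    intro i f
    rw [Finset.sum_eq_single (Tcell n d hd i)]
    · intro c hc hcT
      rw [mem_Sx] at hc
      rw [hag c hc.2, sub_self, zero_mul]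
      intro h; apply hcT; rw [← hc.1]; exact eq_Tcell hd c h
    · intro h; exact absurd (Tcell_mem hn hd i) h
  have hEr : ∀ i, (A' (Ecell n d i) : ℤ) - A (Ecell n d i) = - u i := by
    intro i
    have h1 := hA i
    have h2 := hA' i
    rw [Row_eq] at h1 h2
    have h3 := hS i (fun _ => 1)
    simp only [mul_one, Finset.sum_sub_distrib] at h3
    zify at h1 h2
    linarith
  have hW : ∀ j, ∑ i, (- u i * epsRow n d i j + u i * tauRow n d i j) = (0 : ℤ) := by
    intro j
    have h1 := congrFun hw j
    unfold wt at h1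
    zify at h1
    rw [← sub_eq_zero, ← Finset.sum_sub_distrib] at h1
    simp_rw [← sub_mul] at h1
    rw [all_sum] at h1
    rw [← h1]
    refine Finset.sum_congr rfl fun i _ => ?_
    rw [hS i (fun c => ((c.2 : Fin n → ℕ) j : ℤ)), hEr]
    rfl
  obtain ⟨N, rfl⟩ : ∃ N, n = N + 1 := ⟨n - 1, by omega⟩
  have hrec : ∀ k : Fin N, u k.castSucc = (d k.succ : ℤ) * u k.succ := by
    intro k
    have h1 := hW k.succ
    rw [Finset.sum_add_distrib, Finset.sum_eq_single k.succ, Finset.sum_eq_single k.castSucc] at h1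
    · simp [epsRow, tauRow] at h1
      linarith
    · intro b _ hb
      have : tauRow (N + 1) d b k.succ = 0 := by
        have hbk : b.val ≠ k.val := fun h => hb (Fin.ext h)
        have hs : (k.succ : Fin (N + 1)).val = k.val + 1 := Fin.val_succ k
        have hs0 : ¬ ((k.succ : Fin (N + 1)).val = 0) := by omega
        have hs1 : ¬ ((k.succ : Fin (N + 1)).val = b.val + 1) := by omega
        unfold tauRow
        rw [if_neg hs0, if_neg hs0, if_neg hs1]
        exact ite_self _
      rw [this]; simp
    · simp
    · intro b _ hb
      have : epsRow (N + 1) d b k.succ = 0 := by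
        simp only [epsRow]
        rw [if_neg (Ne.symm hb)]
      rw [this]; simp
    · simp
  have hc := chain_prod N u (fun i => (d i : ℤ)) hrec
  have hδ : (canonδ (N + 1) d ⟨0, hn0⟩ : ℤ) = ∏ j : Fin N, (d j.succ : ℤ) := by
    unfold canonδ
    have := Fin.prod_univ_succ d
    have h2 := Finset.mul_prod_erase Finset.univ d (Finset.mem_univ (0 : Fin (N + 1)))
    rw [this] at h2
    have h3 := Nat.eq_of_mul_eq_mul_left (hd 0) h2
    exact_mod_cast h3
  have hu0 : u 0 = 0 := by
    have hb : A (Ecell (N + 1) d ⟨0, hn0⟩) ≤ canonδ (N + 1) d ⟨0, hn0⟩ := by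
      rw [← hA]; exact le_Row A (Ecell (N + 1) d ⟨0, hn0⟩)
    have hb' : A' (Ecell (N + 1) d ⟨0, hn0⟩) ≤ canonδ (N + 1) d ⟨0, hn0⟩ := by
      rw [← hA']; exact le_Row A' (Ecell (N + 1) d ⟨0, hn0⟩)
    have hE0 := hEr ⟨0, hn0⟩
    unfold isFRR at hf hf'
    rw [← hδ] at hc
    refine Int.eq_zero_of_abs_lt_dvd (Dvd.intro _ hc.symm) ?_
    have : u ⟨0, hn0⟩ = u 0 := rfl
    rw [this] at hE0
    rw [abs_lt]
    omega
  have hall := chain_zero N u (fun i => (d i : ℤ))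
    (fun i => by have := hd i; simp only [ne_eq, Nat.cast_eq_zero]; omega) hrec hu0
  apply hne
  funext c
  by_cases h1 : (c.2 : Fin (N + 1) → ℕ) = epsRow (N + 1) d c.1
  · have h2 := hEr c.1
    rw [hall, ← eq_Ecell c h1] at h2
    omega
  by_cases h2 : (c.2 : Fin (N + 1) → ℕ) = tauRow (N + 1) d c.1
  · have h3 := hall c.1
    simp only [hu] at h3
    rw [← eq_Tcell hd c h2] at h3
    omega
  exact hag c h1 h2

theorem main_aux (hn : 2 ≤ n) (hn0 : 0 < n) (hd : ∀ i, 1 ≤ d i)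
    (R : MvPolynomial (Fin n × (Fin n → ℕ)) ℚ)
    (hIF : IsIFDZ n d R)
    (hMH : MultiHom n d (canonδ n d) R)
    (A : DiagT n d → ℕ) (hA : A ∈ REF n d) (hf : ¬ isFRR n d hn0 A) :
    MvPolynomial.coeff (expOf n d A) R
      = ∑ A' ∈ (REF n d).filter (fun A' => prec n d hn0 A' A),
          transT n d A A' * MvPolynomial.coeff (expOf n d A') R := by
  have hA2 := (mem_REF A).mp hA
  have h0 := phi_R hn0 R hIF
  rw [R_eq R hMH, map_sum, map_sum] at h0
  simp_rw [phi_monomial] at h0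
  have h1 := congrArg (coeff (Finsupp.equivFunOnFinite.symm (Sum.elim (Cf A) (Vf A A)))) h0
  rw [coeff_sum, coeff_zero] at h1
  have h2 : ∑ A' ∈ REF n d, transT n d A A' * coeff (expOf n d A') R = 0 := by
    have hs : REF n d = (GF n d).filter (fun A' => wt n d A' = wt n d A) := by
      ext B
      rw [mem_REF, Finset.mem_filter, mem_GF]
      refine and_congr_right fun _ => ?_
      rw [funext_iff]
      simp only [hA2.2]
    rw [hs, Finset.sum_filter]
    have h3 : (-1 : ℚ) ^ (1 + (∑ i, A (Ecell n d i))) * ∑ A' ∈ GF n d,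
        (if wt n d A' = wt n d A then transT n d A A' * coeff (expOf n d A') R else 0) = 0 := by
      refine Eq.trans ?_ h1
      rw [Finset.mul_sum]
      refine Finset.sum_congr rfl fun B hB => ?_
      rw [coeff_C_mul, coeff_key hn hd A B hA2.1 ((mem_GF B).mp hB)]
      split_ifs
      · ring
      · simp
    exact (mul_eq_zero.mp h3).resolve_left (pow_ne_zero _ (by norm_num))
  classical
  rw [← Finset.add_sum_erase _ _ hA, transT_self hn hd A hA2.1] at h2
  have h4 : ∑ A' ∈ (REF n d).filter (fun A' => prec n d hn0 A' A),
          transT n d A A' * MvPolynomial.coeff (expOf n d A') R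
      = ∑ A' ∈ (REF n d).erase A, transT n d A A' * coeff (expOf n d A') R := by
    apply Finset.sum_subset
    · intro B hB
      rw [Finset.mem_filter] at hB
      rw [Finset.mem_erase]
      refine ⟨?_, hB.1⟩
      rintro rfl
      rcases hB.2 with h | h
      · exact h.2 h.1
      · exact lt_irrefl _ h.2.2
    · intro B hB hB2
      rw [Finset.mem_erase] at hB
      have hB3 := (mem_REF B).mp hB.2
      have : ¬ ∀ c, oneDE n d B c ≤ Cf A c := by
        intro hle
        apply hB2
        rw [Finset.mem_filter]
        refine ⟨hB.2, prec_of hn hn0 hd A B hA2.1 hB3.1 ?_ hle hf hB.1⟩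
        funext j
        rw [hB3.2, hA2.2]
      have ht : transT n d A B = 0 := by
        unfold transT; exact if_neg this
      rw [ht, zero_mul]
  rw [h4]
  linarith

end Helpers

/-- Let `R` be an inertia form of degree zero for the format
`(n, n, (d₁,…,d_n))`, multihomogeneous of the canonical multidegree, and let
`r_A = [a^A] R`. Then for every `A ∈ REF ∖ FRR`,
`r_A = Σ_{Ã ∈ REF, Ã ≺ A} 𝒯(A, Ã) · r_Ã`. -/
theorem resolvent_equation (n : ℕ) (hn : 2 ≤ n) (d : Fin n → ℕ) (hd : ∀ i, 1 ≤ d i)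
    (R : MvPolynomial (Fin n × (Fin n → ℕ)) ℚ)
    (hIF : IsIFDZ n d R)
    (hMH : MultiHom n d (canonδ n d) R)
    (A : DiagT n d → ℕ) (hA : A ∈ REF n d) (hAnfrr : ¬ isFRR n d (by omega) A) :
    MvPolynomial.coeff (expOf n d A) R
      = ∑ A' ∈ (REF n d).filter (fun A' => prec n d (by omega) A' A),
          transT n d A A' * MvPolynomial.coeff (expOf n d A') R := by
  exact main_aux hn (by omega) hd R hIF hMH A hA hAnfrr

end ResultantMarkov
end

section
/- Let n ≥ 2, let σ and σ̃ be permutations of {1,…,n}, let ρ be the n-cycle with ρ(i) = i+1 for i < n and ρ(n) = 1, and suppose the pair (σ,σ̃) satisfies condition (C). If a ∈ {1,…,n} satisfies σ(a) ≠ a and σ̃(a) ≠ a, then for every natural number k ≥ 0, σ̃(σ^k(a)) = σ^{k+1}(a). -/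
/-- Condition (C) on a pair of permutations `(σ, σ')` relative to the `n`-cycle `ρ`:
for every `i` with `σ' i ≠ i`, either `σ' i = σ i`, or both `σ i = i` and
`σ' i = ρ i`. -/
def CondC (n : ℕ) (ρ σ σ' : Equiv.Perm (Fin n)) : Prop :=
  ∀ i, σ' i ≠ i → (σ' i = σ i ∨ (σ i = i ∧ σ' i = ρ i))

/-- If `σ a ≠ a` and `σ' a ≠ a`, then `σ'(σ^k(a)) = σ^{k+1}(a)` for all `k ≥ 0`. -/
theorem lin_lem2 (n : ℕ) (hn : 2 ≤ n) (ρ σ σ' : Equiv.Perm (Fin n))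
    (hρ : ∀ i : Fin n, (ρ i).val = if i.val + 1 < n then i.val + 1 else 0)
    (hC : CondC n ρ σ σ')
    (a : Fin n) (ha : σ a ≠ a) (ha' : σ' a ≠ a) :
    ∀ k : ℕ, σ' ((σ ^ k) a) = (σ ^ (k + 1)) a := by
  have key : ∀ b, σ b ≠ b → σ' b ≠ b → σ' b = σ b := fun b h h' =>
    (hC b h').resolve_right fun h2 => h h2.1
  have main : ∀ k : ℕ, σ ((σ ^ k) a) ≠ (σ ^ k) a ∧ σ' ((σ ^ k) a) ≠ (σ ^ k) a := by
    intro k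
    induction k with
    | zero => exact ⟨ha, ha'⟩
    | succ k ih =>
      obtain ⟨h1, h2⟩ := ih
      have h3 := key _ h1 h2
      rw [pow_succ', Equiv.Perm.mul_apply]
      refine ⟨fun h => h1 (σ.injective h), fun h => h1 ?_⟩
      exact σ'.injective (h.trans h3.symm)
  intro k
  rw [pow_succ', Equiv.Perm.mul_apply]
  exact key _ (main k).1 (main k).2
end

section
/- Let n ≥ 2, let σ and σ̃ be permutations of {1,…,n}, let ρ be the n-cycle with ρ(i) = i+1 for i < n and ρ(n) = 1, and suppose the pair (σ,σ̃) satisfies condition (C). If a ∈ {1,…,n} satisfies σ(a) ≠ a and σ̃(a) = a, then for every natural number k ≥ 0, σ̃(σ^k(a)) = σ^k(a). -/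
/-- If `σ a ≠ a` and `σ' a = a`, then `σ'(σ^k(a)) = σ^k(a)` for all `k ≥ 0`. -/
theorem lin_lem3 (n : ℕ) (hn : 2 ≤ n) (ρ σ σ' : Equiv.Perm (Fin n))
    (hρ : ∀ i : Fin n, (ρ i).val = if i.val + 1 < n then i.val + 1 else 0)
    (hC : CondC n ρ σ σ')
    (a : Fin n) (ha : σ a ≠ a) (ha' : σ' a = a) :
    ∀ k : ℕ, σ' ((σ ^ k) a) = (σ ^ k) a := by
  have hi : ∀ x, σ (σ⁻¹ x) = x := fun x => Equiv.apply_symm_apply σ x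
  have hne : ∀ m : ℕ, σ ((σ⁻¹ ^ m) a) ≠ (σ⁻¹ ^ m) a := by
    intro m
    induction m with
    | zero => simpa using ha
    | succ m ih =>
      intro h
      rw [pow_succ', Equiv.Perm.mul_apply, hi] at h
      apply ih
      conv_lhs => rw [h]
      exact hi _
  have back : ∀ m : ℕ, σ' ((σ⁻¹ ^ m) a) = (σ⁻¹ ^ m) a := by
    intro m
    induction m with
    | zero => simpa using ha'
    | succ m ih =>
      by_contra h
      rcases hC _ h with h1 | ⟨h1, _⟩
      · have h2 : σ ((σ⁻¹ ^ (m + 1)) a) = (σ⁻¹ ^ m) a := by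
          rw [pow_succ', Equiv.Perm.mul_apply, hi]
        have h3 := σ'.injective ((h1.trans h2).trans ih.symm)
        exact hne (m + 1) (h2.trans h3.symm)
      · exact hne (m + 1) h1
  intro k
  have hN : 0 < orderOf σ := orderOf_pos σ
  have key : σ ^ k = σ⁻¹ ^ (k * (orderOf σ - 1)) := by
    rw [inv_pow, eq_inv_iff_mul_eq_one, ← pow_add]
    have : k + k * (orderOf σ - 1) = orderOf σ * k := by
      obtain ⟨t, ht⟩ := Nat.exists_eq_add_of_lt hN
      rw [ht]
      simp
      ring
    rw [this, pow_mul, pow_orderOf_eq_one, one_pow]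
  rw [key]
  exact back _
end

section
/- Let n ≥ 2, let σ and σ̃ be permutations of {1,…,n}, let ρ be the n-cycle with ρ(i) = i+1 for i < n and ρ(n) = 1, and suppose the pair (σ,σ̃) satisfies condition (C). Let a ∈ {1,…,n} satisfy σ(a) ≠ a, and let S := {σ^k(a) : k ≥ 0} be the support of the cycle of σ containing a. Then either σ̃(b) = σ(b) for every b ∈ S, or σ̃(b) = b for every b ∈ S. -/
/-- If `σ a ≠ a` and `S = {σ^k(a) : k ≥ 0}` is the σ-orbit of `a`, then either `σ' = σ` on `S`, or `σ'` fixes every element of `S`. -/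
theorem lin_lem4 (n : ℕ) (hn : 2 ≤ n) (ρ σ σ' : Equiv.Perm (Fin n))
    (hρ : ∀ i : Fin n, (ρ i).val = if i.val + 1 < n then i.val + 1 else 0)
    (hC : CondC n ρ σ σ')
    (a : Fin n) (ha : σ a ≠ a) :
    (∀ b : Fin n, (∃ k : ℕ, (σ ^ k) a = b) → σ' b = σ b) ∨
      (∀ b : Fin n, (∃ k : ℕ, (σ ^ k) a = b) → σ' b = b) := by
  have hmv : ∀ k : ℕ, σ ((σ ^ k) a) ≠ (σ ^ k) a := by
    intro k h
    apply ha
    have h2 : σ ((σ ^ k) a) = (σ ^ k) (σ a) := by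
      rw [← Equiv.Perm.mul_apply, ← Equiv.Perm.mul_apply, ← pow_succ', ← pow_succ]
    rw [h2] at h
    exact (σ ^ k).injective h
  have hdich : ∀ k : ℕ, σ' ((σ ^ k) a) = (σ ^ k) a ∨ σ' ((σ ^ k) a) = σ ((σ ^ k) a) := by
    intro k
    by_cases h : σ' ((σ ^ k) a) = (σ ^ k) a
    · exact Or.inl h
    · rcases hC _ h with h1 | h1
      · exact Or.inr h1
      · exact absurd h1.1 (hmv k)
  have hprop : ∀ k j : ℕ, σ' ((σ ^ k) a) = σ ((σ ^ k) a) →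
      σ' ((σ ^ (k + j)) a) = σ ((σ ^ (k + j)) a) := by
    intro k j h
    induction j with
    | zero => exact h
    | succ j ih =>
      have e : (σ ^ (k + (j + 1))) a = σ ((σ ^ (k + j)) a) := by
        rw [← Equiv.Perm.mul_apply, ← pow_succ', add_assoc]
      rcases hdich (k + (j + 1)) with h1 | h1
      · exfalso
        rw [e, ← ih] at h1
        have h2 := σ'.injective h1
        rw [ih] at h2
        exact hmv _ h2
      · exact h1
  rcases hdich 0 with h0 | h0
  · right
    rintro b ⟨k, rfl⟩
    rcases hdich k with h | h
    · exact h
    · exfalso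
      have h1 := hprop k (k * (orderOf σ - 1)) h
      have hpos : 0 < orderOf σ := orderOf_pos σ
      have e : k + k * (orderOf σ - 1) = orderOf σ * k := by
        obtain ⟨m, hm⟩ : ∃ m, orderOf σ = m + 1 := ⟨orderOf σ - 1, by omega⟩
        rw [hm, Nat.add_sub_cancel]
        ring
      rw [e, pow_mul, pow_orderOf_eq_one, one_pow] at h1
      rw [pow_zero] at h0
      rw [h0] at h1
      exact ha h1.symm
  · left
    rintro b ⟨k, rfl⟩
    have := hprop 0 k h0
    rwa [Nat.zero_add] at this
end

section
/- Let n ≥ 2, let σ and σ̃ be permutations of {1,…,n}, let ρ be the n-cycle with ρ(i) = i+1 for i < n and ρ(n) = 1, and suppose the pair (σ,σ̃) satisfies condition (C). If moreover σ(1) ≠ 1, then every fixed point of σ is a fixed point of σ̃: for all a ∈ {1,…,n}, σ(a) = a implies σ̃(a) = a. -/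
theorem back_closed (n : ℕ) (ρ σ σ' : Equiv.Perm (Fin n)) (hC : CondC n ρ σ σ')
    (c : Fin n) (h1 : σ' c = c) (h2 : σ c ≠ c) (k : ℕ) :
    σ' ((σ⁻¹ ^ k) c) = (σ⁻¹ ^ k) c ∧ σ ((σ⁻¹ ^ k) c) ≠ (σ⁻¹ ^ k) c := by
  induction k with
  | zero => exact ⟨h1, h2⟩
  | succ k ih =>
    rw [pow_succ', Equiv.Perm.mul_apply]
    generalize (σ⁻¹ ^ k) c = x at ih
    obtain ⟨i1, i2⟩ := ih
    have hd : σ (σ⁻¹ x) = x := by simp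
    generalize σ⁻¹ x = d at hd
    have hne : σ d ≠ d := by
      intro h
      have : x = d := hd.symm.trans h
      subst this
      exact i2 h
    refine ⟨?_, hne⟩
    by_contra hb
    rcases hC d hb with h | h
    · have : d = x := σ'.injective (by rw [h, hd, i1])
      subst this
      exact i2 hd
    · exact hne h.1

theorem fwd_bad (n : ℕ) (ρ σ σ' : Equiv.Perm (Fin n)) (hC : CondC n ρ σ σ')
    (a : Fin n) (h1 : σ a = a) (h2 : σ' a ≠ a) :
    σ (ρ a) = ρ a ∧ σ' (ρ a) ≠ ρ a := by
  have hr : σ' a = ρ a := by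
    rcases hC a h2 with h | h
    · exact absurd (h.trans h1) h2
    · exact h.2
  have hb : σ' (ρ a) ≠ ρ a := by
    intro h
    have : ρ a = a := σ'.injective (h.trans hr.symm)
    exact h2 (hr.trans this)
  refine ⟨?_, hb⟩
  by_contra hs
  have hc : σ (σ⁻¹ (ρ a)) = ρ a := by simp
  have hk := fun c => back_closed n ρ σ σ' hC c
  generalize σ⁻¹ (ρ a) = c at hc
  have hcc : σ c ≠ c := by
    intro h
    have : c = ρ a := h.symm.trans hc
    exact hs (this ▸ h)
  have hfc : σ' c = c := by
    by_contra hx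
    rcases hC c hx with h | h
    · have : c = a := σ'.injective (by rw [h, hc, hr])
      subst this
      exact hcc h1
    · exact hcc h.1
  have key := (hk c hfc hcc (orderOf σ - 1)).1
  have e : (σ⁻¹ ^ (orderOf σ - 1)) = σ := by
    have hpos := orderOf_pos σ
    rw [inv_pow, inv_eq_iff_mul_eq_one, ← pow_succ, Nat.sub_add_cancel hpos, pow_orderOf_eq_one]
  rw [e, hc] at key
  exact hb key

/-- If moreover `σ` does not fix the first element, then every fixed point of `σ` is a fixed point of `σ'`. -/
theorem lin_lem6 (n : ℕ) (hn : 2 ≤ n) (ρ σ σ' : Equiv.Perm (Fin n))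
    (hρ : ∀ i : Fin n, (ρ i).val = if i.val + 1 < n then i.val + 1 else 0)
    (hC : CondC n ρ σ σ')
    (hσ1 : σ ⟨0, by omega⟩ ≠ ⟨0, by omega⟩) :
    ∀ a : Fin n, σ a = a → σ' a = a := by
  intro a ha
  by_contra hb
  have H : ∀ m (x : Fin n), x.val + m + 1 = n → σ x = x → σ' x ≠ x → False := by
    intro m
    induction m with
    | zero =>
      intro x hx h1 h2
      have h3 := (fwd_bad n ρ σ σ' hC x h1 h2).1
      have h4 : ρ x = ⟨0, by omega⟩ := by
        apply Fin.ext
        rw [hρ, if_neg (by omega)]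
      rw [h4] at h3
      exact hσ1 h3
    | succ m ih =>
      intro x hx h1 h2
      have h3 := fwd_bad n ρ σ σ' hC x h1 h2
      refine ih (ρ x) ?_ h3.1 h3.2
      rw [hρ, if_pos (by omega)]
      omega
  exact H (n - 1 - a.val) a (by omega) ha hb
end

section
/- Let n ≥ 2, let σ and σ̃ be permutations of {1,…,n}, let ρ be the n-cycle with ρ(i) = i+1 for i < n and ρ(n) = 1, and suppose σ(1) ≠ 1 and the pair (σ,σ̃) satisfies condition (C). Then σ̃ is obtained from σ by deleting whole nontrivial cycles; precisely: (a) for every b ∈ {1,…,n}, σ̃(b) = b or σ̃(b) = σ(b); (b) for every a with σ(a) ≠ a, letting S := {σ^k(a) : k ≥ 0} be the σ-orbit of a, either σ̃(b) = σ(b) for all b ∈ S, or σ̃(b) = b for all b ∈ S; and (c) if σ̃ ≠ σ, then there exists a with σ(a) ≠ a such that σ̃ fixes every element of the σ-orbit of a. -/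
theorem prop_orbit {n : ℕ} {ρ σ σ' : Equiv.Perm (Fin n)} (hC : CondC n ρ σ σ')
    {x : Fin n} (hx : σ x ≠ x) (h : σ' x = σ x) {y : Fin n} (hy : σ.SameCycle x y) :
    σ' y = σ y := by
  obtain ⟨k, -, hk⟩ := hy.exists_pow_eq'
  have key : ∀ k : ℕ, σ ((σ ^ k) x) ≠ (σ ^ k) x ∧ σ' ((σ ^ k) x) = σ ((σ ^ k) x) := by
    intro k
    induction k with
    | zero => exact ⟨hx, h⟩
    | succ k ih =>
      obtain ⟨h1, h2⟩ := ih
      rw [pow_succ', Equiv.Perm.mul_apply]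
      have h3 : σ (σ ((σ ^ k) x)) ≠ σ ((σ ^ k) x) := fun e => h1 (σ.injective e)
      refine ⟨h3, ?_⟩
      have h4 : σ' (σ ((σ ^ k) x)) ≠ σ ((σ ^ k) x) := by
        intro e
        rw [← h2] at e
        have := σ'.injective e
        exact h1 (h2 ▸ this)
      rcases hC _ h4 with h5 | h5
      · exact h5
      · exact absurd h5.1 h3
  rw [← hk]
  exact (key k).2

theorem no_bad {n : ℕ} (hn : 2 ≤ n) {ρ σ σ' : Equiv.Perm (Fin n)}
    (hρ : ∀ i : Fin n, (ρ i).val = if i.val + 1 < n then i.val + 1 else 0)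
    (hC : CondC n ρ σ σ') (hσ1 : ∀ z : Fin n, z.val = 0 → σ z ≠ z) :
    ∀ (m : ℕ) (i : Fin n), i.val + m = n → σ i = i → σ' i = ρ i → False := by
  intro m
  induction m with
  | zero => intro i hi; have := i.isLt; omega
  | succ m ih =>
    intro i hi h1 h2
    have hne : ρ i ≠ i := by
      intro e
      have := hρ i
      rw [e] at this
      split_ifs at this <;> omega
    have hj : σ' (ρ i) ≠ ρ i := by
      intro e
      rw [← h2] at e
      exact hne (h2 ▸ σ'.injective e)
    have hfix : σ (ρ i) = ρ i ∧ σ' (ρ i) = ρ (ρ i) := by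
      rcases hC _ hj with h5 | h5
      · exfalso
        have h6 : σ (ρ i) ≠ ρ i := h5 ▸ hj
        have h7 : σ.SameCycle (ρ i) (σ⁻¹ (ρ i)) := ⟨-1, by simp⟩
        have h8 := prop_orbit hC h6 h5 h7
        have h10 : σ (σ⁻¹ (ρ i)) = ρ i := by simp
        have h9 : σ⁻¹ (ρ i) = i := σ'.injective ((h8.trans h10).trans h2.symm)
        rw [h9, h1] at h10
        exact hne h10.symm
      · exact h5
    have hv := hρ i
    split_ifs at hv with hlt
    · exact ih (ρ i) (by omega) hfix.1 hfix.2
    · exact hσ1 _ hv hfix.1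

/-- `σ'` is obtained from `σ` by deleting whole nontrivial cycles: (a) `σ' b = b` or `σ' b = σ b` for all `b`; (b) on each σ-orbit of a non-fixed point, `σ'` agrees with `σ` or fixes every element; (c) if `σ' ≠ σ`, some nontrivial σ-orbit is fixed pointwise by `σ'`. -/
theorem cycle_deletion (n : ℕ) (hn : 2 ≤ n) (ρ σ σ' : Equiv.Perm (Fin n))
    (hρ : ∀ i : Fin n, (ρ i).val = if i.val + 1 < n then i.val + 1 else 0)
    (hC : CondC n ρ σ σ')
    (hσ1 : σ ⟨0, by omega⟩ ≠ ⟨0, by omega⟩) :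
    (∀ b : Fin n, σ' b = b ∨ σ' b = σ b) ∧
      (∀ a : Fin n, σ a ≠ a →
        ((∀ b : Fin n, (∃ k : ℕ, (σ ^ k) a = b) → σ' b = σ b) ∨
         (∀ b : Fin n, (∃ k : ℕ, (σ ^ k) a = b) → σ' b = b))) ∧
      (σ' ≠ σ → ∃ a : Fin n, σ a ≠ a ∧
        ∀ b : Fin n, (∃ k : ℕ, (σ ^ k) a = b) → σ' b = b) := by
  have hz : ∀ z : Fin n, z.val = 0 → σ z ≠ z := by
    intro z h e
    apply hσ1
    convert e <;> exact h.symm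
  have ha : ∀ b : Fin n, σ' b = b ∨ σ' b = σ b := by
    intro b
    by_cases hb : σ' b = b
    · exact Or.inl hb
    · rcases hC b hb with h | h
      · exact Or.inr h
      · exact (no_bad hn hρ hC hz (n - b.val) b (by have := b.isLt; omega) h.1 h.2).elim
  have hb : ∀ a : Fin n, σ a ≠ a →
        ((∀ b : Fin n, (∃ k : ℕ, (σ ^ k) a = b) → σ' b = σ b) ∨
         (∀ b : Fin n, (∃ k : ℕ, (σ ^ k) a = b) → σ' b = b)) := by
    intro a h
    have sc : ∀ b : Fin n, (∃ k : ℕ, (σ ^ k) a = b) → σ.SameCycle a b := by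
      rintro b ⟨k, hk⟩
      exact ⟨k, by simpa using hk⟩
    rcases ha a with h1 | h1
    · right
      intro b hb
      rcases ha b with h2 | h2
      · exact h2
      · exfalso
        have hs := sc b hb
        have h3 : σ b ≠ b := fun e => h (hs.apply_eq_self_iff.2 e)
        exact h ((prop_orbit hC h3 h2 hs.symm).symm.trans h1)
    · left
      intro b hb
      exact prop_orbit hC h h1 (sc b hb)
  refine ⟨ha, hb, ?_⟩
  intro hne
  obtain ⟨a, h⟩ : ∃ a, σ' a ≠ σ a := by
    by_contra hcon
    push Not at hcon
    exact hne (Equiv.ext hcon)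
  have h1 : σ' a = a := (ha a).resolve_right h
  have h2 : σ a ≠ a := fun e => h (h1.trans e.symm)
  exact ⟨a, h2, (hb a h2).resolve_left fun hh => h (hh a ⟨0, rfl⟩)⟩
end
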